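/- arXiv:2210.02066 — 4 statements merged into one kernel-verified Lean document; each statement's English description precedes it below -/
import Mathlib

section
/- For every k ∈ ℕ there exists a constant C_k > 0 such that |d^k/dr^k h_t(r)| ≤ C_k · Ψ_k(r,t) · h_t(r) for all t > 0 and all r > 0. -/
/-!
Everything is read in the variable `x = cosh r`, where `D1 = -d/dx`, or in `y = cosh (r/2)`, where
`D2 = -(1/2) d/dy` and `D1 = (1/(4y)) (-d/dy)`.

The basic fact is that `(r/2) / sinh (r/2)`, a multiple of the derivative of `r²` in `y`, equals
`∫₀¹ dv / (1 + 2 (y - 1) v (1 - v))`. Hence it is completely monotone in `y`, and its successive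
derivatives satisfy `Pᵢ₊₁ ≤ ((i + 1) / y) Pᵢ`. The class `CM` of functions with alternating
derivatives and `Pᵢ₊₁ ≤ ((c + i) / y) Pᵢ` is stable under sums, products, multiplication by
nonnegative constants and `-d/dy`, with values of `c` that do not see the multiplicative constants.
Since `-d/dy` of `P e^{-r²/(4t)}` is `(P' + P · t⁻¹ · const · (r/2) / sinh (r/2)) e^{-r²/(4t)}`, all
functions `D1^j D2^m e^{-r²/(4t)}` are of the form `P e^{-r²/(4t)}`, with `P` in a class `CM` that
does not depend on `t`. This gives, with `A_j` independent of `t`, the one-step bound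
  `cosh r · D1^(j+1) D2^m e^{-r²/(4t)} ≤ A_j (1 + (1 + r)/t) D1^j D2^m e^{-r²/(4t)}`.

For `ν` odd, the substitution `v = cosh s - cosh r` turns the integral into the Abel transform
`∫₀^∞ v^{-1/2} g (x + v) dv`, which commutes with `d/dx`. As `(1 + s) / cosh s` is nonincreasing up
to a factor `2` and only `s ≥ r` occurs, the one-step bound passes under the integral.

Finally `d^k/dr^k` is a combination of terms `sinhᵃ r coshᵇ r D1^(a+b)` with `a + 2b ≤ k` and
`a ≡ k mod 2`. The one-step bounds control such a term by `tanhᵃ r (1 + (1 + r)/t)^(a+b)`, which is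
at most a multiple of `Ψ_k`; for `k` odd and `r ≤ 1`, the factor `r` of `Ψ_k` comes from `a ≥ 1`.
-/

open Real MeasureTheory Filter Topology

noncomputable section

namespace DR

/-- The operator `𝓡 g (r) = (1 / sinh r) g'(r)`. -/
def Rop (g : ℝ → ℝ) : ℝ → ℝ := fun r => (1 / Real.sinh r) * deriv g r

/-- The operator `-(1 / sinh r) d/dr`. -/
def D1 (g : ℝ → ℝ) : ℝ → ℝ := fun r => -(1 / Real.sinh r) * deriv g r

/-- The operator `-(1 / sinh (r/2)) d/dr`. -/
def D2 (g : ℝ → ℝ) : ℝ → ℝ := fun r => -(1 / Real.sinh (r / 2)) * deriv g r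

/-- The Gaussian `e^{-r²/(4t)}`. -/
def gauss (t : ℝ) : ℝ → ℝ := fun r => Real.exp (-r ^ 2 / (4 * t))

/-- `Q = (μ + 2ν)/2`. -/
def Qc (μ ν : ℕ) : ℝ := ((μ : ℝ) + 2 * ν) / 2

/-- `c_k = 2^{-μ-ν/2-1-k} π^{-n/2}` with `n = μ+ν+1`. -/
def cc (μ ν k : ℕ) : ℝ :=
  (2 : ℝ) ^ (-(μ : ℝ) - (ν : ℝ) / 2 - 1 - (k : ℝ)) *
    Real.pi ^ (-(((μ : ℝ) + ν + 1)) / 2)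

/-- The Damek–Ricci heat kernel `h_t`. -/
def heat (μ ν : ℕ) (t : ℝ) : ℝ → ℝ := fun r =>
  if Even ν then
    cc μ ν 0 * t ^ (-(1 : ℝ) / 2) * Real.exp (-(Qc μ ν) ^ 2 * t / 4) *
      (D1^[ν / 2] (D2^[μ / 2] (gauss t))) r
  else
    cc μ ν 0 * Real.pi ^ (-(1 : ℝ) / 2) * t ^ (-(1 : ℝ) / 2) *
      Real.exp (-(Qc μ ν) ^ 2 * t / 4) *
      ∫ s in Set.Ioi r, (Real.sinh s / Real.sqrt (Real.cosh s - Real.cosh r)) *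
        (D1^[(ν + 1) / 2] (D2^[μ / 2] (gauss t))) s

/-- `Ψ_k(r,t)`. -/
def Psi (k : ℕ) (r t : ℝ) : ℝ :=
  if 1 < r ∨ Even k then (1 + 1 / Real.sqrt t + r / t) ^ k
  else r * (1 + 1 / Real.sqrt t + r / t) ^ (k - 1) * (1 + 1 / t)

/-- `Ψ̃_k(r,t)`. -/
def PsiT (k : ℕ) (r t : ℝ) : ℝ :=
  if 1 < r ∨ Even k then (1 + 1 / Real.sqrt t + r / t) ^ k
  else (1 + 1 / Real.sqrt t + r / t) ^ (k - 1) * (1 + r / t)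

/-- `p_{a,b}(r) = sinh^a r cosh^b r`. -/
def pab (a b : ℕ) (r : ℝ) : ℝ := Real.sinh r ^ a * Real.cosh r ^ b

/-- `Θ_{p,q}(r)` (with real exponents, via `rpow`). -/
def Theta (p q : ℝ) (r : ℝ) : ℝ :=
  ((r / (1 + r)) * (Real.exp (r / 2) / (2 * Real.sinh (r / 2)))) ^ p *
    ((r / (1 + 2 * r)) * (Real.exp r / Real.sinh r)) ^ q

/-- Points of `S = ℝ^μ × ℝ^ν × (0,∞)` (the last coordinate ranges over `ℝ`;
statements are always restricted to `0 < a`). -/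
abbrev Pt (μ ν : ℕ) := (Fin μ → ℝ) × (Fin ν → ℝ) × ℝ

/-- The quantity `((√a + 1/√a)/2 + |x|²/(8√a))² + |z|²/(4a)`, equal to `cosh²(r/2)`. -/
def coshExpr (μ ν : ℕ) (p : Pt μ ν) : ℝ :=
  ((Real.sqrt p.2.2 + (Real.sqrt p.2.2)⁻¹) / 2 +
      (Real.sqrt p.2.2)⁻¹ * (∑ i, p.1 i ^ 2) / 8) ^ 2 +
    (p.2.2)⁻¹ * (∑ i, p.2.1 i ^ 2) / 4

/-- The vector field `X_0 = a ∂_a`. -/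
def X0op (μ ν : ℕ) (f : Pt μ ν → ℝ) : Pt μ ν → ℝ :=
  fun p => p.2.2 * deriv (fun s => f (p.1, p.2.1, s)) p.2.2

/-- The vector fields `X_j`, `j ∈ {0, …, n-1}`, `n = μ+ν+1`:
`X_0 = a ∂_a`, `X_ℓ = √a (∂_{x_ℓ} + (1/2) Σ_k (J_k x, e_ℓ) ∂_{z_k})` for `ℓ = 1,…,μ`,
and `X_{μ+k} = a ∂_{z_k}` for `k = 1,…,ν`. -/
def Xf (μ ν : ℕ) (Jm : Fin ν → Matrix (Fin μ) (Fin μ) ℝ) (j : Fin (μ + ν + 1))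
    (f : Pt μ ν → ℝ) : Pt μ ν → ℝ := fun p =>
  if h0 : (j : ℕ) = 0 then p.2.2 * deriv (fun s => f (p.1, p.2.1, s)) p.2.2
  else if hm : (j : ℕ) ≤ μ then
    Real.sqrt p.2.2 *
      (deriv (fun s => f (Function.update p.1 ⟨(j : ℕ) - 1, by omega⟩ s, p.2.1, p.2.2))
          (p.1 ⟨(j : ℕ) - 1, by omega⟩) +
        (1 / 2) * ∑ k : Fin ν, (Jm k).mulVec p.1 ⟨(j : ℕ) - 1, by omega⟩ *
          deriv (fun s => f (p.1, Function.update p.2.1 k s, p.2.2)) (p.2.1 k))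
  else
    p.2.2 *
      deriv (fun s =>
          f (p.1, Function.update p.2.1 ⟨(j : ℕ) - μ - 1, by have := j.isLt; omega⟩ s, p.2.2))
        (p.2.1 ⟨(j : ℕ) - μ - 1, by have := j.isLt; omega⟩)

/-- `X_J = X_{J_1} X_{J_2} ⋯ X_{J_k}` for a multi-index `J`. -/
def XL (μ ν : ℕ) (Jm : Fin ν → Matrix (Fin μ) (Fin μ) ℝ) :
    List (Fin (μ + ν + 1)) → (Pt μ ν → ℝ) → Pt μ ν → ℝ
  | [], f => f
  | j :: L, f => Xf μ ν Jm j (XL μ ν Jm L f)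


/-! ### Completely monotone functions of `cosh (r/2)` -/

/-- Complete monotonicity of `P` up to order `n`, with respect to the variable `y = cosh (r/2)` on
`(1, ∞)`, together with logarithmic derivative bounds: the derivatives `Pᵢ = (-(1/2) d/dy)ⁱ P`
satisfy `0 ≤ Pᵢ` for `i ≤ n` and `y Pᵢ₊₁ ≤ (c + i) Pᵢ` for `i < n`. Functions are kept as functions
of `r > 0`, so that `P' = -(1/2) dP/dy` is determined by `dP/dr = -sinh (r/2) P'`. -/
def CM : ℕ → ℝ → (ℝ → ℝ) → Prop
  | 0, _, P => ∀ r, 0 < r → 0 ≤ P r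
  | n + 1, c, P => (∀ r, 0 < r → 0 ≤ P r) ∧ ∃ P' : ℝ → ℝ,
      (∀ r, 0 < r → HasDerivAt P (-Real.sinh (r / 2) * P' r) r ∧
        Real.cosh (r / 2) * P' r ≤ c * P r) ∧ CM n (c + 1) P'

lemma CM.nonneg {n : ℕ} {c : ℝ} {P : ℝ → ℝ} (h : CM n c P) : ∀ r, 0 < r → 0 ≤ P r := by
  cases n with
  | zero => exact h
  | succ n => exact h.1

lemma CM.pred {n : ℕ} : ∀ {c : ℝ} {P : ℝ → ℝ}, CM (n + 1) c P → CM n c P := by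
  induction n with
  | zero => intro c P h; exact h.1
  | succ n ih =>
    rintro c P ⟨h0, P', h1, h2⟩
    exact ⟨h0, P', h1, ih h2⟩

lemma CM.add {n : ℕ} : ∀ {c : ℝ} {P R : ℝ → ℝ}, CM n c P → CM n c R →
    CM n c (fun r => P r + R r) := by
  induction n with
  | zero => intro c P R hP hR r hr; exact add_nonneg (hP r hr) (hR r hr)
  | succ n ih =>
    rintro c P R ⟨hP0, P', hP1, hP2⟩ ⟨hR0, R', hR1, hR2⟩
    refine ⟨fun r hr => add_nonneg (hP0 r hr) (hR0 r hr), fun r => P' r + R' r, ?_, ih hP2 hR2⟩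
    intro r hr
    refine ⟨((hP1 r hr).1.add (hR1 r hr).1).congr_deriv (by ring), ?_⟩
    have h1 := (hP1 r hr).2
    have h2 := (hR1 r hr).2
    linarith

lemma CM.smul {n : ℕ} {b : ℝ} (hb : 0 ≤ b) : ∀ {c : ℝ} {P : ℝ → ℝ}, CM n c P →
    CM n c (fun r => b * P r) := by
  induction n with
  | zero => intro c P hP r hr; exact mul_nonneg hb (hP r hr)
  | succ n ih =>
    rintro c P ⟨hP0, P', hP1, hP2⟩
    refine ⟨fun r hr => mul_nonneg hb (hP0 r hr), fun r => b * P' r, ?_, ih hP2⟩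
    intro r hr
    refine ⟨((hP1 r hr).1.const_mul b).congr_deriv (by ring), ?_⟩
    have h1 := mul_le_mul_of_nonneg_left (hP1 r hr).2 hb
    linarith

/-- By the Leibniz rule the constants of the logarithmic derivative bounds add up in products. -/
lemma CM.mul {n : ℕ} : ∀ {c d : ℝ} {P R : ℝ → ℝ}, CM n c P → CM n d R →
    CM n (c + d) (fun r => P r * R r) := by
  induction n with
  | zero => intro c d P R hP hR r hr; exact mul_nonneg (hP r hr) (hR r hr)
  | succ n ih =>
    intro c d P R hP hR
    have hPp := hP.pred
    have hRp := hR.pred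
    obtain ⟨hP0, P', hP1, hP2⟩ := hP
    obtain ⟨hR0, R', hR1, hR2⟩ := hR
    refine ⟨fun r hr => mul_nonneg (hP0 r hr) (hR0 r hr),
      fun r => P' r * R r + P r * R' r, ?_, ?_⟩
    · intro r hr
      refine ⟨((hP1 r hr).1.mul (hR1 r hr).1).congr_deriv (by ring), ?_⟩
      have h1 := mul_le_mul_of_nonneg_right (hP1 r hr).2 (hR0 r hr)
      have h2 := mul_le_mul_of_nonneg_right (hR1 r hr).2 (hP0 r hr)
      linarith
    · have a := ih hP2 hRp
      have b := ih hPp hR2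
      rw [show c + 1 + d = c + d + 1 by ring] at a
      rw [show c + (d + 1) = c + d + 1 by ring] at b
      exact a.add b

lemma CM_inv_cosh_pow (n p : ℕ) : CM n p (fun r => (Real.cosh (r / 2) ^ p)⁻¹) := by
  induction n generalizing p with
  | zero => intro r _; positivity
  | succ n ih =>
    refine ⟨fun r _ => by positivity, fun r => (p / 2 : ℝ) * (Real.cosh (r / 2) ^ (p + 1))⁻¹, ?_, ?_⟩
    · intro r hr
      have hc : 0 < Real.cosh (r / 2) := Real.cosh_pos _
      constructor
      · have hcosh : HasDerivAt (fun r => Real.cosh (r / 2)) (Real.sinh (r / 2) * (1 / 2)) r :=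
          ((hasDerivAt_id' r).div_const 2).cosh
        have h := (hcosh.fun_pow p).fun_inv (pow_ne_zero _ hc.ne')
        refine h.congr_deriv ?_
        cases p with
        | zero => simp
        | succ p =>
          simp only [Nat.add_sub_cancel]
          field_simp
          ring
      · have : Real.cosh (r / 2) * ((p / 2 : ℝ) * (Real.cosh (r / 2) ^ (p + 1))⁻¹)
            = (p / 2 : ℝ) * (Real.cosh (r / 2) ^ p)⁻¹ := by
          field_simp
          ring
        rw [this]
        gcongr
        have : (0 : ℝ) ≤ p := p.cast_nonneg
        linarith
    · have := (ih (p + 1)).smul (b := (p / 2 : ℝ)) (by positivity)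
      push_cast at this
      exact this

/-! ### The function `(r/2) / sinh (r/2)` -/

/-- The denominators in the integral representation of `(r/2) / sinh (r/2)`. -/
def den (y v : ℝ) : ℝ := 1 + (y - 1) * (2 * v * (1 - v))

lemma den_ge_one {y v : ℝ} (hy : 1 ≤ y) (h0 : 0 ≤ v) (h1 : v ≤ 1) : 1 ≤ den y v := by
  have : 0 ≤ (y - 1) * (2 * v * (1 - v)) := by
    have : 0 ≤ 1 - v := by linarith
    have : 0 ≤ y - 1 := by linarith
    positivity
  unfold den; linarith

/-- Up to sign and factorials, the `i`-th derivative in `y` of `∫₀¹ dv / (1 + 2 (y - 1) v (1 - v))`,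
evaluated at `y = cosh (r/2)`. -/
def J (i : ℕ) (r : ℝ) : ℝ :=
  ∫ v in (0 : ℝ)..1, (2 * v * (1 - v)) ^ i / den (Real.cosh (r / 2)) v ^ (i + 1)

lemma J_cont (i : ℕ) {y : ℝ} (hy : 1 ≤ y) :
    ContinuousOn (fun v => (2 * v * (1 - v)) ^ i / den y v ^ (i + 1)) (Set.uIcc (0 : ℝ) 1) := by
  rw [Set.uIcc_of_le zero_le_one]
  refine ContinuousOn.div (by fun_prop) (by unfold den; fun_prop) ?_
  intro v hv
  have := den_ge_one hy hv.1 hv.2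
  positivity

lemma J_nonneg (i : ℕ) (r : ℝ) : 0 ≤ J i r := by
  refine intervalIntegral.integral_nonneg zero_le_one fun v hv => ?_
  have := den_ge_one (Real.one_le_cosh (r / 2)) hv.1 hv.2
  have : 0 ≤ 1 - v := by linarith [hv.2]
  have := hv.1
  positivity

lemma J_succ_le (i : ℕ) (r : ℝ) : Real.cosh (r / 2) * J (i + 1) r ≤ J i r := by
  have hy := Real.one_le_cosh (r / 2)
  unfold J
  rw [← intervalIntegral.integral_const_mul]
  refine intervalIntegral.integral_mono_on zero_le_one ?_ ?_ ?_
  · exact ((J_cont (i + 1) hy).intervalIntegrable).const_mul _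
  · exact (J_cont i hy).intervalIntegrable
  · intro v hv
    have h1 := den_ge_one hy hv.1 hv.2
    have hd : 0 < den (Real.cosh (r / 2)) v := by linarith
    have h0 : 0 ≤ 1 - v := by linarith [hv.2]
    have hw : 0 ≤ 2 * v * (1 - v) := by have := hv.1; positivity
    have hw1 : 2 * v * (1 - v) ≤ 1 := by nlinarith [sq_nonneg (2 * v - 1)]
    have key : Real.cosh (r / 2) * (2 * v * (1 - v)) ≤ den (Real.cosh (r / 2)) v := by
      unfold den; nlinarith
    calc _ = (Real.cosh (r / 2) * (2 * v * (1 - v))) *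
          ((2 * v * (1 - v)) ^ i / den (Real.cosh (r / 2)) v ^ (i + 1 + 1)) := by ring
      _ ≤ den (Real.cosh (r / 2)) v *
          ((2 * v * (1 - v)) ^ i / den (Real.cosh (r / 2)) v ^ (i + 1 + 1)) := by
        gcongr
      _ = _ := by field_simp; ring

lemma J_hasDerivAt (i : ℕ) {r : ℝ} (hr : 0 < r) :
    HasDerivAt (J i) (-Real.sinh (r / 2) * ((i + 1 : ℝ) / 2 * J (i + 1) r)) r := by
  have hmeas : ∀ (j : ℕ) (x : ℝ), AEStronglyMeasurable
      (fun v => (2 * v * (1 - v)) ^ j / den (Real.cosh (x / 2)) v ^ (j + 1))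
      (volume.restrict (Set.uIoc (0 : ℝ) 1)) := fun j x =>
    (intervalIntegrable_iff.1
      (J_cont j (Real.one_le_cosh (x / 2))).intervalIntegrable).aestronglyMeasurable
  have key := intervalIntegral.hasDerivAt_integral_of_dominated_loc_of_deriv_le
    (μ := volume) (a := 0) (b := 1) (x₀ := r) (s := Set.Ioo 0 (r + 1))
    (F := fun x v => (2 * v * (1 - v)) ^ i / den (Real.cosh (x / 2)) v ^ (i + 1))
    (F' := fun x v => (-Real.sinh (x / 2) * ((i + 1 : ℝ) / 2)) *
      ((2 * v * (1 - v)) ^ (i + 1) / den (Real.cosh (x / 2)) v ^ (i + 1 + 1)))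
    (bound := fun _ => Real.sinh ((r + 1) / 2) * ((i + 1 : ℝ) / 2))
    (Ioo_mem_nhds hr (by linarith))
    (Filter.Eventually.of_forall fun x => hmeas i x)
    (J_cont i (Real.one_le_cosh _)).intervalIntegrable
    ((hmeas (i + 1) r).const_mul _) ?_ intervalIntegrable_const ?_
  · refine key.2.congr_deriv ?_
    rw [intervalIntegral.integral_const_mul]
    unfold J; ring
  · refine Filter.Eventually.of_forall fun v hv x hx => ?_
    rw [Set.uIoc_of_le zero_le_one] at hv
    have h1 := den_ge_one (Real.one_le_cosh (x / 2)) hv.1.le hv.2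
    have h0 : 0 ≤ 1 - v := by linarith [hv.2]
    have hw : 0 ≤ 2 * v * (1 - v) := by have := hv.1; positivity
    have hw1 : 2 * v * (1 - v) ≤ 1 := by nlinarith [sq_nonneg (2 * v - 1)]
    have hs : 0 ≤ Real.sinh (x / 2) := Real.sinh_nonneg_iff.2 (by linarith [hx.1])
    have hs2 : Real.sinh (x / 2) ≤ Real.sinh ((r + 1) / 2) :=
      Real.sinh_le_sinh.2 (by linarith [hx.2])
    have hq0 : 0 ≤ (2 * v * (1 - v)) ^ (i + 1) / den (Real.cosh (x / 2)) v ^ (i + 1 + 1) := by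
      positivity
    have hq : (2 * v * (1 - v)) ^ (i + 1) / den (Real.cosh (x / 2)) v ^ (i + 1 + 1) ≤ 1 := by
      rw [div_le_one (by positivity)]
      exact (pow_le_one₀ hw hw1).trans (one_le_pow₀ h1)
    rw [Real.norm_eq_abs, abs_mul, abs_mul, abs_neg, abs_of_nonneg hs, abs_of_nonneg hq0,
      abs_of_nonneg (by positivity : (0 : ℝ) ≤ (i + 1 : ℝ) / 2)]
    calc _ ≤ Real.sinh (x / 2) * ((i + 1 : ℝ) / 2) * 1 := by gcongr
      _ ≤ _ := by rw [mul_one]; gcongr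
  · refine Filter.Eventually.of_forall fun v hv x hx => ?_
    rw [Set.uIoc_of_le zero_le_one] at hv
    have h1 := den_ge_one (Real.one_le_cosh (x / 2)) hv.1.le hv.2
    have hd : den (Real.cosh (x / 2)) v ≠ 0 := by linarith
    have hden : HasDerivAt (fun x => den (Real.cosh (x / 2)) v)
        (Real.sinh (x / 2) * (1 / 2) * (2 * v * (1 - v))) x := by
      unfold den
      exact ((((Real.hasDerivAt_cosh (x / 2)).comp x
          ((hasDerivAt_id x).div_const 2)).sub_const 1).mul_const _).const_add 1
    have h := (hasDerivAt_const x ((2 * v * (1 - v)) ^ i)).fun_div (hden.fun_pow (i + 1))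
      (pow_ne_zero _ hd)
    refine h.congr_deriv ?_
    simp only [Nat.add_sub_cancel]
    push_cast
    field_simp
    ring

lemma CM_J (n i : ℕ) : CM n (i + 1) (J i) := by
  induction n generalizing i with
  | zero => intro r _; exact J_nonneg i r
  | succ n ih =>
    refine ⟨fun r _ => J_nonneg i r, fun r => (i + 1 : ℝ) / 2 * J (i + 1) r, ?_, ?_⟩
    · intro r hr
      refine ⟨J_hasDerivAt i hr, ?_⟩
      have h := J_succ_le i r
      have h0 := J_nonneg i r
      have hi : (0 : ℝ) ≤ i := i.cast_nonneg
      calc _ = (i + 1 : ℝ) / 2 * (Real.cosh (r / 2) * J (i + 1) r) := by ring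
        _ ≤ (i + 1 : ℝ) / 2 * J i r := by gcongr
        _ ≤ _ := by gcongr; linarith
    · have := (ih (i + 1)).smul (b := (i + 1 : ℝ) / 2) (by positivity)
      push_cast at this
      exact this

/-- The function `r² / 2` has derivative proportional to `(r/2) / sinh (r/2)` with respect to
`cosh (r/2)`; this quotient is an integral of resolvents, hence completely monotone. -/
lemma J_zero {r : ℝ} (hr : 0 < r) : J 0 r = (r / 2) / Real.sinh (r / 2) := by
  set θ := r / 2 with hθ
  have hθ0 : 0 < θ := by positivity
  have hs : 0 < Real.sinh θ := Real.sinh_pos_iff.2 hθ0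
  have hA : ∀ v ∈ Set.uIcc (0 : ℝ) 1, ∀ z, 0 < v + (1 - v) * Real.exp z := by
    intro v hv z
    rw [Set.uIcc_of_le zero_le_one] at hv
    have he := Real.exp_pos z
    rcases eq_or_lt_of_le hv.1 with h | h
    · rw [← h]; simpa using he
    · have : 0 ≤ (1 - v) * Real.exp z := mul_nonneg (by linarith [hv.2]) he.le
      linarith
  have hd : ∀ v ∈ Set.uIcc (0 : ℝ) 1, ∀ z,
      HasDerivAt (fun v => Real.log (v + (1 - v) * Real.exp z))
        ((1 - Real.exp z) / (v + (1 - v) * Real.exp z)) v := by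
    intro v hv z
    have h : HasDerivAt (fun v => v + (1 - v) * Real.exp z) (1 - Real.exp z) v :=
      ((hasDerivAt_id v).add (((hasDerivAt_id v).const_sub 1).mul_const _)).congr_deriv (by ring)
    exact h.log (hA v hv z).ne'
  have hF : ∀ v ∈ Set.uIcc (0 : ℝ) 1, HasDerivAt
      (fun v => (Real.log (v + (1 - v) * Real.exp (-θ)) - Real.log (v + (1 - v) * Real.exp θ)) /
        (2 * Real.sinh θ))
      ((2 * v * (1 - v)) ^ 0 / den (Real.cosh θ) v ^ (0 + 1)) v := by
    intro v hv
    refine (((hd v hv (-θ)).sub (hd v hv θ)).div_const _).congr_deriv ?_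
    have h1 := (hA v hv (-θ)).ne'
    have h2 := (hA v hv θ).ne'
    have hp : Real.exp (-θ) * Real.exp θ = 1 := by rw [← Real.exp_add]; simp
    have hden : den (Real.cosh θ) v =
        (v + (1 - v) * Real.exp (-θ)) * (v + (1 - v) * Real.exp θ) := by
      unfold den
      rw [Real.cosh_eq]
      linear_combination (-(1 - v) ^ 2) * hp
    have hnum : (1 - Real.exp (-θ)) * (v + (1 - v) * Real.exp θ) -
        (v + (1 - v) * Real.exp (-θ)) * (1 - Real.exp θ) = 2 * Real.sinh θ := by
      rw [Real.sinh_eq]; ring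
    rw [div_sub_div _ _ h1 h2, hnum, hden]
    field_simp
    ring
  unfold J
  rw [intervalIntegral.integral_eq_sub_of_hasDerivAt hF
    (J_cont 0 (Real.one_le_cosh _)).intervalIntegrable]
  simp only [sub_self, zero_mul, add_zero, Real.log_one, sub_zero, one_mul, zero_add, Real.log_exp,
    zero_div, zero_sub]
  field_simp
  ring

/-! ### Completely monotone multiples of the Gaussian -/

/-- `g = P · gauss t` on `(0, ∞)`, with a completely monotone factor `P`. The constant `c` of the
class is independent of `t`. -/
def GaussMul (n : ℕ) (c t : ℝ) (g : ℝ → ℝ) : Prop :=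
  ∃ P : ℝ → ℝ, CM n c P ∧ ∀ r, 0 < r → g r = P r * gauss t r

lemma gauss_hasDerivAt {t r : ℝ} (ht : 0 < t) (hr : 0 < r) :
    HasDerivAt (gauss t) (-Real.sinh (r / 2) * (1 / t * J 0 r * gauss t r)) r := by
  have hs : 0 < Real.sinh (r / 2) := Real.sinh_pos_iff.2 (by positivity)
  have h : HasDerivAt (fun r : ℝ => -r ^ 2 / (4 * t)) (-(2 * r) / (4 * t)) r := by
    have := ((hasDerivAt_pow 2 r).fun_neg).div_const (4 * t)
    simpa using this
  refine h.exp.congr_deriv ?_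
  rw [J_zero hr]
  unfold gauss
  field_simp
  ring

/-- The derivative `-(1/2) d/d(cosh (r/2))` of `P e^{-r²/(4t)}`: the Gaussian contributes the completely monotone factor
`J 0 / t`. -/
lemma GaussMul.deriv {n : ℕ} {c t : ℝ} (ht : 0 < t) {g : ℝ → ℝ} (h : GaussMul (n + 1) c t g) :
    ∃ P' : ℝ → ℝ, CM n (c + 1) P' ∧ ∀ r, 0 < r →
      HasDerivAt g (-Real.sinh (r / 2) * (P' r * gauss t r)) r ∧
      Real.cosh (r / 2) * (P' r * gauss t r) ≤ (c + (1 + r) / t) * g r := by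
  obtain ⟨P, hP, hg⟩ := h
  have hPp := hP.pred
  obtain ⟨hP0, P', hP1, hP2⟩ := hP
  refine ⟨fun r => P' r + 1 / t * (P r * J 0 r), ?_, ?_⟩
  · have h1 := (hPp.mul (CM_J n 0)).smul (b := 1 / t) (by positivity)
    simp only [Nat.cast_zero, zero_add] at h1
    exact hP2.add h1
  · intro r hr
    have hG : 0 < gauss t r := Real.exp_pos _
    constructor
    · have h1 : HasDerivAt (fun r => P r * gauss t r) _ r :=
        (hP1 r hr).1.mul (gauss_hasDerivAt ht hr)
      refine (h1.congr_of_eventuallyEq ?_).congr_deriv (by ring)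
      filter_upwards [lt_mem_nhds hr] with s hs using hg s hs
    · have hs : 0 < Real.sinh (r / 2) := Real.sinh_pos_iff.2 (by positivity)
      -- `θ coth θ ≤ 1 + θ`, in the form `θ e^{-θ} ≤ sinh θ`
      have hJ : Real.cosh (r / 2) * J 0 r ≤ 1 + r := by
        rw [J_zero hr, ← mul_div_assoc, div_le_iff₀ hs]
        have h1 := Real.self_le_sinh_iff.2 (by positivity : 0 ≤ r / 2)
        have h2 : Real.cosh (r / 2) - Real.sinh (r / 2) ≤ 1 := by
          rw [Real.cosh_sub_sinh]; exact Real.exp_le_one_iff.2 (by linarith)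
        nlinarith
      have h1 := (hP1 r hr).2
      have h2 : 1 / t * P r * (Real.cosh (r / 2) * J 0 r) ≤ 1 / t * P r * (1 + r) :=
        mul_le_mul_of_nonneg_left hJ (mul_nonneg (by positivity) (hP0 r hr))
      rw [hg r hr]
      calc _ = (Real.cosh (r / 2) * P' r + 1 / t * P r * (Real.cosh (r / 2) * J 0 r)) *
            gauss t r := by ring
        _ ≤ (c * P r + 1 / t * P r * (1 + r)) * gauss t r := by gcongr
        _ = _ := by ring

lemma GaussMul.D2 {n : ℕ} {c t : ℝ} (ht : 0 < t) {g : ℝ → ℝ} (h : GaussMul (n + 1) c t g) :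
    GaussMul n (c + 1) t (D2 g) := by
  obtain ⟨P', hP', h⟩ := h.deriv ht
  refine ⟨P', hP', fun r hr => ?_⟩
  have hs : 0 < Real.sinh (r / 2) := Real.sinh_pos_iff.2 (by positivity)
  rw [DR.D2, (h r hr).1.deriv]
  field_simp

lemma GaussMul.D1 {n : ℕ} {c t : ℝ} (ht : 0 < t) {g : ℝ → ℝ} (h : GaussMul (n + 1) c t g) :
    GaussMul n (c + 2) t (D1 g) := by
  obtain ⟨P', hP', h⟩ := h.deriv ht
  refine ⟨fun r => 1 / 2 * (P' r * (Real.cosh (r / 2) ^ 1)⁻¹), ?_, fun r hr => ?_⟩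
  · have := (hP'.mul (CM_inv_cosh_pow n 1)).smul (b := 1 / 2) (by positivity)
    rw [show c + 1 + ((1 : ℕ) : ℝ) = c + 2 by push_cast; ring] at this
    exact this
  · have hs : 0 < Real.sinh (r / 2) := Real.sinh_pos_iff.2 (by positivity)
    have hc : 0 < Real.cosh (r / 2) := Real.cosh_pos _
    have h2 : Real.sinh r = 2 * Real.sinh (r / 2) * Real.cosh (r / 2) := by
      rw [← Real.sinh_two_mul]; ring_nf
    rw [DR.D1, (h r hr).1.deriv, h2]
    field_simp

/-- The size of `-d/d(cosh r)` on `g`, relative to `g`. -/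
lemma GaussMul.D1_le {n : ℕ} {c t : ℝ} (ht : 0 < t) (hc : 0 ≤ c) {g : ℝ → ℝ}
    (h : GaussMul (n + 1) c t g) {r : ℝ} (hr : 0 < r) :
    HasDerivAt g (-Real.sinh r * DR.D1 g r) r ∧
      Real.cosh r * DR.D1 g r ≤ (c + 1) * (1 + (1 + r) / t) * g r := by
  have hg0 : 0 ≤ g r := by
    obtain ⟨P, hP, hg⟩ := h
    rw [hg r hr]; exact mul_nonneg (hP.nonneg r hr) (Real.exp_pos _).le
  obtain ⟨P', hP', h⟩ := h.deriv ht
  obtain ⟨h1, h2⟩ := h r hr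
  have hs : 0 < Real.sinh (r / 2) := Real.sinh_pos_iff.2 (by positivity)
  have hs' : 0 < Real.sinh r := Real.sinh_pos_iff.2 hr
  have hch : 0 < Real.cosh (r / 2) := Real.cosh_pos _
  have e1 : Real.sinh r = 2 * Real.sinh (r / 2) * Real.cosh (r / 2) := by
    rw [← Real.sinh_two_mul]; ring_nf
  have e2 : Real.cosh r ≤ 2 * Real.cosh (r / 2) ^ 2 := by
    have := Real.cosh_two_mul (r / 2)
    rw [show 2 * (r / 2) = r by ring] at this
    have := Real.cosh_sq (r / 2)
    linarith
  have hP0 : 0 ≤ P' r * gauss t r := mul_nonneg (hP'.nonneg r hr) (Real.exp_pos _).le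
  constructor
  · refine h1.differentiableAt.hasDerivAt.congr_deriv ?_
    unfold DR.D1
    field_simp
  · have e3 : DR.D1 g r = P' r * gauss t r / (2 * Real.cosh (r / 2)) := by
      rw [DR.D1, h1.deriv, e1]
      field_simp
    have hw : 0 ≤ (1 + r) / t := by positivity
    calc Real.cosh r * DR.D1 g r
        ≤ 2 * Real.cosh (r / 2) ^ 2 * (P' r * gauss t r / (2 * Real.cosh (r / 2))) := by
          rw [e3]; gcongr
      _ = Real.cosh (r / 2) * (P' r * gauss t r) := by field_simp
      _ ≤ (c + (1 + r) / t) * g r := h2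
      _ ≤ _ := by gcongr; nlinarith

lemma GaussMul_iterate (m j : ℕ) : ∀ n : ℕ, ∀ t : ℝ, 0 < t →
    GaussMul n (m + 2 * j) t (D1^[j] (D2^[m] (gauss t))) := by
  induction j with
  | zero =>
    induction m with
    | zero =>
      intro n t ht
      refine ⟨fun r => (Real.cosh (r / 2) ^ 0)⁻¹, by simpa using CM_inv_cosh_pow n 0, ?_⟩
      intro r _; simp
    | succ m ih =>
      intro n t ht
      have := (ih (n + 1) t ht).D2 ht
      simp only [Function.iterate_zero, id] at this ⊢
      rw [Function.iterate_succ_apply']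
      convert this using 1
      push_cast; ring
  | succ j ih =>
    intro n t ht
    have := (ih (n + 1) t ht).D1 ht
    rw [Function.iterate_succ_apply']
    convert this using 1
    push_cast; ring

/-! ### Radial derivatives along chains -/

/-- The functions `G i` are the successive derivatives of `G 0` with respect to `-cosh r`, they are
nonnegative, and `G (i + 1) / G i` is controlled by `(1 + (1 + r) / t) / cosh r`. -/
structure Chain (A : ℕ → ℝ) (t : ℝ) (G : ℕ → ℝ → ℝ) : Prop where
  hasDerivAt : ∀ i r, 0 < r → HasDerivAt (G i) (-Real.sinh r * G (i + 1) r) r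
  nonneg : ∀ i r, 0 < r → 0 ≤ G i r
  le : ∀ i r, 0 < r → Real.cosh r * G (i + 1) r ≤ A i * (1 + (1 + r) / t) * G i r

lemma chain_gauss (m q : ℕ) {t : ℝ} (ht : 0 < t) :
    Chain (fun i => (m : ℝ) + 2 * (q + i : ℕ) + 1) t
      (fun i => D1^[q + i] (D2^[m] (gauss t))) where
  hasDerivAt i r hr := by
    have := (GaussMul_iterate m (q + i) 1 t ht).D1_le ht (by positivity) hr
    rw [← add_assoc, Function.iterate_succ_apply']
    exact this.1
  nonneg i r hr := by
    obtain ⟨P, hP, hg⟩ := GaussMul_iterate m (q + i) 1 t ht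
    rw [hg r hr]; exact mul_nonneg (hP.nonneg r hr) (Real.exp_pos _).le
  le i r hr := by
    have := (GaussMul_iterate m (q + i) 1 t ht).D1_le ht (by positivity) hr
    rw [← add_assoc, Function.iterate_succ_apply']
    exact this.2

lemma Chain.const_mul {A : ℕ → ℝ} {t b : ℝ} (hb : 0 ≤ b) {G : ℕ → ℝ → ℝ} (h : Chain A t G) :
    Chain A t (fun i r => b * G i r) where
  hasDerivAt i r hr := ((h.hasDerivAt i r hr).const_mul b).congr_deriv (by ring)
  nonneg i r hr := mul_nonneg hb (h.nonneg i r hr)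
  le i r hr := by
    have := mul_le_mul_of_nonneg_left (h.le i r hr) hb
    linarith

/-- Expressions in a sequence `G` spanned by the terms `sinhᵃ r coshᵇ r G (a + b) r` with
`a + 2 b ≤ k` and `a ≡ k mod 2`. When `G` is a chain, `d^k (G 0) / dr^k` is of this form. -/
inductive Rep (k : ℕ) : ((ℕ → ℝ → ℝ) → ℝ → ℝ) → Prop
  | term (c : ℝ) (a b : ℕ) (h : a + 2 * b ≤ k) (hp : a % 2 = k % 2) :
      Rep k (fun G r => c * (Real.sinh r ^ a * Real.cosh r ^ b * G (a + b) r))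
  | add {Φ Ξ : (ℕ → ℝ → ℝ) → ℝ → ℝ} : Rep k Φ → Rep k Ξ → Rep k (fun G r => Φ G r + Ξ G r)

lemma Rep.deriv {k : ℕ} {Φ : (ℕ → ℝ → ℝ) → ℝ → ℝ} (h : Rep k Φ) :
    ∃ Φ' : (ℕ → ℝ → ℝ) → ℝ → ℝ, Rep (k + 1) Φ' ∧ ∀ A t G, Chain A t G → ∀ r, 0 < r →
      HasDerivAt (Φ G) (Φ' G r) r := by
  induction h with
  | @add Φ Ξ _ _ ih1 ih2 =>
    obtain ⟨Φ', h1, h1'⟩ := ih1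
    obtain ⟨Ξ', h2, h2'⟩ := ih2
    exact ⟨_, h1.add h2, fun A t G hG r hr => (h1' A t G hG r hr).add (h2' A t G hG r hr)⟩
  | term c a b hab hp =>
    have hd : ∀ (A : ℕ → ℝ) (t : ℝ) (G : ℕ → ℝ → ℝ), Chain A t G → ∀ r, 0 < r →
        HasDerivAt (fun r => c * (Real.sinh r ^ a * Real.cosh r ^ b * G (a + b) r))
        (c * ((a * Real.sinh r ^ (a - 1) * Real.cosh r * Real.cosh r ^ b +
          Real.sinh r ^ a * (b * Real.cosh r ^ (b - 1) * Real.sinh r)) * G (a + b) r +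
          Real.sinh r ^ a * Real.cosh r ^ b * (-Real.sinh r * G (a + b + 1) r))) r :=
      fun A t G hG r hr => (((((Real.hasDerivAt_sinh r).fun_pow a).fun_mul
        ((Real.hasDerivAt_cosh r).fun_pow b)).fun_mul (hG.hasDerivAt (a + b) r hr)).const_mul c)
    have h3 : Rep (k + 1) (fun G r => (-c) * (Real.sinh r ^ (a + 1) * Real.cosh r ^ b *
        G (a + 1 + b) r)) := Rep.term (-c) (a + 1) b (by omega) (by omega)
    -- the derivatives of `sinhᵃ` and of `coshᵇ`; both vanish when the exponent is zero
    have h1 : ∃ Φ₁, Rep (k + 1) Φ₁ ∧ ∀ (G : ℕ → ℝ → ℝ) r, Φ₁ G r =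
        c * (a * Real.sinh r ^ (a - 1) * Real.cosh r * Real.cosh r ^ b * G (a + b) r) := by
      cases a with
      | zero => exact ⟨_, Rep.term 0 ((k + 1) % 2) 0 (by omega) (by omega), fun G r => by simp⟩
      | succ a =>
        refine ⟨_, Rep.term (c * (a + 1 : ℕ)) a (b + 1) (by omega) (by omega), fun G r => ?_⟩
        rw [show a + (b + 1) = a + 1 + b by omega, Nat.add_sub_cancel]
        ring
    have h2 : ∃ Φ₂, Rep (k + 1) Φ₂ ∧ ∀ (G : ℕ → ℝ → ℝ) r, Φ₂ G r =
        c * (Real.sinh r ^ a * (b * Real.cosh r ^ (b - 1) * Real.sinh r) * G (a + b) r) := by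
      cases b with
      | zero => exact ⟨_, Rep.term 0 ((k + 1) % 2) 0 (by omega) (by omega), fun G r => by simp⟩
      | succ b =>
        refine ⟨_, Rep.term (c * (b + 1 : ℕ)) (a + 1) b (by omega) (by omega), fun G r => ?_⟩
        rw [show a + 1 + b = a + (b + 1) by omega, Nat.add_sub_cancel]
        ring
    obtain ⟨Φ₁, r1, e1⟩ := h1
    obtain ⟨Φ₂, r2, e2⟩ := h2
    refine ⟨_, (r1.add r2).add h3, fun A t G hG r hr => (hd A t G hG r hr).congr_deriv ?_⟩
    rw [e1, e2, show a + 1 + b = a + b + 1 by omega]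
    ring

/-- The combination can be chosen independently of the chain, in particular of `t`. -/
lemma exists_Rep (k : ℕ) : ∃ Φ, Rep k Φ ∧ ∀ A t G, Chain A t G → ∀ r, 0 < r →
    deriv^[k] (G 0) r = Φ G r := by
  induction k with
  | zero =>
    exact ⟨_, Rep.term 1 0 0 (by omega) rfl, fun A t G _ r _ => by simp⟩
  | succ k ih =>
    obtain ⟨Φ, hΦ, h⟩ := ih
    obtain ⟨Φ', hΦ', h'⟩ := hΦ.deriv
    refine ⟨Φ', hΦ', fun A t G hG r hr => ?_⟩
    rw [Function.iterate_succ_apply', ← (h' A t G hG r hr).deriv]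
    refine Filter.EventuallyEq.deriv_eq ?_
    filter_upwards [lt_mem_nhds hr] with s hs using h A t G hG s hs

lemma sinh_le_mul_cosh {r : ℝ} (hr : 0 ≤ r) : Real.sinh r ≤ r * Real.cosh r := by
  have hd : ∀ x, HasDerivAt (fun x => x * Real.cosh x - Real.sinh x) (x * Real.sinh x) x :=
    fun x => (((hasDerivAt_id' x).fun_mul (Real.hasDerivAt_cosh x)).fun_sub
      (Real.hasDerivAt_sinh x)).congr_deriv (by ring)
  have hm : MonotoneOn (fun x => x * Real.cosh x - Real.sinh x) (Set.Ici 0) := by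
    refine monotoneOn_of_deriv_nonneg (convex_Ici 0)
      (fun x _ => (hd x).continuousAt.continuousWithinAt)
      (fun x _ => (hd x).differentiableAt.differentiableWithinAt) fun x hx => ?_
    rw [interior_Ici] at hx
    rw [(hd x).deriv]
    exact mul_nonneg (le_of_lt hx) (Real.sinh_nonneg_iff.2 (le_of_lt hx))
  have := hm Set.self_mem_Ici hr hr
  simp at this
  linarith

/-- The elementary inequality behind `Ψ_k`: it bounds `tanhᵃ r (1 + (1 + r) / t)^(a + b)`. -/
lemma pow_le_Psi {k a b : ℕ} (hab : a + 2 * b ≤ k) (hp : a % 2 = k % 2) {t r T : ℝ}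
    (ht : 0 < t) (hr : 0 < r) (hT0 : 0 ≤ T) (hT1 : T ≤ 1) (hTr : T ≤ r) :
    T ^ a * (1 + (1 + r) / t) ^ (a + b) ≤ 2 ^ (a + b) * Psi k r t := by
  set M := 1 + 1 / Real.sqrt t + r / t with hM
  set W := 1 + (1 + r) / t with hW
  have hM1 : 1 ≤ M := by
    have : 0 ≤ 1 / Real.sqrt t + r / t := by positivity
    linarith
  have hW0 : 0 ≤ W := by positivity
  have hrt : 0 ≤ r / t := by positivity
  have h1t : 0 ≤ 1 / t := by positivity
  have hst : 0 ≤ 1 / Real.sqrt t := by positivity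
  have hWe : W = 1 + 1 / t + r / t := by rw [hW]; ring
  by_cases h1 : 1 < r
  · have hPsi : Psi k r t = M ^ k := by simp [Psi, h1, hM]
    rw [hPsi]
    have hWM : W ≤ 2 * M := by
      have : 1 / t ≤ r / t := by gcongr
      linarith
    calc T ^ a * W ^ (a + b) ≤ 1 * (2 * M) ^ (a + b) := by
          gcongr; exact pow_le_one₀ hT0 hT1
      _ = 2 ^ (a + b) * M ^ (a + b) := by rw [one_mul, mul_pow]
      _ ≤ 2 ^ (a + b) * M ^ k := by gcongr; omega
  · have hr1 : r ≤ 1 := not_lt.1 h1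
    have hW2 : W ≤ 2 * (1 + 1 / t) := by
      have : r / t ≤ 1 / t := by gcongr
      linarith
    have hsq : 1 + 1 / t ≤ M ^ 2 := by
      have e : 1 / t = (1 / Real.sqrt t) ^ 2 := by
        rw [div_pow, Real.sq_sqrt ht.le, one_pow]
      nlinarith
    have hWM : W ≤ 2 * M ^ 2 := hW2.trans (by linarith)
    have hTW' : T * W ≤ 2 * (r * (1 + 1 / t)) := by
      calc T * W ≤ r * (2 * (1 + 1 / t)) := by gcongr
        _ = _ := by ring
    have hTW : T * W ≤ 2 * M := by
      have : r * (1 + 1 / t) = r + r / t := by ring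
      linarith
    by_cases hk : Even k
    · have hPsi : Psi k r t = M ^ k := by simp [Psi, hk, hM]
      rw [hPsi]
      calc T ^ a * W ^ (a + b) = (T * W) ^ a * W ^ b := by rw [pow_add, mul_pow]; ring
        _ ≤ (2 * M) ^ a * (2 * M ^ 2) ^ b := by gcongr
        _ = 2 ^ (a + b) * M ^ (a + 2 * b) := by ring_nf
        _ ≤ 2 ^ (a + b) * M ^ k := by gcongr
    · have hPsi : Psi k r t = r * M ^ (k - 1) * (1 + 1 / t) := by simp [Psi, hk, h1, hM]
      rw [hPsi]
      rw [Nat.not_even_iff] at hk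
      obtain ⟨a, rfl⟩ : ∃ a', a = a' + 1 := ⟨a - 1, by omega⟩
      calc T ^ (a + 1) * W ^ (a + 1 + b) = (T * W) * ((T * W) ^ a * W ^ b) := by ring_nf
        _ ≤ (2 * (r * (1 + 1 / t))) * ((2 * M) ^ a * (2 * M ^ 2) ^ b) := by gcongr
        _ = 2 ^ (a + 1 + b) * (r * M ^ (a + 2 * b) * (1 + 1 / t)) := by ring_nf
        _ ≤ _ := by gcongr; omega

lemma Chain.pow_le {A : ℕ → ℝ} (hA : ∀ i, 0 ≤ A i) {t : ℝ} (ht : 0 < t) {G : ℕ → ℝ → ℝ}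
    (h : Chain A t G) (j : ℕ) {r : ℝ} (hr : 0 < r) :
    Real.cosh r ^ j * G j r ≤ (∏ i ∈ Finset.range j, A i) * (1 + (1 + r) / t) ^ j * G 0 r := by
  induction j with
  | zero => simp
  | succ j ih =>
    have h1 := h.le j r hr
    have hc : 0 < Real.cosh r := Real.cosh_pos r
    calc Real.cosh r ^ (j + 1) * G (j + 1) r
        = Real.cosh r ^ j * (Real.cosh r * G (j + 1) r) := by ring
      _ ≤ Real.cosh r ^ j * (A j * (1 + (1 + r) / t) * G j r) := by gcongr
      _ = A j * (1 + (1 + r) / t) * (Real.cosh r ^ j * G j r) := by ring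
      _ ≤ A j * (1 + (1 + r) / t) *
          ((∏ i ∈ Finset.range j, A i) * (1 + (1 + r) / t) ^ j * G 0 r) := by
        have := hA j
        gcongr
      _ = _ := by rw [Finset.prod_range_succ]; ring

lemma Rep.bound {k : ℕ} {Φ : (ℕ → ℝ → ℝ) → ℝ → ℝ} (h : Rep k Φ) {A : ℕ → ℝ}
    (hA : ∀ i, 0 ≤ A i) :
    ∃ C : ℝ, 0 < C ∧ ∀ t G, 0 < t → Chain A t G → ∀ r, 0 < r →
      |Φ G r| ≤ C * Psi k r t * G 0 r := by
  induction h with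
  | @add Φ Ξ _ _ ih1 ih2 =>
    obtain ⟨C1, h1, h1'⟩ := ih1
    obtain ⟨C2, h2, h2'⟩ := ih2
    refine ⟨C1 + C2, add_pos h1 h2, fun t G ht hG r hr => ?_⟩
    have a1 := h1' t G ht hG r hr
    have a2 := h2' t G ht hG r hr
    have := abs_add_le (Φ G r) (Ξ G r)
    linarith
  | term c a b hab hp =>
    set B := |c| * ((∏ i ∈ Finset.range (a + b), A i) * 2 ^ (a + b)) with hB
    have hprod : 0 ≤ ∏ i ∈ Finset.range (a + b), A i := Finset.prod_nonneg fun i _ => hA i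
    have hB0 : 0 ≤ B := by positivity
    refine ⟨B + 1, by positivity, fun t G ht hG r hr => ?_⟩
    have hc : 0 < Real.cosh r := Real.cosh_pos r
    have hs : 0 < Real.sinh r := Real.sinh_pos_iff.2 hr
    have hG0 := hG.nonneg 0 r hr
    have hGj := hG.nonneg (a + b) r hr
    set T := Real.sinh r / Real.cosh r with hT
    have hT0 : 0 ≤ T := by positivity
    have hT1 : T ≤ 1 := (div_le_one hc).2 (Real.sinh_lt_cosh r).le
    have hTr : T ≤ r := (div_le_iff₀ hc).2 (sinh_le_mul_cosh hr.le)
    have h1 := pow_le_Psi hab hp ht hr hT0 hT1 hTr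
    have h2 := hG.pow_le hA ht (a + b) hr
    have hPsi : 0 ≤ Psi k r t := by
      unfold Psi; split_ifs <;> positivity
    rw [abs_mul, abs_of_nonneg (by positivity :
      0 ≤ Real.sinh r ^ a * Real.cosh r ^ b * G (a + b) r)]
    calc |c| * (Real.sinh r ^ a * Real.cosh r ^ b * G (a + b) r)
        = |c| * (T ^ a * (Real.cosh r ^ (a + b) * G (a + b) r)) := by
          rw [hT, div_pow, pow_add]; field_simp
      _ ≤ |c| * (T ^ a * ((∏ i ∈ Finset.range (a + b), A i) *
          (1 + (1 + r) / t) ^ (a + b) * G 0 r)) := by gcongr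
      _ = |c| * (∏ i ∈ Finset.range (a + b), A i) *
          (T ^ a * (1 + (1 + r) / t) ^ (a + b)) * G 0 r := by ring
      _ ≤ |c| * (∏ i ∈ Finset.range (a + b), A i) * (2 ^ (a + b) * Psi k r t) * G 0 r := by
        gcongr
      _ = B * Psi k r t * G 0 r := by rw [hB]; ring
      _ ≤ _ := by gcongr; linarith

/-- The constant depends on the chain only through the ratio bounds `A`. -/
lemma Chain.deriv_bound {A : ℕ → ℝ} (hA : ∀ i, 0 ≤ A i) (k : ℕ) :
    ∃ C : ℝ, 0 < C ∧ ∀ t G, 0 < t → Chain A t G → ∀ r, 0 < r →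
      |deriv^[k] (G 0) r| ≤ C * Psi k r t * G 0 r := by
  obtain ⟨Φ, hΦ, h⟩ := exists_Rep k
  obtain ⟨C, hC, h'⟩ := hΦ.bound hA
  refine ⟨C, hC, fun t G ht hG r hr => ?_⟩
  rw [h A t G hG r hr]
  exact h' t G ht hG r hr

/-! ### The Abel transform -/

/-- The successive derivatives `(-d/dx)ⁱ (g 0)` on `(1, ∞)`, all nonnegative. -/
structure CMSeq (g : ℕ → ℝ → ℝ) : Prop where
  hasDerivAt : ∀ i x, 1 < x → HasDerivAt (g i) (-g (i + 1) x) x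
  nonneg : ∀ i x, 1 < x → 0 ≤ g i x

lemma CMSeq.continuousOn {g : ℕ → ℝ → ℝ} (h : CMSeq g) (i : ℕ) : ContinuousOn (g i) (Set.Ioi 1) :=
  fun x hx => (h.hasDerivAt i x hx).continuousAt.continuousWithinAt

lemma CMSeq.anti {g : ℕ → ℝ → ℝ} (h : CMSeq g) (i : ℕ) : AntitoneOn (g i) (Set.Ioi 1) := by
  refine antitoneOn_of_deriv_nonpos (convex_Ioi 1) (h.continuousOn i) ?_ ?_
  · intro x hx
    rw [interior_Ioi] at hx
    exact (h.hasDerivAt i x hx).differentiableAt.differentiableWithinAt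
  · intro x hx
    rw [interior_Ioi] at hx
    rw [(h.hasDerivAt i x hx).deriv]
    linarith [h.nonneg (i + 1) x hx]

/-- Being monotone with a nonnegative primitive, `g (i + 1)` decays at least like `1 / x`. -/
lemma CMSeq.decay {g : ℕ → ℝ → ℝ} (h : CMSeq g) (i : ℕ) {x v : ℝ} (hx : 1 < x) (hv : 0 < v) :
    g (i + 1) (x + v) ≤ (g (i + 1) x + g i x) * (1 + v)⁻¹ := by
  have h1 : g (i + 1) (x + v) ≤ g (i + 1) x := h.anti (i + 1) hx (by
    show 1 < x + v; linarith) (by linarith)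
  have hd : ∀ w, 0 ≤ w → HasDerivAt (fun w => g i (x + w) + w * g (i + 1) (x + w))
      (-(w * g (i + 1 + 1) (x + w))) w := by
    intro w hw
    have hw1 : 1 < x + w := by linarith
    exact (((h.hasDerivAt i _ hw1).comp_const_add x w).add
      ((hasDerivAt_id' w).fun_mul ((h.hasDerivAt (i + 1) _ hw1).comp_const_add x w))).congr_deriv
      (by ring)
  have hm : AntitoneOn (fun w => g i (x + w) + w * g (i + 1) (x + w)) (Set.Ici 0) := by
    refine antitoneOn_of_deriv_nonpos (convex_Ici 0)
      (fun w hw => (hd w hw).continuousAt.continuousWithinAt) ?_ ?_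
    · intro w hw
      rw [interior_Ici] at hw
      exact (hd w (le_of_lt hw)).differentiableAt.differentiableWithinAt
    · intro w hw
      rw [interior_Ici] at hw
      rw [(hd w (le_of_lt hw)).deriv]
      have hw' : 0 < w := hw
      have := h.nonneg (i + 1 + 1) (x + w) (by linarith)
      have := mul_nonneg hw'.le this
      linarith
  have h2 := hm Set.self_mem_Ici (show (0 : ℝ) ≤ v from hv.le) hv.le
  simp only [add_zero, zero_mul] at h2
  have h3 := h.nonneg i (x + v) (by linarith)
  rw [← div_eq_mul_inv, le_div_iff₀ (by positivity)]
  linarith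

lemma integrableOn_abel_weight :
    IntegrableOn (fun v : ℝ => (Real.sqrt v)⁻¹ * (1 + v)⁻¹) (Set.Ioi 0) := by
  have hmeas : Measurable (fun v : ℝ => (Real.sqrt v)⁻¹ * (1 + v)⁻¹) := by fun_prop
  rw [← Set.Ioc_union_Ioi_eq_Ioi (zero_le_one (α := ℝ))]
  refine IntegrableOn.union ?_ ?_
  · have h : IntegrableOn (fun v : ℝ => v ^ (-(1 / 2) : ℝ)) (Set.Ioc 0 1) := by
      rw [← intervalIntegrable_iff_integrableOn_Ioc_of_le zero_le_one]
      exact intervalIntegral.intervalIntegrable_rpow' (by norm_num)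
    refine Integrable.mono' h hmeas.aestronglyMeasurable ?_
    refine (ae_restrict_iff' measurableSet_Ioc).2 (Filter.Eventually.of_forall fun v hv => ?_)
    have hv0 : 0 < v := hv.1
    rw [Real.norm_eq_abs, abs_of_nonneg (by positivity), Real.rpow_neg hv0.le,
      ← Real.sqrt_eq_rpow]
    exact mul_le_of_le_one_right (by positivity) (inv_le_one_of_one_le₀ (by linarith))
  · have h : IntegrableOn (fun v : ℝ => v ^ (-(3 / 2) : ℝ)) (Set.Ioi 1) :=
      integrableOn_Ioi_rpow_of_lt (by norm_num) one_pos
    refine Integrable.mono' h hmeas.aestronglyMeasurable ?_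
    refine (ae_restrict_iff' measurableSet_Ioi).2 (Filter.Eventually.of_forall fun v hv => ?_)
    have hv1 : 1 < v := hv
    have hv0 : 0 < v := by linarith
    rw [Real.norm_eq_abs, abs_of_nonneg (by positivity),
      show (-(3 / 2) : ℝ) = -(1 / 2) + -1 by norm_num, Real.rpow_add hv0, Real.rpow_neg hv0.le,
      ← Real.sqrt_eq_rpow, Real.rpow_neg_one]
    gcongr
    linarith

/-- The Abel transform of `g (i + 1)`, in the variable `x = cosh r`. -/
def abel (g : ℕ → ℝ → ℝ) (i : ℕ) (x : ℝ) : ℝ :=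
  ∫ v in Set.Ioi (0 : ℝ), (Real.sqrt v)⁻¹ * g (i + 1) (x + v)

lemma CMSeq.abel_meas {g : ℕ → ℝ → ℝ} (h : CMSeq g) (i : ℕ) {x : ℝ} (hx : 1 < x) :
    AEStronglyMeasurable (fun v => (Real.sqrt v)⁻¹ * g i (x + v))
      (volume.restrict (Set.Ioi (0 : ℝ))) := by
  refine ContinuousOn.aestronglyMeasurable ?_ measurableSet_Ioi
  refine ContinuousOn.mul ?_ ?_
  · refine ContinuousOn.inv₀ (by fun_prop) fun v hv => ?_
    exact (Real.sqrt_pos.2 hv).ne'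
  · refine (h.continuousOn i).comp (by fun_prop) fun v hv => ?_
    have : 0 < v := hv
    show 1 < x + v
    linarith

lemma CMSeq.abel_integrable {g : ℕ → ℝ → ℝ} (h : CMSeq g) (i : ℕ) {x : ℝ} (hx : 1 < x) :
    IntegrableOn (fun v => (Real.sqrt v)⁻¹ * g (i + 1) (x + v)) (Set.Ioi 0) := by
  refine Integrable.mono' (integrableOn_abel_weight.const_mul (g (i + 1) x + g i x))
    (h.abel_meas (i + 1) hx) ?_
  refine (ae_restrict_iff' measurableSet_Ioi).2 (Filter.Eventually.of_forall fun v hv => ?_)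
  have hv0 : 0 < v := hv
  have h0 := h.nonneg (i + 1) (x + v) (by linarith)
  rw [Real.norm_eq_abs, abs_of_nonneg (by positivity)]
  calc _ ≤ (Real.sqrt v)⁻¹ * ((g (i + 1) x + g i x) * (1 + v)⁻¹) := by
        gcongr; exact h.decay i hx hv0
    _ = _ := by ring

/-- Differentiation in `cosh r` commutes with the Abel transform. -/
lemma CMSeq.abel_hasDerivAt {g : ℕ → ℝ → ℝ} (h : CMSeq g) (i : ℕ) {x : ℝ} (hx : 1 < x) :
    HasDerivAt (abel g i) (-abel g (i + 1) x) x := by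
  obtain ⟨x₁, h1, h2⟩ := exists_between hx
  have key := hasDerivAt_integral_of_dominated_loc_of_deriv_le
    (μ := volume.restrict (Set.Ioi (0 : ℝ))) (x₀ := x) (s := Set.Ioi x₁)
    (F := fun x v => (Real.sqrt v)⁻¹ * g (i + 1) (x + v))
    (F' := fun x v => -((Real.sqrt v)⁻¹ * g (i + 1 + 1) (x + v)))
    (bound := fun v => (Real.sqrt v)⁻¹ * g (i + 1 + 1) (x₁ + v))
    (Ioi_mem_nhds h2) ?_ (h.abel_integrable i hx) (h.abel_meas (i + 1 + 1) hx).neg ?_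
    (h.abel_integrable (i + 1) h1) ?_
  · refine key.2.congr_deriv ?_
    rw [integral_neg]; rfl
  · filter_upwards [lt_mem_nhds hx] with y hy using h.abel_meas (i + 1) hy
  · refine (ae_restrict_iff' measurableSet_Ioi).2 (Filter.Eventually.of_forall fun v hv y hy => ?_)
    have hv0 : 0 < v := hv
    have hy1 : x₁ < y := hy
    have h0 := h.nonneg (i + 1 + 1) (y + v) (by linarith)
    rw [norm_neg, Real.norm_eq_abs, abs_of_nonneg (by positivity)]
    gcongr
    exact h.anti (i + 1 + 1) (show 1 < x₁ + v by linarith) (show 1 < y + v by linarith)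
      (by linarith)
  · refine (ae_restrict_iff' measurableSet_Ioi).2 (Filter.Eventually.of_forall fun v hv y hy => ?_)
    have hv0 : 0 < v := hv
    have hy1 : x₁ < y := hy
    exact (((h.hasDerivAt (i + 1) (y + v) (by linarith)).comp_add_const y v).const_mul
      _).congr_deriv (by ring)

/-- The substitution `v = cosh s - cosh r`. -/
lemma abel_subst (G : ℝ → ℝ) {r : ℝ} (hr : 0 < r) :
    ∫ s in Set.Ioi r, (Real.sinh s / Real.sqrt (Real.cosh s - Real.cosh r)) * G s =
      ∫ v in Set.Ioi (0 : ℝ), (Real.sqrt v)⁻¹ * G (Real.arcosh (Real.cosh r + v)) := by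
  have himg : (fun s => Real.cosh s - Real.cosh r) '' Set.Ioi r = Set.Ioi 0 := by
    ext v
    simp only [Set.mem_image, Set.mem_Ioi]
    constructor
    · rintro ⟨s, hs, rfl⟩
      have : Real.cosh r < Real.cosh s := by
        rw [Real.cosh_lt_cosh, abs_of_pos hr, abs_of_pos (hr.trans hs)]; exact hs
      linarith
    · intro hv
      have h1 := Real.one_le_cosh r
      refine ⟨Real.arcosh (Real.cosh r + v), ?_, ?_⟩
      · have := (Real.arcosh_lt_arcosh (Real.cosh_pos r)
          (by linarith : 0 < Real.cosh r + v)).2 (by linarith)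
        rwa [Real.arcosh_cosh hr.le] at this
      · rw [Real.cosh_arcosh (by linarith)]; ring
  have hinj : Set.InjOn (fun s => Real.cosh s - Real.cosh r) (Set.Ioi r) := by
    intro a ha b hb hab
    have ha0 : 0 < a := hr.trans ha
    have hb0 : 0 < b := hr.trans hb
    have : Real.cosh a = Real.cosh b := by simpa using hab
    rw [← Real.arcosh_cosh ha0.le, this, Real.arcosh_cosh hb0.le]
  rw [← himg, integral_image_eq_integral_abs_deriv_smul measurableSet_Ioi
    (fun s _ => ((Real.hasDerivAt_cosh s).sub_const (Real.cosh r)).hasDerivWithinAt) hinj]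
  refine setIntegral_congr_fun measurableSet_Ioi fun s hs => ?_
  have hs0 : 0 < s := hr.trans hs
  have hsh : 0 < Real.sinh s := Real.sinh_pos_iff.2 hs0
  simp only [smul_eq_mul]
  rw [abs_of_pos hsh, add_sub_cancel, Real.arcosh_cosh hs0.le]
  ring

lemma Chain.cmSeq {A : ℕ → ℝ} {t : ℝ} {G : ℕ → ℝ → ℝ} (h : Chain A t G) :
    CMSeq (fun i x => G i (Real.arcosh x)) where
  hasDerivAt i x hx := by
    have h0 := Real.arcosh_pos hx
    have hs : 0 < Real.sinh (Real.arcosh x) := Real.sinh_pos_iff.2 h0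
    refine ((h.hasDerivAt i _ h0).comp x (Real.hasDerivAt_arcosh hx)).congr_deriv ?_
    rw [← Real.sinh_arcosh hx.le]
    field_simp
  nonneg i x hx := h.nonneg i _ (Real.arcosh_pos hx)

/-- `(1 + s) / cosh s` is nonincreasing up to a factor `2`. -/
lemma cosh_mul_one_add_le {r s : ℝ} (hr : 0 ≤ r) (hrs : r ≤ s) :
    Real.cosh r * (1 + s) ≤ 2 * Real.cosh s * (1 + r) := by
  have h1 : 1 + s ≤ Real.exp (s - r) * (1 + r) := by
    have := Real.add_one_le_exp (s - r)
    nlinarith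
  have h2 : Real.cosh r ≤ Real.exp r := by
    rw [Real.cosh_eq]
    have : Real.exp (-r) ≤ Real.exp r := Real.exp_le_exp.2 (by linarith)
    linarith
  have h3 : Real.exp s ≤ 2 * Real.cosh s := by
    rw [Real.cosh_eq]
    have := Real.exp_pos (-s)
    linarith
  have h4 : 0 ≤ 1 + s := by linarith
  calc Real.cosh r * (1 + s) ≤ Real.exp r * (Real.exp (s - r) * (1 + r)) := by gcongr
    _ = Real.exp s * (1 + r) := by rw [← mul_assoc, ← Real.exp_add]; ring_nf
    _ ≤ _ := by gcongr

/-- The Abel transform preserves the ratio bounds of a chain, since the integrand only involves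
`s ≥ r`. -/
lemma Chain.abel {A : ℕ → ℝ} (hA : ∀ i, 0 ≤ A i) {t : ℝ} (ht : 0 < t) {G : ℕ → ℝ → ℝ}
    (h : Chain A t G) : Chain (fun i => 2 * A (i + 1)) t
      (fun i r => DR.abel (fun i x => G i (Real.arcosh x)) i (Real.cosh r)) where
  hasDerivAt i r hr :=
    ((h.cmSeq.abel_hasDerivAt i (Real.one_lt_cosh.2 hr.ne')).comp r
      (Real.hasDerivAt_cosh r)).congr_deriv (by ring)
  nonneg i r hr := by
    refine setIntegral_nonneg measurableSet_Ioi fun v hv => ?_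
    have hv0 : 0 < v := hv
    have := h.cmSeq.nonneg (i + 1) (Real.cosh r + v) (by linarith [Real.one_le_cosh r])
    positivity
  le i r hr := by
    have hc := Real.one_lt_cosh.2 hr.ne'
    unfold DR.abel
    rw [← integral_const_mul, ← integral_const_mul]
    refine setIntegral_mono_on ((h.cmSeq.abel_integrable (i + 1) hc).const_mul _)
      ((h.cmSeq.abel_integrable i hc).const_mul _) measurableSet_Ioi fun v hv => ?_
    have hv0 : 0 < v := hv
    set s := Real.arcosh (Real.cosh r + v) with hs
    have hs1 : 1 < Real.cosh r + v := by linarith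
    have hs0 : 0 < s := Real.arcosh_pos hs1
    have hcs : Real.cosh s = Real.cosh r + v := Real.cosh_arcosh hs1.le
    have hrs : r ≤ s := by
      have := (Real.arcosh_le_arcosh (Real.cosh_pos r) (by linarith : 0 < Real.cosh r + v)).2
        (by linarith)
      rwa [Real.arcosh_cosh hr.le] at this
    have h1 := h.le (i + 1) s hs0
    have h2 := h.nonneg (i + 1) s hs0
    have hcp : 0 < Real.cosh s := Real.cosh_pos s
    have h3 : Real.cosh r * (1 + (1 + s) / t) ≤ 2 * Real.cosh s * (1 + (1 + r) / t) := by
      have e : Real.cosh r * (1 + s) / t ≤ 2 * Real.cosh s * (1 + r) / t := by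
        exact div_le_div_of_nonneg_right (cosh_mul_one_add_le hr.le hrs) ht.le
      calc _ = Real.cosh r + Real.cosh r * (1 + s) / t := by ring
        _ ≤ 2 * Real.cosh s + 2 * Real.cosh s * (1 + r) / t := by linarith
        _ = _ := by ring
    have h4 : Real.cosh r * G (i + 1 + 1) s ≤
        2 * A (i + 1) * (1 + (1 + r) / t) * G (i + 1) s := by
      refine le_of_mul_le_mul_left ?_ hcp
      calc Real.cosh s * (Real.cosh r * G (i + 1 + 1) s)
          = Real.cosh r * (Real.cosh s * G (i + 1 + 1) s) := by ring
        _ ≤ Real.cosh r * (A (i + 1) * (1 + (1 + s) / t) * G (i + 1) s) := by gcongr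
        _ = A (i + 1) * G (i + 1) s * (Real.cosh r * (1 + (1 + s) / t)) := by ring
        _ ≤ A (i + 1) * G (i + 1) s * (2 * Real.cosh s * (1 + (1 + r) / t)) := by
          have := hA (i + 1)
          gcongr
        _ = _ := by ring
    calc Real.cosh r * ((Real.sqrt v)⁻¹ * G (i + 1 + 1) s)
        = (Real.sqrt v)⁻¹ * (Real.cosh r * G (i + 1 + 1) s) := by ring
      _ ≤ (Real.sqrt v)⁻¹ * (2 * A (i + 1) * (1 + (1 + r) / t) * G (i + 1) s) := by gcongr
      _ = _ := by ring

/-! ### The bound for the heat kernel -/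

lemma deriv_iterate_congr {f g : ℝ → ℝ} (h : ∀ r, 0 < r → f r = g r) (k : ℕ) :
    ∀ r, 0 < r → deriv^[k] f r = deriv^[k] g r := by
  induction k with
  | zero => exact h
  | succ k ih =>
    intro r hr
    rw [Function.iterate_succ_apply', Function.iterate_succ_apply']
    refine Filter.EventuallyEq.deriv_eq ?_
    filter_upwards [lt_mem_nhds hr] with s hs using ih s hs

theorem radial_derivative_upper_bound (μ ν : ℕ) (hμ : Even μ) (hν : 1 ≤ ν) (k : ℕ) :
    ∃ C : ℝ, 0 < C ∧ ∀ t r : ℝ, 0 < t → 0 < r →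
      |deriv^[k] (heat μ ν t) r| ≤ C * Psi k r t * heat μ ν t r := by
  have hcc : 0 ≤ cc μ ν 0 := by unfold cc; positivity
  by_cases hpar : Even ν
  · obtain ⟨C, hC, h⟩ := Chain.deriv_bound
      (A := fun i => ((μ / 2 : ℕ) : ℝ) + 2 * (ν / 2 + i : ℕ) + 1) (fun i => by positivity) k
    refine ⟨C, hC, fun t r ht hr => ?_⟩
    have hch := (chain_gauss (μ / 2) (ν / 2) ht).const_mul
      (b := cc μ ν 0 * t ^ (-(1 : ℝ) / 2) * Real.exp (-(Qc μ ν) ^ 2 * t / 4)) (by positivity)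
    have he : ∀ r, 0 < r → heat μ ν t r = cc μ ν 0 * t ^ (-(1 : ℝ) / 2) *
        Real.exp (-(Qc μ ν) ^ 2 * t / 4) * (D1^[ν / 2 + 0] (D2^[μ / 2] (gauss t))) r :=
      fun r _ => by simp [heat, hpar]
    rw [deriv_iterate_congr he k r hr, he r hr]
    exact h t _ ht hch r hr
  · -- the Abel transform starts at the index `(ν + 1) / 2 = ν / 2 + 1 ≥ 1` of the Gaussian chain
    have hidx : (ν + 1) / 2 = ν / 2 + (0 + 1) := by
      rw [Nat.not_even_iff] at hpar; omega
    obtain ⟨C, hC, h⟩ := Chain.deriv_bound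
      (A := fun i => 2 * (((μ / 2 : ℕ) : ℝ) + 2 * (ν / 2 + (i + 1) : ℕ) + 1))
      (fun i => by positivity) k
    refine ⟨C, hC, fun t r ht hr => ?_⟩
    have hch := ((chain_gauss (μ / 2) (ν / 2) ht).abel (fun i => by positivity) ht).const_mul
      (b := cc μ ν 0 * Real.pi ^ (-(1 : ℝ) / 2) * t ^ (-(1 : ℝ) / 2) *
        Real.exp (-(Qc μ ν) ^ 2 * t / 4)) (by positivity)
    have he : ∀ r, 0 < r → heat μ ν t r = cc μ ν 0 * Real.pi ^ (-(1 : ℝ) / 2) *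
        t ^ (-(1 : ℝ) / 2) * Real.exp (-(Qc μ ν) ^ 2 * t / 4) *
        DR.abel (fun i x => D1^[ν / 2 + i] (D2^[μ / 2] (gauss t)) (Real.arcosh x)) 0
          (Real.cosh r) := by
      intro r hr
      rw [heat, if_neg hpar, abel_subst _ hr, hidx]
      rfl
    rw [deriv_iterate_congr he k r hr, he r hr]
    exact h t _ ht hch r hr

end DR
end
end

section
/- For every k ∈ ℕ there exists a constant C_k ≥ 1 such that for all r, t > 0: C_k^{-1} e^{-kr} (1 + (1+r)/t)^k h_t(r) ≤ (-1)^k (𝓡^k h_t)(r) ≤ C_k e^{-kr} (1 + (1+r)/t)^k h_t(r), where 𝓡 denotes the differential operator (𝓡 g)(r) = (1/sinh r) g'(r) on smooth functions on (0,∞). -/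
/-!
Put `ρ = r / 2`, `y = cosh ρ` and `T = (1 + r) / t`, and write `≍` for two-sided bounds that are
uniform in `r, t > 0`.

The Gaussian is `e^{-ρ²/t}`, and `-d/dy` of it is `(2 / t) W₀ e^{-ρ²/t}` with `W₀ = ρ / sinh ρ`.
As a function of `y`, `W₀ = 2 ∫₀¹ du / (1 + 2uy + u²)`, so all its derivatives
`W_j = (-d/dy)^j W₀` are positive, with `W_j ≍ (1 + 2ρ) y^{-j-1}` (`W_cmp`). The Leibniz rule thus
gives sums of positive terms, hence `(-d/dy)^j e^{-ρ²/t} ≍ y^{-j} T (1 + T)^{j-1} e^{-ρ²/t}` for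
`j ≥ 1` (`Gs_cmp`); the sum over the terms telescopes to `(1 + T)^n` (`sum_th`).

The operators in the heat kernel are `D2 = -(1/2) d/dy` and `D1 = -d/d(cosh r) = -(4y)⁻¹ d/dy`.
Therefore `D1^(a+1) D2^m e^{-ρ²/t} ≍ y^{-2a-2-m} T (1 + T)^{m+a} e^{-ρ²/t}` (`X_cmp`). Since
`-𝓡 = D1` and `y^{-2} ≍ e^{-r}`, the ratio of these bounds for `a + k` and `a` is the claim for
even `ν` (`X_ratio`).

For odd `ν`, the substitution `cosh s = cosh r + 2τ²` turns the integral into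
`2√2 ∫₀^∞ Y (cosh r + 2τ²) dτ`, where `Y` is `D1^(a+1) D2^m e^{-ρ²/t}` as a function of `cosh r`
(`integral_eq_H`), and `-𝓡` acts by differentiation under the integral sign (`hasDerivAt_H`). So
the even case can be applied to the integrand. The weight `e^{-r} (1 + (1 + r) / t)` is decreasing
in `r` (`Ew_anti`), which gives the upper bound. For the lower bound, the decay of `Y` with an
exponent larger than `1/2` (`X_decay`) shows that a fixed proportion of the integral comes from
`τ² ≤ cosh r` (`H_concentration`), where the weight is comparable to its value at `r`.
-/

open Real MeasureTheory Filter Topology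

noncomputable section

namespace DR

/-! ### The function `ρ / sinh ρ` of `cosh ρ` as a Stieltjes-type integral -/

/-- The Stieltjes-type integral `W j y = 2 j! ∫₀¹ (2u)^j / (1 + 2uy + u²)^(j+1) du`. It is
`(-d/dy)^j` of `W 0`, and `W 0 (cosh ρ) = ρ / sinh ρ`. -/
def W (j : ℕ) (y : ℝ) : ℝ :=
  2 * (j.factorial : ℝ) * ∫ u in (0 : ℝ)..1, (2 * u) ^ j / (1 + 2 * u * y + u ^ 2) ^ (j + 1)

lemma den_ge_one_s1 {u y : ℝ} (hu : 0 ≤ u) (hy : 0 ≤ y) : 1 ≤ 1 + 2 * u * y + u ^ 2 := by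
  have : 0 ≤ u * y := mul_nonneg hu hy
  nlinarith [sq_nonneg u]

lemma W_intervalIntegrable (j : ℕ) {y a b : ℝ} (hy : 0 ≤ y) (ha : 0 ≤ a) (hb : 0 ≤ b) :
    IntervalIntegrable (fun u : ℝ => (2 * u) ^ j / (1 + 2 * u * y + u ^ 2) ^ (j + 1))
      volume a b := by
  apply ContinuousOn.intervalIntegrable
  apply ContinuousOn.div (by fun_prop) (by fun_prop)
  intro u hu
  have h0 : 0 ≤ u := by
    rcases Set.mem_uIcc.1 hu with h | h
    · exact ha.trans h.1
    · exact hb.trans h.1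
  have := den_ge_one_s1 h0 hy
  positivity

lemma hasDerivAt_W (j : ℕ) {y : ℝ} (hy : 0 < y) : HasDerivAt (W j) (-W (j + 1) y) y := by
  have key := (intervalIntegral.hasDerivAt_integral_of_dominated_loc_of_deriv_le
    (μ := volume) (a := 0) (b := 1) (x₀ := y) (s := Set.Ioi 0)
    (F := fun y u : ℝ => (2 * u) ^ j / (1 + 2 * u * y + u ^ 2) ^ (j + 1))
    (F' := fun y u : ℝ =>
      -((j + 1 : ℝ) * ((2 * u) ^ (j + 1) / (1 + 2 * u * y + u ^ 2) ^ (j + 2))))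
    (bound := fun _ => (j + 1 : ℝ) * 2 ^ (j + 1)) (Ioi_mem_nhds hy) ?_ ?_ ?_ ?_ ?_ ?_).2
  · have h2 := key.const_mul (2 * (j.factorial : ℝ))
    refine h2.congr_deriv ?_
    rw [intervalIntegral.integral_neg, intervalIntegral.integral_const_mul, W,
      Nat.factorial_succ]
    push_cast
    ring
  · filter_upwards [Ioi_mem_nhds hy] with x hx
    have := W_intervalIntegrable j (a := 0) (b := 1) (le_of_lt hx) le_rfl zero_le_one
    exact (intervalIntegrable_iff.1 this).aestronglyMeasurable
  · exact W_intervalIntegrable j hy.le le_rfl zero_le_one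
  · have := W_intervalIntegrable (j + 1) (a := 0) (b := 1) hy.le le_rfl zero_le_one
    exact ((this.const_mul (j + 1 : ℝ)).neg).def'.aestronglyMeasurable
  · refine Eventually.of_forall fun u hu x hx => ?_
    rw [Set.uIoc_of_le zero_le_one] at hu
    have hd := den_ge_one_s1 hu.1.le (le_of_lt hx)
    have h0 : 0 ≤ 2 * u := by linarith [hu.1]
    have h1 : (2 * u) ^ (j + 1) ≤ 2 ^ (j + 1) := by
      gcongr; linarith [hu.2]
    rw [norm_neg, Real.norm_of_nonneg (by positivity)]
    gcongr
    exact (div_le_self (by positivity) (one_le_pow₀ hd)).trans h1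
  · exact intervalIntegrable_const
  · refine Eventually.of_forall fun u hu x hx => ?_
    rw [Set.uIoc_of_le zero_le_one] at hu
    have hd := den_ge_one_s1 hu.1.le (le_of_lt hx)
    have hD : HasDerivAt (fun x : ℝ => 1 + 2 * u * x + u ^ 2) (2 * u) x := by
      simpa using (((hasDerivAt_id x).const_mul (2 * u)).const_add 1).add_const (u ^ 2)
    have h := (hasDerivAt_const x ((2 * u) ^ j)).fun_div (hD.fun_pow (j + 1)) (by positivity)
    refine h.congr_deriv ?_
    have : 1 + 2 * u * x + u ^ 2 ≠ 0 := by positivity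
    simp only [Nat.add_sub_cancel]
    field_simp
    push_cast
    ring

/-- The antiderivative is a difference of logarithms, by partial fractions. -/
lemma W_zero {ρ : ℝ} (hρ : 0 < ρ) : W 0 (cosh ρ) = ρ / sinh ρ := by
  have hs := Real.sinh_pos_iff.2 hρ
  have key : ∫ u in (0 : ℝ)..1, 1 / (1 + 2 * u * cosh ρ + u ^ 2) =
      (2 * sinh ρ)⁻¹ * (log (1 + exp (-ρ)) - log (1 + exp ρ)) -
      (2 * sinh ρ)⁻¹ * (log (0 + exp (-ρ)) - log (0 + exp ρ)) := by
    apply intervalIntegral.integral_eq_sub_of_hasDerivAt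
      (f := fun u => (2 * sinh ρ)⁻¹ * (log (u + exp (-ρ)) - log (u + exp ρ)))
    · intro u hu
      rw [Set.uIcc_of_le zero_le_one] at hu
      have h1 : 0 < u + exp (-ρ) := by have := exp_pos (-ρ); linarith [hu.1]
      have h2 : 0 < u + exp ρ := by have := exp_pos ρ; linarith [hu.1]
      have := (((hasDerivAt_id u).add_const (exp (-ρ))).log h1.ne').sub
        (((hasDerivAt_id u).add_const (exp ρ)).log h2.ne')
      refine (this.const_mul (2 * sinh ρ)⁻¹).congr_deriv ?_
      -- the quadratic `1 + 2u cosh ρ + u²` has the roots `-e^ρ` and `-e^{-ρ}`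
      have h3 : 1 + 2 * u * cosh ρ + u ^ 2 = (u + exp (-ρ)) * (u + exp ρ) := by
        have : exp (-ρ) * exp ρ = 1 := by rw [← exp_add]; simp
        rw [cosh_eq]; linear_combination (-1) * this
      have h4 : 2 * sinh ρ = exp ρ - exp (-ρ) := by rw [sinh_eq]; ring
      have h5 : exp ρ - exp (-ρ) ≠ 0 := by rw [← h4]; positivity
      rw [h3, h4]
      simp only [id]
      field_simp
      ring
    · have := W_intervalIntegrable 0 (y := cosh ρ) (a := 0) (b := 1) (cosh_pos ρ).le le_rfl
        zero_le_one
      simpa using this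
  have h1 : log (1 + exp ρ) = ρ + log (1 + exp (-ρ)) := by
    have : 1 + exp ρ = exp ρ * (1 + exp (-ρ)) := by
      have : exp ρ * exp (-ρ) = 1 := by rw [← exp_add]; simp
      linear_combination (-1) * this
    rw [this, log_mul (exp_pos _).ne' (by positivity), log_exp]
  rw [h1] at key
  simp only [zero_add, log_exp] at key
  simp only [W, pow_zero, zero_add, pow_one, key, Nat.factorial_zero, Nat.cast_one]
  field_simp
  ring

lemma W_nonneg (j : ℕ) {y : ℝ} (hy : 0 ≤ y) : 0 ≤ W j y := by
  unfold W
  refine mul_nonneg (by positivity) (intervalIntegral.integral_nonneg zero_le_one ?_)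
  intro u hu
  have hd := den_ge_one_s1 hu.1 hy
  have := hu.1
  positivity

/-- The factor `2u / (1 + 2uy + u²)` of the integrand is at most `1 / y`. -/
lemma W_upper (j : ℕ) {y : ℝ} (hy : 0 < y) : W j y ≤ j.factorial * (y⁻¹ ^ j * W 0 y) := by
  have : ∫ u in (0 : ℝ)..1, (2 * u) ^ j / (1 + 2 * u * y + u ^ 2) ^ (j + 1) ≤
      ∫ u in (0 : ℝ)..1, y⁻¹ ^ j * ((2 * u) ^ 0 / (1 + 2 * u * y + u ^ 2) ^ (0 + 1)) := by
    apply intervalIntegral.integral_mono_on zero_le_one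
      (W_intervalIntegrable j hy.le le_rfl zero_le_one)
      ((W_intervalIntegrable 0 hy.le le_rfl zero_le_one).const_mul _)
    intro u hu
    have hd := den_ge_one_s1 hu.1 hy.le
    have hu0 := hu.1
    have : 2 * u / (1 + 2 * u * y + u ^ 2) ≤ y⁻¹ := by
      rw [div_le_iff₀ (by positivity), inv_mul_eq_div, le_div_iff₀ hy]
      nlinarith [sq_nonneg u]
    calc (2 * u) ^ j / (1 + 2 * u * y + u ^ 2) ^ (j + 1)
        = (2 * u / (1 + 2 * u * y + u ^ 2)) ^ j * (1 / (1 + 2 * u * y + u ^ 2)) := by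
          rw [div_pow, div_mul_div_comm, mul_one, pow_succ]
      _ ≤ y⁻¹ ^ j * (1 / (1 + 2 * u * y + u ^ 2)) := by gcongr
      _ = _ := by simp
  unfold W
  rw [intervalIntegral.integral_const_mul] at this
  calc _ ≤ 2 * (j.factorial : ℝ) * (y⁻¹ ^ j * ∫ u in (0 : ℝ)..1,
        ((2 * u) ^ 0 / (1 + 2 * u * y + u ^ 2) ^ (0 + 1))) := by gcongr
    _ = _ := by simp; ring

/-- The part `u ≥ 1/(2y)` of the integral defining `W j y` already has the right size, because
`1 + 2uy + u² ≤ 6uy` there. -/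
lemma W_lower (j : ℕ) {y : ℝ} (hy : 1 ≤ y) :
    2 * (j.factorial : ℝ) * ((3 * y)⁻¹ ^ j * ((6 * y)⁻¹ * log (2 * y))) ≤ W j y := by
  have hy0 : 0 < y := by linarith
  have ha : 0 < (2 * y)⁻¹ := by positivity
  have ha1 : (2 * y)⁻¹ ≤ 1 := inv_le_one_of_one_le₀ (by linarith)
  have h1 : ∫ u in (2 * y)⁻¹..1, (3 * y)⁻¹ ^ j * ((6 * y)⁻¹ * u⁻¹) ≤
      ∫ u in (2 * y)⁻¹..1, (2 * u) ^ j / (1 + 2 * u * y + u ^ 2) ^ (j + 1) := by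
    apply intervalIntegral.integral_mono_on ha1 _ (W_intervalIntegrable j hy0.le ha.le zero_le_one)
    · intro u hu
      have hu0 : 0 < u := ha.trans_le hu.1
      have huy : 1 ≤ 2 * u * y := by
        have := hu.1
        rw [inv_le_iff_one_le_mul₀ (by positivity)] at this
        linarith
      have hd : 1 + 2 * u * y + u ^ 2 ≤ 6 * y * u := by nlinarith [hu.2]
      have hd0 := den_ge_one_s1 hu0.le hy0.le
      have e1 : (3 * y)⁻¹ ≤ 2 * u / (1 + 2 * u * y + u ^ 2) := by
        rw [le_div_iff₀ (by positivity), inv_mul_le_iff₀ (by positivity)]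
        linarith
      have e2 : (6 * y)⁻¹ * u⁻¹ ≤ 1 / (1 + 2 * u * y + u ^ 2) := by
        rw [← mul_inv, ← one_div]
        exact one_div_le_one_div_of_le (by positivity) hd
      calc _ ≤ (2 * u / (1 + 2 * u * y + u ^ 2)) ^ j * (1 / (1 + 2 * u * y + u ^ 2)) := by gcongr
        _ = _ := by rw [div_pow, div_mul_div_comm, mul_one, pow_succ _ j]
    · apply ContinuousOn.intervalIntegrable
      refine continuousOn_const.mul (continuousOn_const.mul (continuousOn_id.inv₀ ?_))
      intro u hu
      rw [Set.uIcc_of_le ha1] at hu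
      exact (ha.trans_le hu.1).ne'
  rw [intervalIntegral.integral_const_mul, intervalIntegral.integral_const_mul,
    integral_inv_of_pos ha one_pos, one_div, inv_inv] at h1
  have h2 : ∫ u in (2 * y)⁻¹..1, (2 * u) ^ j / (1 + 2 * u * y + u ^ 2) ^ (j + 1) ≤
      ∫ u in (0 : ℝ)..1, (2 * u) ^ j / (1 + 2 * u * y + u ^ 2) ^ (j + 1) := by
    rw [← intervalIntegral.integral_add_adjacent_intervals (a := 0) (b := (2 * y)⁻¹) (c := 1)
      (W_intervalIntegrable j hy0.le le_rfl ha.le)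
      (W_intervalIntegrable j hy0.le ha.le zero_le_one)]
    have : 0 ≤ ∫ u in (0 : ℝ)..(2 * y)⁻¹, (2 * u) ^ j / (1 + 2 * u * y + u ^ 2) ^ (j + 1) := by
      apply intervalIntegral.integral_nonneg ha.le
      intro u hu
      have hd := den_ge_one_s1 hu.1 hy0.le
      have := hu.1
      positivity
    linarith
  unfold W
  gcongr
  exact h1.trans h2

/-! ### Uniform comparability -/

/-- Two-sided comparability, uniform in `ρ, t > 0`, of `f` with a positive function `g`. -/
def Cmp (f g : ℝ → ℝ → ℝ) : Prop :=
  ∃ c C : ℝ, 0 < c ∧ 0 < C ∧ ∀ ρ t : ℝ, 0 < ρ → 0 < t →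
    0 < g ρ t ∧ c * g ρ t ≤ f ρ t ∧ f ρ t ≤ C * g ρ t

namespace Cmp

variable {f g f₁ g₁ f₂ g₂ : ℝ → ℝ → ℝ}

lemma refl (h : ∀ ρ t : ℝ, 0 < ρ → 0 < t → 0 < f ρ t) : Cmp f f :=
  ⟨1, 1, one_pos, one_pos, fun ρ t hρ ht => ⟨h ρ t hρ ht, by simp, by simp⟩⟩

lemma congr (h : Cmp f g) (hf : ∀ ρ t : ℝ, 0 < ρ → 0 < t → f ρ t = f₁ ρ t)
    (hg : ∀ ρ t : ℝ, 0 < ρ → 0 < t → g ρ t = g₁ ρ t) : Cmp f₁ g₁ := by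
  obtain ⟨c, C, hc, hC, h⟩ := h
  refine ⟨c, C, hc, hC, fun ρ t hρ ht => ?_⟩
  rw [← hf ρ t hρ ht, ← hg ρ t hρ ht]
  exact h ρ t hρ ht

lemma pos (h : Cmp f g) {ρ t : ℝ} (hρ : 0 < ρ) (ht : 0 < t) : 0 < f ρ t := by
  obtain ⟨c, C, hc, -, h⟩ := h
  obtain ⟨h0, h1, -⟩ := h ρ t hρ ht
  exact (mul_pos hc h0).trans_le h1

lemma add (h₁ : Cmp f₁ g₁) (h₂ : Cmp f₂ g₂) :
    Cmp (fun ρ t => f₁ ρ t + f₂ ρ t) (fun ρ t => g₁ ρ t + g₂ ρ t) := by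
  obtain ⟨c, C, hc, hC, h₁⟩ := h₁
  obtain ⟨c', C', hc', hC', h₂⟩ := h₂
  refine ⟨min c c', max C C', lt_min hc hc', lt_max_of_lt_left hC, fun ρ t hρ ht => ?_⟩
  obtain ⟨p, l, u⟩ := h₁ ρ t hρ ht
  obtain ⟨p', l', u'⟩ := h₂ ρ t hρ ht
  refine ⟨add_pos p p', ?_, ?_⟩ <;> dsimp only
  · rw [mul_add]
    exact add_le_add (le_trans (by gcongr; exact min_le_left _ _) l)
      (le_trans (by gcongr; exact min_le_right _ _) l')
  · rw [mul_add]
    exact add_le_add (u.trans (by gcongr; exact le_max_left _ _))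
      (u'.trans (by gcongr; exact le_max_right _ _))

lemma mul (h₁ : Cmp f₁ g₁) (h₂ : Cmp f₂ g₂) :
    Cmp (fun ρ t => f₁ ρ t * f₂ ρ t) (fun ρ t => g₁ ρ t * g₂ ρ t) := by
  obtain ⟨c, C, hc, hC, h₁⟩ := h₁
  obtain ⟨c', C', hc', hC', h₂⟩ := h₂
  refine ⟨c * c', C * C', mul_pos hc hc', mul_pos hC hC', fun ρ t hρ ht => ?_⟩
  obtain ⟨p, l, u⟩ := h₁ ρ t hρ ht
  obtain ⟨p', l', u'⟩ := h₂ ρ t hρ ht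
  have q := (mul_pos hc p).trans_le l
  have q' := (mul_pos hc' p').trans_le l'
  refine ⟨mul_pos p p', ?_, ?_⟩ <;> dsimp only
  · rw [mul_mul_mul_comm]; gcongr
  · rw [mul_mul_mul_comm]; gcongr

lemma const_mul (h : Cmp f g) {a : ℝ} (ha : 0 < a) : Cmp (fun ρ t => a * f ρ t) g := by
  obtain ⟨c, C, hc, hC, h⟩ := h
  refine ⟨a * c, a * C, mul_pos ha hc, mul_pos ha hC, fun ρ t hρ ht => ?_⟩
  obtain ⟨p, l, u⟩ := h ρ t hρ ht
  refine ⟨p, ?_, ?_⟩ <;> dsimp only <;> rw [mul_assoc] <;> gcongr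

lemma sum (F G : ℕ → ℝ → ℝ → ℝ) (n : ℕ) (h : ∀ i ≤ n, Cmp (F i) (G i)) :
    Cmp (fun ρ t => ∑ i ∈ Finset.range (n + 1), F i ρ t)
      (fun ρ t => ∑ i ∈ Finset.range (n + 1), G i ρ t) := by
  induction n with
  | zero => simpa using h 0 le_rfl
  | succ n ih =>
    simp only [Finset.sum_range_succ _ (n + 1)]
    exact (ih fun i hi => h i (by omega)).add (h _ le_rfl)

/-- Adding a nonnegative multiple of a positive function that is at most of the order of `g`
preserves comparability with `g`. -/
lemma add_mul_nonneg (h₁ : Cmp f₁ g) (h₂ : Cmp f₂ g₂)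
    (hg : ∀ ρ t : ℝ, 0 < ρ → 0 < t → g₂ ρ t ≤ g ρ t) {a : ℝ} (ha : 0 ≤ a) :
    Cmp (fun ρ t => f₁ ρ t + a * f₂ ρ t) g := by
  obtain ⟨c, C, hc, hC, h₁⟩ := h₁
  obtain ⟨c', C', hc', hC', h₂⟩ := h₂
  refine ⟨c, C + a * C', hc, by positivity, fun ρ t hρ ht => ?_⟩
  obtain ⟨p, l, u⟩ := h₁ ρ t hρ ht
  obtain ⟨p', l', u'⟩ := h₂ ρ t hρ ht
  refine ⟨p, ?_, ?_⟩ <;> dsimp only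
  · have := mul_nonneg ha ((mul_pos hc' p').trans_le l').le
    linarith
  · have := mul_le_mul_of_nonneg_left
      (u'.trans (mul_le_mul_of_nonneg_left (hg ρ t hρ ht) hC'.le)) ha
    linarith

end Cmp

/-! ### Derivatives of the Gaussian -/

/-- The parameter `T = (1 + r) / t`, in terms of `ρ = r / 2`. -/
def T (ρ t : ℝ) : ℝ := (1 + 2 * ρ) / t

lemma T_pos {ρ t : ℝ} (hρ : 0 < ρ) (ht : 0 < t) : 0 < T ρ t := by unfold T; positivity

/-- `W j` has size `log (2y) / y^(j+1)`, and `log (2 cosh ρ)` is comparable to `1 + 2ρ`. The upper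
bound uses `ρ coth ρ ≤ 1 + ρ`. -/
lemma W_cmp (j : ℕ) :
    Cmp (fun ρ _ => W j (cosh ρ)) (fun ρ _ => (1 + 2 * ρ) * (cosh ρ)⁻¹ ^ (j + 1)) := by
  refine ⟨2 * (j.factorial : ℝ) * 3⁻¹ ^ j * 24⁻¹, j.factorial, by positivity, by positivity,
    fun ρ t hρ _ => ⟨by positivity, ?_, ?_⟩⟩ <;>
    dsimp only
  · have hy := one_le_cosh ρ
    refine le_trans ?_ (W_lower j hy)
    have h1 : (1 + 2 * ρ) / 4 ≤ log (2 * cosh ρ) := by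
      have a : ρ ≤ log (2 * cosh ρ) := by
        rw [Real.le_log_iff_exp_le (by positivity), cosh_eq]
        have := exp_pos (-ρ)
        linarith
      have b : log 2 ≤ log (2 * cosh ρ) := Real.log_le_log (by norm_num) (by linarith)
      have := Real.log_two_gt_d9
      linarith
    calc _ = 2 * (j.factorial : ℝ) * ((3 * cosh ρ)⁻¹ ^ j *
          ((6 * cosh ρ)⁻¹ * ((1 + 2 * ρ) / 4))) := by
          rw [mul_inv, mul_inv, mul_pow, pow_succ]; ring
      _ ≤ _ := by gcongr
  · refine (W_upper j (cosh_pos ρ)).trans ?_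
    have hs := Real.sinh_pos_iff.2 hρ
    rw [W_zero hρ, pow_succ, mul_left_comm (1 + 2 * ρ)]
    gcongr
    rw [div_le_iff₀ hs, mul_assoc, inv_mul_eq_div, mul_div_assoc', le_div_iff₀ (cosh_pos ρ)]
    have h1 : ρ ≤ sinh ρ := Real.self_le_sinh_iff.2 hρ.le
    have h2 : cosh ρ - sinh ρ ≤ 1 := by
      rw [Real.cosh_sub_sinh]; exact exp_le_one_iff.2 (by linarith)
    nlinarith [mul_nonneg hρ.le hs.le]

/-- `Gs t j` is `(-d/dy)^j e^{-ρ²/t}` with `y = cosh ρ`, as a function of `ρ`. The recursion is the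
Leibniz rule applied to `-d/dy e^{-ρ²/t} = (2/t) W₀(y) e^{-ρ²/t}`. -/
def Gs (t : ℝ) : ℕ → ℝ → ℝ
  | 0 => fun ρ => exp (-ρ ^ 2 / t)
  | n + 1 => fun ρ =>
      2 / t * ∑ i : Fin (n + 1), (n.choose i : ℝ) * (Gs t i ρ * W (n - i) (cosh ρ))

lemma Gs_zero (t ρ : ℝ) : Gs t 0 ρ = exp (-ρ ^ 2 / t) := by rw [Gs]

lemma Gs_succ (t : ℝ) (n : ℕ) (ρ : ℝ) : Gs t (n + 1) ρ =
    2 / t * ∑ i ∈ Finset.range (n + 1), (n.choose i : ℝ) * (Gs t i ρ * W (n - i) (cosh ρ)) := by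
  rw [Gs, Finset.sum_range]

lemma Gs_succ' (t : ℝ) (n : ℕ) (ρ : ℝ) : Gs t (n + 1) ρ =
    2 / t * ∑ ij ∈ Finset.HasAntidiagonal.antidiagonal n,
      (n.choose ij.1 : ℝ) * (Gs t ij.1 ρ * W ij.2 (cosh ρ)) := by
  rw [Gs_succ, Finset.Nat.sum_antidiagonal_eq_sum_range_succ
    (fun i j => (n.choose i : ℝ) * (Gs t i ρ * W j (cosh ρ)))]

/-- The step from `Gs t j` to `Gs t (j + 1)` is `-d/dy`, that is `-(sinh ρ)⁻¹ d/dρ`: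
differentiating the Leibniz sum gives the Leibniz sum of the next order by Pascal's rule. -/
lemma hasDerivAt_Gs (t : ℝ) (j : ℕ) {ρ : ℝ} (hρ : 0 < ρ) :
    HasDerivAt (Gs t j) (-(sinh ρ * Gs t (j + 1) ρ)) ρ := by
  induction j using Nat.strong_induction_on with
  | _ j ih =>
  cases j with
  | zero =>
    have h1 : Gs t 0 = fun ρ => exp (-ρ ^ 2 / t) := by funext ρ; exact Gs_zero t ρ
    rw [h1, Gs_succ]
    refine (((hasDerivAt_pow 2 ρ).fun_neg.div_const t).exp).congr_deriv ?_
    have hs := Real.sinh_pos_iff.2 hρ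
    simp [W_zero hρ, Gs_zero]
    field_simp
  | succ n =>
    have h1 : Gs t (n + 1) = fun ρ => 2 / t * ∑ ij ∈ Finset.HasAntidiagonal.antidiagonal n,
        (n.choose ij.1 : ℝ) * (Gs t ij.1 ρ * W ij.2 (cosh ρ)) := by
      funext ρ; exact Gs_succ' t n ρ
    rw [h1, Gs_succ', Finset.sum_antidiagonal_choose_succ_mul
      (fun i j => Gs t i ρ * W j (cosh ρ))]
    have hW : ∀ j, HasDerivAt (fun ρ => W j (cosh ρ)) (-W (j + 1) (cosh ρ) * sinh ρ) ρ :=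
      fun j => (hasDerivAt_W j (cosh_pos ρ)).comp ρ (Real.hasDerivAt_cosh ρ)
    have h2 : HasDerivAt (fun ρ => ∑ ij ∈ Finset.HasAntidiagonal.antidiagonal n,
        (n.choose ij.1 : ℝ) * (Gs t ij.1 ρ * W ij.2 (cosh ρ)))
        (∑ ij ∈ Finset.HasAntidiagonal.antidiagonal n, (n.choose ij.1 : ℝ) *
          (-(sinh ρ * Gs t (ij.1 + 1) ρ) * W ij.2 (cosh ρ) +
            Gs t ij.1 ρ * (-W (ij.2 + 1) (cosh ρ) * sinh ρ))) ρ := by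
      refine HasDerivAt.fun_sum fun ij hij => ?_
      have := Finset.HasAntidiagonal.mem_antidiagonal.1 hij
      exact ((ih ij.1 (by omega)).mul (hW ij.2)).const_mul _
    refine (h2.const_mul (2 / t)).congr_deriv ?_
    rw [← Finset.sum_add_distrib, mul_left_comm, ← mul_neg, ← mul_neg, Finset.mul_sum]
    rw [← Finset.sum_neg_distrib, Finset.mul_sum, Finset.mul_sum]
    refine Finset.sum_congr rfl fun ij hij => ?_
    rw [Nat.choose_symm_of_eq_add (Finset.HasAntidiagonal.mem_antidiagonal.1 hij).symm]
    ring

/-- `1, T, T(1+T), T(1+T)², …`: the size of `y^j (-d/dy)^j e^{-ρ²/t}` relative to `e^{-ρ²/t}`. -/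
def th (T : ℝ) : ℕ → ℝ
  | 0 => 1
  | j + 1 => T * (1 + T) ^ j

/-- A telescoping sum: the sizes of the Leibniz terms add up to `(1 + T)^n`. -/
lemma sum_th (T : ℝ) (n : ℕ) : ∑ i ∈ Finset.range (n + 1), th T i = (1 + T) ^ n := by
  induction n with
  | zero => simp [th]
  | succ n ih => rw [Finset.sum_range_succ, ih, th]; ring

lemma th_pos {T : ℝ} (hT : 0 < T) (j : ℕ) : 0 < th T j := by
  cases j <;> simp only [th] <;> positivity

/-- All terms of the Leibniz sum are positive and share the factor `y^{-n-1}`, so their sizes add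
up by `sum_th`. -/
lemma Gs_cmp (j : ℕ) : Cmp (fun ρ t => Gs t j ρ)
    (fun ρ t => (cosh ρ)⁻¹ ^ j * th (T ρ t) j * exp (-ρ ^ 2 / t)) := by
  induction j using Nat.strong_induction_on with
  | _ j ih =>
  cases j with
  | zero =>
    exact (Cmp.refl (f := fun ρ t => exp (-ρ ^ 2 / t)) fun _ _ _ _ => exp_pos _).congr
      (fun ρ t _ _ => by rw [Gs_zero]) (fun ρ t _ _ => by simp [th])
  | succ n =>
    have h1 := Cmp.sum _ _ n fun i hi => ((ih i (by omega)).mul (W_cmp (n - i))).const_mul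
      (a := (n.choose i : ℝ)) (by exact_mod_cast Nat.choose_pos hi)
    have h2 : Cmp (fun _ t => 2 / t) (fun _ t => 1 / t) :=
      ((Cmp.refl (f := fun _ t => 1 / t) fun _ t _ ht => by positivity).const_mul two_pos).congr
        (fun _ _ _ _ => by ring) (fun _ _ _ _ => rfl)
    refine (h2.mul h1).congr (fun ρ t _ _ => (Gs_succ t n ρ).symm) fun ρ t _ _ => ?_
    have : ∀ i ∈ Finset.range (n + 1), (cosh ρ)⁻¹ ^ i * th (T ρ t) i * exp (-ρ ^ 2 / t) *
        ((1 + 2 * ρ) * (cosh ρ)⁻¹ ^ (n - i + 1)) =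
        ((cosh ρ)⁻¹ ^ (n + 1) * (1 + 2 * ρ) * exp (-ρ ^ 2 / t)) * th (T ρ t) i := by
      intro i hi
      have hi : i ≤ n := by simpa [Nat.lt_succ_iff] using hi
      have : n + 1 = i + (n - i + 1) := by omega
      rw [this, pow_add]
      simp
      ring
    rw [Finset.sum_congr rfl this, ← Finset.mul_sum, sum_th, th]
    nth_rewrite 2 [T]
    ring

/-! ### The mixed derivatives -/

/-- `V t a p j` is `(-d/dx)^a (y^{-p} Gs t j)` with `x = 2y² - 1 = cosh 2ρ`, `y = cosh ρ`, as a
function of `ρ`; the recursion is `-d/dx = -(4y)⁻¹ d/dy`. -/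
def V (t : ℝ) : ℕ → ℕ → ℕ → ℝ → ℝ
  | 0, p, j => fun ρ => (cosh ρ)⁻¹ ^ p * Gs t j ρ
  | a + 1, p, j => fun ρ => 1 / 4 * (V t a (p + 1) (j + 1) ρ + p * V t a (p + 2) j ρ)

lemma hasDerivAt_V (t : ℝ) (a p j : ℕ) {ρ : ℝ} (hρ : 0 < ρ) :
    HasDerivAt (V t a p j) (-(4 * cosh ρ * sinh ρ * V t (a + 1) p j ρ)) ρ := by
  induction a generalizing p j with
  | zero =>
    have h1 := (((Real.hasDerivAt_cosh ρ).fun_inv (cosh_pos ρ).ne').fun_pow p).mul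
      (hasDerivAt_Gs t j hρ)
    refine h1.congr_deriv ?_
    have := (cosh_pos ρ).ne'
    simp only [V]
    rcases p with _ | p
    · simp; field_simp
    · simp
      field_simp
      ring
  | succ a ih =>
    have h := ((ih (p + 1) (j + 1)).add ((ih (p + 2) j).const_mul (p : ℝ))).const_mul (1 / 4)
    refine h.congr_deriv ?_
    rw [show V t (a + 1 + 1) p j ρ = 1 / 4 * (V t (a + 1) (p + 1) (j + 1) ρ +
      p * V t (a + 1) (p + 2) j ρ) from rfl]
    ring

/-- Of the two terms in the recursion for `V`, the one that differentiates `Gs` dominates. The index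
`j + 1` is essential: `Gs t 0` has no factor `T`. -/
lemma V_cmp (a p j : ℕ) : Cmp (fun ρ t => V t a p (j + 1) ρ)
    (fun ρ t => (cosh ρ)⁻¹ ^ (p + 2 * a + j + 1) * (T ρ t * (1 + T ρ t) ^ (j + a)) *
      exp (-ρ ^ 2 / t)) := by
  induction a generalizing p j with
  | zero =>
    refine ((Cmp.refl (f := fun ρ _ => (cosh ρ)⁻¹ ^ p) fun ρ t _ _ => ?_).mul
      (Gs_cmp (j + 1))).congr (fun _ _ _ _ => rfl) (fun ρ t _ _ => ?_)
    · positivity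
    · simp only [th]; ring
  | succ a ih =>
    have h1 := (ih (p + 1) (j + 1)).congr (fun _ _ _ _ => rfl) (g₁ := fun ρ t =>
      (cosh ρ)⁻¹ ^ (p + 2 * (a + 1) + j + 1) * (T ρ t * (1 + T ρ t) ^ (j + 1 + a)) *
        exp (-ρ ^ 2 / t)) (fun ρ t _ _ => by
          rw [show p + 1 + 2 * a + (j + 1) + 1 = p + 2 * (a + 1) + j + 1 by ring])
    rw [show j + (a + 1) = j + 1 + a by ring]
    have h3 := (h1.add_mul_nonneg (ih (p + 2) j) (fun ρ t hρ ht => ?_) p.cast_nonneg).const_mul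
      (a := 1 / 4) (by norm_num)
    · exact h3.congr (fun ρ t _ _ => by rw [V]) (fun _ _ _ _ => rfl)
    · have hT := T_pos hρ ht
      rw [show p + 2 + 2 * a + j + 1 = p + 2 * (a + 1) + j + 1 by ring]
      gcongr
      · linarith
      · omega

/-- The size of `V t (a + 1) 0 m`. -/
def M (m a : ℕ) (ρ t : ℝ) : ℝ :=
  (cosh ρ)⁻¹ ^ (2 * a + 2 + m) * (T ρ t * (1 + T ρ t) ^ (m + a)) * exp (-ρ ^ 2 / t)

lemma M_pos (m a : ℕ) {ρ t : ℝ} (hρ : 0 < ρ) (ht : 0 < t) : 0 < M m a ρ t := by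
  have := T_pos hρ ht
  unfold M
  positivity

/-- One application of `-d/dx` turns `Gs t m` into a multiple of `y⁻¹ Gs t (m + 1)`, so that `V_cmp`
applies even when `m = 0`. -/
lemma X_cmp (m a : ℕ) : Cmp (fun ρ t => V t (a + 1) 0 m ρ) (M m a) := by
  refine ((V_cmp a 1 m).const_mul (a := 1 / 4) (by norm_num)).congr (fun ρ t _ _ => ?_)
    fun ρ t _ _ => ?_
  · simp [V]
  · rw [M]; congr 3; ring

/-- Each further application of `-d/d(cosh r)` multiplies the size by `y^{-2} (1 + T)`. -/
lemma M_add (m a k : ℕ) (ρ t : ℝ) :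
    M m (a + k) ρ t = ((cosh ρ)⁻¹ ^ 2 * (1 + T ρ t)) ^ k * M m a ρ t := by
  simp only [M, mul_pow, ← pow_mul]
  ring

/-! ### Identification with the iterated operators -/

/-- If `q (n + 1) = s · (q n)'` on `(0, ∞)`, then `q n` is the `n`-th iterate of the first order
operator `s · d/dr` on `q 0`. -/
lemma iterate_op {O : (ℝ → ℝ) → ℝ → ℝ} {s : ℝ → ℝ} (hO : ∀ g r, O g r = s r * deriv g r)
    {q : ℕ → ℝ → ℝ} (hq : ∀ n r, 0 < r → s r * deriv (q n) r = q (n + 1) r)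
    {f : ℝ → ℝ} (hf : ∀ r, 0 < r → f r = q 0 r) (n : ℕ) :
    ∀ r, 0 < r → O^[n] f r = q n r := by
  induction n with
  | zero => simpa using hf
  | succ n ih =>
    intro r hr
    rw [Function.iterate_succ_apply', hO, ← hq n r hr]
    congr 1
    apply Filter.EventuallyEq.deriv_eq
    filter_upwards [Ioi_mem_nhds hr] with x hx using ih x hx

lemma D2_iterate_gauss (t : ℝ) (m : ℕ) {r : ℝ} (hr : 0 < r) :
    D2^[m] (gauss t) r = 2⁻¹ ^ m * Gs t m (r / 2) := by
  refine iterate_op (O := D2) (s := fun r => -(1 / sinh (r / 2))) (fun _ _ => rfl)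
    (q := fun n r => 2⁻¹ ^ n * Gs t n (r / 2)) ?_ ?_ m r hr
  · intro n r hr
    have h1 : 0 < r / 2 := by positivity
    have h := ((hasDerivAt_Gs t n h1).comp r ((hasDerivAt_id r).div_const 2)).const_mul
      ((2 : ℝ)⁻¹ ^ n)
    have e : deriv (fun r => 2⁻¹ ^ n * Gs t n (r / 2)) r = _ := h.deriv
    rw [e]
    have hs := Real.sinh_pos_iff.2 h1
    field_simp
    ring
  · intro r _
    simp only [Gs_zero, gauss, pow_zero, one_mul]
    congr 1
    ring

lemma D1_iterate (t : ℝ) (m a : ℕ) {r : ℝ} (hr : 0 < r) :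
    D1^[a] (D2^[m] (gauss t)) r = 2⁻¹ ^ m * V t a 0 m (r / 2) := by
  refine iterate_op (O := D1) (s := fun r => -(1 / sinh r)) (fun _ _ => rfl)
    (q := fun n r => 2⁻¹ ^ m * V t n 0 m (r / 2)) ?_ ?_ a r hr
  · intro n r hr
    have h1 : 0 < r / 2 := by positivity
    have h := ((hasDerivAt_V t n 0 m h1).comp r ((hasDerivAt_id r).div_const 2)).const_mul
      ((2 : ℝ)⁻¹ ^ m)
    have e : deriv (fun r => 2⁻¹ ^ m * V t n 0 m (r / 2)) r = _ := h.deriv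
    rw [e]
    have hs := Real.sinh_pos_iff.2 h1
    have hs' : sinh r = 2 * sinh (r / 2) * cosh (r / 2) := by
      rw [← Real.sinh_two_mul]; congr 1; ring
    have := cosh_pos (r / 2)
    rw [hs']
    field_simp
    ring
  · intro r hr
    simp [D2_iterate_gauss t m hr, V]

lemma Rop_iterate {q : ℕ → ℝ → ℝ}
    (hq : ∀ n r, 0 < r → HasDerivAt (q n) (-(sinh r * q (n + 1) r)) r)
    {f : ℝ → ℝ} (hf : ∀ r, 0 < r → f r = q 0 r) (n : ℕ) {r : ℝ} (hr : 0 < r) :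
    (-1) ^ n * Rop^[n] f r = q n r := by
  rw [iterate_op (O := Rop) (s := fun r => 1 / sinh r) (fun _ _ => rfl)
    (q := fun n r => (-1) ^ n * q n r) ?_ (by simpa using hf) n r hr]
  · rw [← mul_assoc, ← mul_pow]; simp
  · intro n r hr
    rw [((hq n r hr).const_mul ((-1) ^ n)).deriv]
    have hs := Real.sinh_pos_iff.2 hr
    field_simp
    ring

/-! ### Ratio and decay estimates -/

/-- The weight `e^{-r} (1 + (1 + r) / t)`. -/
def Ew (r t : ℝ) : ℝ := exp (-r) * (1 + (1 + r) / t)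

lemma Ew_pos {r t : ℝ} (hr : 0 < r) (ht : 0 < t) : 0 < Ew r t := by unfold Ew; positivity

/-- The exponential beats the linear growth, because `1 / t ≤ (1 + r) / t`. -/
lemma Ew_anti {r s t : ℝ} (hr : 0 < r) (hrs : r ≤ s) (ht : 0 < t) : Ew s t ≤ Ew r t := by
  have h1 : exp (-r) = exp (-s) * exp (s - r) := by rw [← exp_add]; congr 1; ring
  have h2 : 1 + (s - r) ≤ exp (s - r) := by linarith [Real.add_one_le_exp (s - r)]
  unfold Ew
  rw [h1, mul_assoc]
  gcongr
  have h3 : 0 ≤ 1 + (1 + r) / t := by positivity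
  refine le_trans ?_ (mul_le_mul_of_nonneg_right h2 h3)
  have h4 : (1 + s) / t = (1 + r) / t + (s - r) / t := by ring
  have h5 : 0 ≤ (s - r) * ((1 + r) / t - 1 / t) := by
    rw [← sub_div]
    have : 0 ≤ s - r := by linarith
    have : 0 ≤ 1 + r - 1 := by linarith
    positivity
  rw [h4]
  have h6 : (s - r) / t = (s - r) * (1 / t) := by ring
  nlinarith

lemma inv_cosh_sq_bounds (r : ℝ) (hr : 0 < r) :
    exp (-r) ≤ (cosh (r / 2))⁻¹ ^ 2 ∧ (cosh (r / 2))⁻¹ ^ 2 ≤ 4 * exp (-r) := by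
  have h0 := cosh_pos (r / 2)
  have h1 : exp (r / 2) * exp (r / 2) = exp r := by rw [← exp_add]; congr 1; ring
  have h2 : cosh (r / 2) ≤ exp (r / 2) := by
    rw [cosh_eq]
    have : exp (-(r / 2)) ≤ exp (r / 2) := exp_le_exp.2 (by linarith)
    linarith
  have h3 : exp (r / 2) / 2 ≤ cosh (r / 2) := by
    rw [cosh_eq]
    have := exp_pos (-(r / 2))
    linarith
  have := exp_pos (r / 2)
  rw [inv_pow, exp_neg, ← h1]
  constructor
  · apply inv_anti₀ (by positivity)
    nlinarith
  · rw [← div_eq_mul_inv, inv_le_comm₀ (by positivity) (by positivity), inv_div,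
      div_le_iff₀ (by norm_num)]
    nlinarith

/-- `V t (a + k + 1) 0 m` and `V t (a + 1) 0 m` differ in size by the factor `(y^{-2} (1 + T))^k`. -/
lemma X_ratio (m a k : ℕ) : ∃ c C : ℝ, 0 < c ∧ 0 < C ∧ ∀ r t : ℝ, 0 < r → 0 < t →
    c * (((cosh (r / 2))⁻¹ ^ 2 * (1 + (1 + r) / t)) ^ k * V t (a + 1) 0 m (r / 2)) ≤
      V t (a + k + 1) 0 m (r / 2) ∧
    V t (a + k + 1) 0 m (r / 2) ≤
      C * (((cosh (r / 2))⁻¹ ^ 2 * (1 + (1 + r) / t)) ^ k * V t (a + 1) 0 m (r / 2)) := by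
  obtain ⟨c₁, C₁, hc₁, hC₁, h₁⟩ := X_cmp m a
  obtain ⟨c₂, C₂, hc₂, hC₂, h₂⟩ := X_cmp m (a + k)
  refine ⟨c₂ / C₁, C₂ / c₁, by positivity, by positivity, fun r t hr ht => ?_⟩
  have hr2 : 0 < r / 2 := by positivity
  obtain ⟨-, l₁, u₁⟩ := h₁ (r / 2) t hr2 ht
  obtain ⟨-, l₂, u₂⟩ := h₂ (r / 2) t hr2 ht
  have hT : T (r / 2) t = (1 + r) / t := by unfold T; congr 1; ring
  rw [M_add, hT] at l₂ u₂
  have hM := M_pos m a hr2 ht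
  set w := ((cosh (r / 2))⁻¹ ^ 2 * (1 + (1 + r) / t)) ^ k with hw
  have hw0 : 0 < w := by positivity
  constructor
  · refine le_trans ?_ l₂
    calc _ ≤ c₂ / C₁ * (w * (C₁ * M m a (r / 2) t)) := by gcongr
      _ = _ := by field_simp
  · refine u₂.trans ?_
    calc _ = C₂ / c₁ * (w * (c₁ * M m a (r / 2) t)) := by field_simp
      _ ≤ _ := by gcongr

lemma X_pos (m a : ℕ) {r t : ℝ} (hr : 0 < r) (ht : 0 < t) : 0 < V t (a + 1) 0 m (r / 2) :=
  (X_cmp m a).pos (by positivity) ht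

/-- `T` grows in `r` slower than any exponential, uniformly in `t`. -/
lemma T_growth {ε r u t : ℝ} (hε : 0 < ε) (hε1 : ε ≤ 1) (hr : 0 < r) (hu : 0 ≤ u) (ht : 0 < t) :
    (1 + (r + u)) / t ≤ ε⁻¹ * exp (ε * u) * ((1 + r) / t) := by
  have h1 : ε * u + 1 ≤ exp (ε * u) := Real.add_one_le_exp _
  have h2 : 1 + u ≤ ε⁻¹ * exp (ε * u) := by
    rw [inv_mul_eq_div, le_div_iff₀ hε]
    linarith
  calc (1 + (r + u)) / t ≤ (1 + u) * (1 + r) / t := by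
        gcongr; nlinarith
    _ ≤ ε⁻¹ * exp (ε * u) * (1 + r) / t := by gcongr
    _ = _ := by ring

/-- Decay of `V t (a + 1) 0 m` as a function of `cosh r`. The exponent only has to exceed `1/2`;
it comes from `(cosh (r/2) / cosh (s/2))² = O(e^{-(s-r)})` with a loss of `e^{(s-r)/4}` that
absorbs the growth of the powers of `T`. -/
lemma X_decay (m a : ℕ) : ∃ C : ℝ, 0 < C ∧ ∀ r s t : ℝ, 0 < r → r ≤ s → 0 < t →
    V t (a + 1) 0 m (s / 2) ≤
      C * ((cosh r / cosh s) ^ (3 / 4 : ℝ) * V t (a + 1) 0 m (r / 2)) := by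
  obtain ⟨c, C, hc, hC, h⟩ := X_cmp m a
  set N : ℝ := m + a + 1 with hN
  have hN1 : 1 ≤ N := by
    have : (0 : ℝ) ≤ m + a := by positivity
    linarith
  refine ⟨C * (2 ^ (2 * a + 2 + m) * (4 * N) ^ (m + a + 1)) / c, by positivity,
    fun r s t hr hrs ht => ?_⟩
  have hs : 0 < s := by linarith
  obtain ⟨hM, l, -⟩ := h (r / 2) t (by positivity) ht
  obtain ⟨-, -, u⟩ := h (s / 2) t (by positivity) ht
  set v := s - r with hv
  have hv0 : 0 ≤ v := by linarith
  have hT : ∀ r : ℝ, T (r / 2) t = (1 + r) / t := fun r => by unfold T; congr 1; ring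
  set A := exp ((4 * N)⁻¹ * v) with hA
  have hA1 : 1 ≤ A := Real.one_le_exp (by positivity)
  have hTr : 0 < T (r / 2) t := T_pos (by positivity) ht
  have hTs : 0 < T (s / 2) t := T_pos (by positivity) ht
  have g1 : T (s / 2) t ≤ 4 * N * A * T (r / 2) t := by
    have := T_growth (ε := (4 * N)⁻¹) (by positivity) (inv_le_one_of_one_le₀ (by linarith)) hr hv0 ht
    rw [inv_inv] at this
    rw [hT, hT]
    convert this using 3
    rw [hv]; ring
  have g2 : 1 + T (s / 2) t ≤ 4 * N * A * (1 + T (r / 2) t) := by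
    have : 1 ≤ 4 * N * A := by nlinarith
    nlinarith
  have hAN : A ^ (m + a + 1) = exp (v / 4) := by
    rw [hA, ← exp_nat_mul]
    congr 1
    push_cast
    rw [← hN]
    field_simp
  have g3 : (cosh (s / 2))⁻¹ ≤ 2 * exp (-(v / 2)) * (cosh (r / 2))⁻¹ := by
    rw [inv_le_comm₀ (cosh_pos _) (by positivity), mul_inv, inv_inv, mul_inv, ← exp_neg, neg_neg]
    have e1 : cosh (r / 2) ≤ exp (r / 2) := by
      rw [cosh_eq]
      have : exp (-(r / 2)) ≤ exp (r / 2) := exp_le_exp.2 (by linarith)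
      linarith
    have e2 : exp (s / 2) = exp (v / 2) * exp (r / 2) := by
      rw [← exp_add]; congr 1; rw [hv]; ring
    have e3 : exp (s / 2) / 2 ≤ cosh (s / 2) := by
      rw [cosh_eq]
      have := exp_pos (-(s / 2))
      linarith
    calc 2⁻¹ * exp (v / 2) * cosh (r / 2) ≤ 2⁻¹ * exp (v / 2) * exp (r / 2) := by gcongr
      _ = exp (s / 2) / 2 := by rw [e2]; ring
      _ ≤ _ := e3
  have g4 : exp (-(v / 2)) ^ (2 * a + 2 + m) ≤ exp (-v) := by
    rw [← exp_nat_mul, exp_le_exp]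
    push_cast
    have : 0 ≤ (2 * a + m : ℝ) * v := by positivity
    nlinarith
  have g5 : exp (-(s / 2) ^ 2 / t) ≤ exp (-(r / 2) ^ 2 / t) := by
    apply exp_le_exp.2
    gcongr
  have g6 : exp (-v) * exp (v / 4) ≤ (cosh r / cosh s) ^ (3 / 4 : ℝ) := by
    have : exp (-v) * exp (v / 4) = exp (-v) ^ (3 / 4 : ℝ) := by
      rw [← exp_add, ← exp_mul]; congr 1; ring
    rw [this]
    apply Real.rpow_le_rpow (exp_pos _).le _ (by norm_num)
    rw [le_div_iff₀ (cosh_pos s), cosh_eq, cosh_eq]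
    have e1 : exp (-v) * exp s = exp r := by rw [← exp_add]; congr 1; rw [hv]; ring
    have e2 : exp (-v) * exp (-s) ≤ exp (-r) := by
      rw [← exp_add]; apply exp_le_exp.2; rw [hv]; linarith
    nlinarith
  have key : M m a (s / 2) t ≤ 2 ^ (2 * a + 2 + m) * (4 * N) ^ (m + a + 1) *
      ((cosh r / cosh s) ^ (3 / 4 : ℝ) * M m a (r / 2) t) := by
    have hc := cosh_pos (s / 2)
    calc M m a (s / 2) t ≤ (2 * exp (-(v / 2)) * (cosh (r / 2))⁻¹) ^ (2 * a + 2 + m) *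
          ((4 * N * A * T (r / 2) t) * (4 * N * A * (1 + T (r / 2) t)) ^ (m + a)) *
          exp (-(r / 2) ^ 2 / t) := by
          unfold M; gcongr
      _ = 2 ^ (2 * a + 2 + m) * (4 * N) ^ (m + a + 1) *
          ((exp (-(v / 2)) ^ (2 * a + 2 + m) * A ^ (m + a + 1)) * M m a (r / 2) t) := by
          unfold M; simp only [mul_pow]; ring
      _ ≤ 2 ^ (2 * a + 2 + m) * (4 * N) ^ (m + a + 1) *
          ((exp (-v) * exp (v / 4)) * M m a (r / 2) t) := by
          rw [hAN]; gcongr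
      _ ≤ _ := by gcongr
  have hcs : 0 ≤ (cosh r / cosh s) ^ (3 / 4 : ℝ) :=
    Real.rpow_nonneg (div_nonneg (cosh_pos _).le (cosh_pos _).le) _
  calc _ ≤ C * M m a (s / 2) t := u
    _ ≤ C * (2 ^ (2 * a + 2 + m) * (4 * N) ^ (m + a + 1) *
      ((cosh r / cosh s) ^ (3 / 4 : ℝ) * M m a (r / 2) t)) := by gcongr
    _ = C * (2 ^ (2 * a + 2 + m) * (4 * N) ^ (m + a + 1)) / c *
      ((cosh r / cosh s) ^ (3 / 4 : ℝ) * (c * M m a (r / 2) t)) := by field_simp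
    _ ≤ _ := by gcongr

/-- `V t (a + 1) 0 m` as a function of `z = cosh r`, so that `-d/dz` maps `Y t m a` to
`Y t m (a + 1)`. -/
def Y (t : ℝ) (m a : ℕ) (z : ℝ) : ℝ := V t (a + 1) 0 m (arcosh z / 2)

lemma Y_cosh (t : ℝ) (m a : ℕ) {r : ℝ} (hr : 0 ≤ r) :
    Y t m a (cosh r) = V t (a + 1) 0 m (r / 2) := by
  rw [Y, arcosh_cosh hr]

lemma Y_pos (m a : ℕ) {t z : ℝ} (ht : 0 < t) (hz : 1 < z) : 0 < Y t m a z :=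
  X_pos m a (arcosh_pos hz) ht

lemma hasDerivAt_Y (t : ℝ) (m a : ℕ) {z : ℝ} (hz : 1 < z) :
    HasDerivAt (Y t m a) (-Y t m (a + 1) z) z := by
  have h0 := arcosh_pos hz
  have h1 : 0 < arcosh z / 2 := by positivity
  have h := (hasDerivAt_V t (a + 1) 0 m h1).comp z ((hasDerivAt_arcosh hz).div_const 2)
  refine h.congr_deriv ?_
  have hs := Real.sinh_pos_iff.2 h0
  rw [← sinh_arcosh hz.le, Y]
  have hs' : sinh (arcosh z) = 2 * sinh (arcosh z / 2) * cosh (arcosh z / 2) := by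
    rw [← Real.sinh_two_mul]; congr 1; ring
  have := Real.sinh_pos_iff.2 h1
  have := cosh_pos (arcosh z / 2)
  rw [hs']
  field_simp
  ring

lemma Y_anti (m a : ℕ) {t z z' : ℝ} (ht : 0 < t) (hz : 1 < z) (hzz : z ≤ z') :
    Y t m a z' ≤ Y t m a z := by
  have : AntitoneOn (Y t m a) (Set.Ioi 1) := by
    apply antitoneOn_of_deriv_nonpos (convex_Ioi 1)
    · exact fun x hx => (hasDerivAt_Y t m a hx).continuousAt.continuousWithinAt
    · rw [interior_Ioi]
      exact fun x hx => (hasDerivAt_Y t m a hx).differentiableAt.differentiableWithinAt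
    · rw [interior_Ioi]
      intro x hx
      rw [(hasDerivAt_Y t m a hx).deriv]
      linarith [Y_pos m (a + 1) ht hx]
  exact this hz (hz.trans_le hzz) hzz

lemma Y_decay (m a : ℕ) : ∃ C : ℝ, 0 < C ∧ ∀ z z' t : ℝ, 1 < z → z ≤ z' → 0 < t →
    Y t m a z' ≤ C * ((z / z') ^ (3 / 4 : ℝ) * Y t m a z) := by
  obtain ⟨C, hC, h⟩ := X_decay m a
  refine ⟨C, hC, fun z z' t hz hzz ht => ?_⟩
  have hz' := hz.trans_le hzz
  have := h (arcosh z) (arcosh z') t (arcosh_pos hz)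
    ((arcosh_le_arcosh (by linarith) (by linarith)).2 hzz) ht
  rwa [cosh_arcosh hz.le, cosh_arcosh hz'.le] at this

lemma Y_continuous (t : ℝ) (m a : ℕ) {x : ℝ} (hx : 1 < x) :
    Continuous fun τ : ℝ => Y t m a (x + 2 * τ ^ 2) := by
  rw [continuous_iff_continuousAt]
  intro τ
  have h : 1 < x + 2 * τ ^ 2 := by nlinarith [sq_nonneg τ]
  exact ContinuousAt.comp (f := fun τ : ℝ => x + 2 * τ ^ 2) (g := Y t m a)
    (hasDerivAt_Y t m a h).continuousAt (by fun_prop)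

lemma Y_integrable (m a : ℕ) {t x : ℝ} (ht : 0 < t) (hx : 1 < x) :
    Integrable fun τ : ℝ => Y t m a (x + 2 * τ ^ 2) := by
  obtain ⟨C, hC, h⟩ := Y_decay m a
  have hi := (integrable_rpow_neg_one_add_norm_sq (E := ℝ) (μ := volume) (r := 3 / 2)
    (by simp; norm_num)).const_mul (C * (x ^ (3 / 4 : ℝ) * Y t m a x))
  refine hi.mono' (Y_continuous t m a hx).aestronglyMeasurable (Eventually.of_forall fun τ => ?_)
  have h1 : x ≤ x + 2 * τ ^ 2 := by nlinarith [sq_nonneg τ]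
  have h0 := Y_pos m a ht hx
  rw [Real.norm_of_nonneg (Y_pos m a ht (hx.trans_le h1)).le]
  refine (h x _ t hx h1 ht).trans ?_
  have h2 : (x / (x + 2 * τ ^ 2)) ^ (3 / 4 : ℝ) ≤
      x ^ (3 / 4 : ℝ) * (1 + ‖τ‖ ^ 2) ^ (-(3 / 2) / 2 : ℝ) := by
    have e : (-(3 / 2) / 2 : ℝ) = -(3 / 4) := by norm_num
    rw [e, Real.rpow_neg (by positivity), ← Real.inv_rpow (by positivity),
      ← Real.mul_rpow (by linarith) (by positivity), ← div_eq_mul_inv]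
    apply Real.rpow_le_rpow (by positivity) _ (by norm_num)
    rw [Real.norm_eq_abs, sq_abs]
    gcongr
    nlinarith [sq_nonneg τ]
  calc _ ≤ C * (x ^ (3 / 4 : ℝ) * (1 + ‖τ‖ ^ 2) ^ (-(3 / 2) / 2 : ℝ) * Y t m a x) := by gcongr
    _ = _ := by ring

/-! ### Half-integrals, for odd `ν` -/

/-- The half-integral `∫₀^∞ Y(x + 2τ²) dτ` of `Y t m a`; with `cosh s = cosh r + 2τ²` it becomes
the integral in the definition of the heat kernel for odd `ν`. -/
def H (t : ℝ) (m a : ℕ) (x : ℝ) : ℝ := ∫ τ in Set.Ioi (0 : ℝ), Y t m a (x + 2 * τ ^ 2)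

/-- Differentiation under the integral sign; the derivative is dominated because `Y` is antitone. -/
lemma hasDerivAt_H (m a : ℕ) {t x : ℝ} (ht : 0 < t) (hx : 1 < x) :
    HasDerivAt (H t m a) (-H t m (a + 1) x) x := by
  have hx1 : 1 < (1 + x) / 2 := by linarith
  have key := (hasDerivAt_integral_of_dominated_loc_of_deriv_le
    (μ := volume.restrict (Set.Ioi (0 : ℝ))) (x₀ := x) (s := Set.Ioi ((1 + x) / 2))
    (F := fun x τ : ℝ => Y t m a (x + 2 * τ ^ 2))
    (F' := fun x τ : ℝ => -Y t m (a + 1) (x + 2 * τ ^ 2))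
    (bound := fun τ => Y t m (a + 1) ((1 + x) / 2 + 2 * τ ^ 2))
    (Ioi_mem_nhds (by linarith)) ?_ ?_ ?_ ?_ ?_ ?_).2
  · refine key.congr_deriv ?_
    rw [integral_neg, H]
  · filter_upwards [Ioi_mem_nhds hx] with y hy
    exact (Y_continuous t m a hy).aestronglyMeasurable
  · exact (Y_integrable m a ht hx).integrableOn
  · exact (Y_continuous t m (a + 1) hx).neg.aestronglyMeasurable
  · refine Eventually.of_forall fun τ y hy => ?_
    have hy : (1 + x) / 2 < y := hy
    have h1 : 1 < (1 + x) / 2 + 2 * τ ^ 2 := by nlinarith [sq_nonneg τ]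
    have h2 : (1 + x) / 2 + 2 * τ ^ 2 ≤ y + 2 * τ ^ 2 := by linarith
    rw [norm_neg, Real.norm_of_nonneg (Y_pos m _ ht (h1.trans_le h2)).le]
    exact Y_anti m _ ht h1 h2
  · exact (Y_integrable m (a + 1) ht hx1).integrableOn
  · refine Eventually.of_forall fun τ y hy => ?_
    have hy : (1 + x) / 2 < y := hy
    have h1 : 1 < y + 2 * τ ^ 2 := by nlinarith [sq_nonneg τ]
    simpa using (hasDerivAt_Y t m a h1).comp_add_const y (2 * τ ^ 2)

/-- A fixed proportion of the integral `H t m a x` comes from `τ ≤ √x`, that is from arguments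
between `x` and `3x`. -/
lemma H_concentration (m a : ℕ) : ∃ C : ℝ, 0 < C ∧ ∀ x t : ℝ, 1 < x → 0 < t →
    H t m a x ≤ C * ∫ τ in Set.Ioc 0 (√x), Y t m a (x + 2 * τ ^ 2) := by
  obtain ⟨C, hC, h⟩ := Y_decay m a
  refine ⟨1 + C * (2 * (3 / 2) ^ (3 / 4 : ℝ)), by positivity, fun x t hx ht => ?_⟩
  have hx0 : 0 < x := by linarith
  have hsx : 0 < √x := Real.sqrt_pos.2 hx0
  have hi := Y_integrable m a ht hx
  have h3 : 1 < 3 * x := by linarith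
  have hY := Y_pos m a ht h3
  -- `Y` is antitone, so for `τ ≤ √x` the integrand is at least `Y (3x)`
  have n1 : √x * Y t m a (3 * x) ≤ ∫ τ in Set.Ioc 0 (√x), Y t m a (x + 2 * τ ^ 2) := by
    have : ∫ τ in Set.Ioc 0 (√x), Y t m a (3 * x) ≤
        ∫ τ in Set.Ioc 0 (√x), Y t m a (x + 2 * τ ^ 2) := by
      apply setIntegral_mono_on (by simp) hi.integrableOn measurableSet_Ioc
      intro τ hτ
      have h1 : τ ^ 2 ≤ x := by
        rw [← Real.sq_sqrt hx0.le]
        exact pow_le_pow_left₀ hτ.1.le hτ.2 2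
      exact Y_anti m a ht (by nlinarith [sq_nonneg τ]) (by linarith)
    simpa [hsx.le] using this
  -- for `τ ≥ √x` the decay of `Y` bounds the integrand by a multiple of `τ^{-3/2}`
  have n2 : ∫ τ in Set.Ioi (√x), Y t m a (x + 2 * τ ^ 2) ≤
      C * (2 * (3 / 2) ^ (3 / 4 : ℝ)) * (√x * Y t m a (3 * x)) := by
    have hint := integrableOn_Ioi_rpow_of_lt (a := (-3 / 2 : ℝ)) (by norm_num) hsx
    have e0 : ∫ τ in Set.Ioi (√x), C * ((3 * x / 2) ^ (3 / 4 : ℝ) * Y t m a (3 * x)) *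
        τ ^ (-3 / 2 : ℝ) = C * (2 * (3 / 2) ^ (3 / 4 : ℝ)) * (√x * Y t m a (3 * x)) := by
      rw [integral_const_mul, integral_Ioi_rpow_of_lt (by norm_num) hsx]
      have e1 : (3 * x / 2) ^ (3 / 4 : ℝ) = (3 / 2) ^ (3 / 4 : ℝ) * x ^ (3 / 4 : ℝ) := by
        rw [← Real.mul_rpow (by norm_num) hx0.le]; congr 1; ring
      have e2 : x ^ (3 / 4 : ℝ) * √x ^ (-3 / 2 + 1 : ℝ) = √x := by
        rw [Real.sqrt_eq_rpow, ← Real.rpow_mul hx0.le, ← Real.rpow_add hx0]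
        congr 1; norm_num
      rw [e1]
      calc _ = C * (2 * (3 / 2) ^ (3 / 4 : ℝ)) *
            ((x ^ (3 / 4 : ℝ) * √x ^ (-3 / 2 + 1 : ℝ)) * Y t m a (3 * x)) := by
            ring
        _ = _ := by rw [e2]
    rw [← e0]
    apply setIntegral_mono_on hi.integrableOn (hint.const_mul _) measurableSet_Ioi
    intro τ hτ
    have hτ : √x < τ := hτ
    have hτ0 : 0 < τ := hsx.trans hτ
    have h1 : x ≤ τ ^ 2 := by
      rw [← Real.sq_sqrt hx0.le]
      exact pow_le_pow_left₀ hsx.le hτ.le 2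
    refine (h (3 * x) _ t h3 (by linarith) ht).trans ?_
    have e1 : (3 * x / (x + 2 * τ ^ 2)) ^ (3 / 4 : ℝ) ≤
        (3 * x / 2) ^ (3 / 4 : ℝ) * τ ^ (-3 / 2 : ℝ) := by
      have : τ ^ (-3 / 2 : ℝ) = ((τ ^ 2)⁻¹) ^ (3 / 4 : ℝ) := by
        rw [← Real.rpow_natCast, ← Real.rpow_neg hτ0.le, ← Real.rpow_mul hτ0.le]
        congr 1; norm_num
      rw [this, ← Real.mul_rpow (by positivity) (by positivity)]
      apply Real.rpow_le_rpow (by positivity) _ (by norm_num)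
      rw [← div_eq_mul_inv, div_div]
      gcongr
      linarith
    calc _ ≤ C * ((3 * x / 2) ^ (3 / 4 : ℝ) * τ ^ (-3 / 2 : ℝ) * Y t m a (3 * x)) := by gcongr
      _ = _ := by ring
  have hsplit : H t m a x = (∫ τ in Set.Ioc 0 (√x), Y t m a (x + 2 * τ ^ 2)) +
      ∫ τ in Set.Ioi (√x), Y t m a (x + 2 * τ ^ 2) := by
    rw [H, ← setIntegral_union (Set.Ioc_disjoint_Ioi le_rfl) measurableSet_Ioi
      hi.integrableOn hi.integrableOn, Set.Ioc_union_Ioi_eq_Ioi hsx.le]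
  rw [hsplit, add_mul, one_mul]
  gcongr
  exact n2.trans (by gcongr)

lemma H_pos (m a : ℕ) {t x : ℝ} (ht : 0 < t) (hx : 1 < x) : 0 ≤ H t m a x := by
  refine setIntegral_nonneg measurableSet_Ioi fun τ _ => (Y_pos m a ht ?_).le
  nlinarith [sq_nonneg τ]

/-- The upper bound holds because `Ew` is antitone in its first argument. For the lower bound only
`τ ≤ √(cosh r)` is used, where `Ew` stays comparable to its value at `r`. -/
lemma H_ratio (m a k : ℕ) : ∃ c C : ℝ, 0 < c ∧ 0 < C ∧ ∀ r t : ℝ, 0 < r → 0 < t →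
    c * (Ew r t ^ k * H t m a (cosh r)) ≤ H t m (a + k) (cosh r) ∧
    H t m (a + k) (cosh r) ≤ C * (Ew r t ^ k * H t m a (cosh r)) := by
  obtain ⟨c, C, hc, hC, h⟩ := X_ratio m a k
  obtain ⟨D, hD, hcon⟩ := H_concentration m a
  refine ⟨c * 3⁻¹ ^ k / D, C * 4 ^ k, by positivity, by positivity, fun r t hr ht => ?_⟩
  have hx : 1 < cosh r := Real.one_lt_cosh.2 hr.ne'
  have hE := Ew_pos hr ht
  have hi := Y_integrable m a ht hx
  have hik := Y_integrable m (a + k) ht hx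
  have hz : ∀ τ : ℝ, cosh r ≤ cosh r + 2 * τ ^ 2 := fun τ => by nlinarith [sq_nonneg τ]
  have hs : ∀ τ : ℝ, r ≤ arcosh (cosh r + 2 * τ ^ 2) := fun τ => by
    have := (arcosh_le_arcosh (by linarith) (by linarith [hz τ])).2 (hz τ)
    rwa [arcosh_cosh hr.le] at this
  constructor
  · have lower : c * 3⁻¹ ^ k * Ew r t ^ k *
        ∫ τ in Set.Ioc 0 (√(cosh r)), Y t m a (cosh r + 2 * τ ^ 2) ≤
        ∫ τ in Set.Ioc 0 (√(cosh r)), Y t m (a + k) (cosh r + 2 * τ ^ 2) := by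
      rw [← integral_const_mul]
      apply setIntegral_mono_on (hi.integrableOn.const_mul _) hik.integrableOn measurableSet_Ioc
      intro τ hτ
      have h1 : τ ^ 2 ≤ cosh r := by
        rw [← Real.sq_sqrt (cosh_pos r).le]
        exact pow_le_pow_left₀ hτ.1.le hτ.2 2
      set s := arcosh (cosh r + 2 * τ ^ 2) with hsdef
      have hrs : r ≤ s := hs τ
      have hcs : cosh s = cosh r + 2 * τ ^ 2 := cosh_arcosh (by linarith [hz τ])
      have hY := Y_pos m a ht (hx.trans_le (hz τ))
      refine le_trans ?_ (h s t (hr.trans_le hrs) ht).1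
      change _ ≤ c * (_ * Y t m a (cosh r + 2 * τ ^ 2))
      -- `cosh² (s/2) ≤ 3 cosh² (r/2)` because `cosh s ≤ 3 cosh r`
      have d1 : cosh (s / 2) ^ 2 ≤ 3 * cosh (r / 2) ^ 2 := by
        have a1 := Real.cosh_two_mul (s / 2)
        have a2 := Real.cosh_two_mul (r / 2)
        rw [Real.sinh_sq, mul_div_cancel₀ _ (two_ne_zero' ℝ)] at a1 a2
        linarith
      have d2 : 3⁻¹ * exp (-r) ≤ (cosh (s / 2))⁻¹ ^ 2 := by
        have := (inv_cosh_sq_bounds r hr).1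
        calc 3⁻¹ * exp (-r) ≤ 3⁻¹ * (cosh (r / 2))⁻¹ ^ 2 := by gcongr
          _ = (3 * cosh (r / 2) ^ 2)⁻¹ := by rw [mul_inv, inv_pow]
          _ ≤ (cosh (s / 2) ^ 2)⁻¹ := inv_anti₀ (by have := cosh_pos (s / 2); positivity) d1
          _ = _ := by rw [inv_pow]
      have d3 : 3⁻¹ * Ew r t ≤ (cosh (s / 2))⁻¹ ^ 2 * (1 + (1 + s) / t) := by
        unfold Ew
        rw [← mul_assoc]
        gcongr
      calc _ = c * ((3⁻¹ * Ew r t) ^ k * Y t m a (cosh r + 2 * τ ^ 2)) := by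
            rw [mul_pow]; ring
        _ ≤ _ := mul_le_mul_of_nonneg_left (mul_le_mul_of_nonneg_right
            (pow_le_pow_left₀ (by positivity) d3 k) hY.le) hc.le
    have mono : ∫ τ in Set.Ioc 0 (√(cosh r)), Y t m (a + k) (cosh r + 2 * τ ^ 2) ≤
        H t m (a + k) (cosh r) := by
      refine setIntegral_mono_set hik.integrableOn ?_ Set.Ioc_subset_Ioi_self.eventuallyLE
      exact Eventually.of_forall fun τ => (Y_pos m _ ht (hx.trans_le (hz τ))).le
    refine le_trans ?_ (lower.trans mono)
    calc _ ≤ c * 3⁻¹ ^ k / D * (Ew r t ^ k *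
          (D * ∫ τ in Set.Ioc 0 (√(cosh r)), Y t m a (cosh r + 2 * τ ^ 2))) := by
          gcongr
          exact hcon _ t hx ht
      _ = _ := by field_simp
  · unfold H
    rw [← integral_const_mul, ← integral_const_mul]
    apply setIntegral_mono_on hik.integrableOn ((hi.integrableOn.const_mul _).const_mul _)
      measurableSet_Ioi
    intro τ _
    set s := arcosh (cosh r + 2 * τ ^ 2) with hsdef
    have hrs : r ≤ s := hs τ
    have hs0 := hr.trans_le hrs
    have hY := Y_pos m a ht (hx.trans_le (hz τ))
    refine (h s t hs0 ht).2.trans ?_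
    change C * (_ * Y t m a (cosh r + 2 * τ ^ 2)) ≤ _
    have w1 : (cosh (s / 2))⁻¹ ^ 2 * (1 + (1 + s) / t) ≤ 4 * Ew s t := by
      have := (inv_cosh_sq_bounds s hs0).2
      unfold Ew
      rw [← mul_assoc]
      gcongr
    have w2 : (cosh (s / 2))⁻¹ ^ 2 * (1 + (1 + s) / t) ≤ 4 * Ew r t := by
      linarith [Ew_anti hr hrs ht]
    calc _ ≤ C * ((4 * Ew r t) ^ k * Y t m a (cosh r + 2 * τ ^ 2)) :=
          mul_le_mul_of_nonneg_left (mul_le_mul_of_nonneg_right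
            (pow_le_pow_left₀ (by positivity) w2 k) hY.le) hC.le
      _ = _ := by rw [mul_pow]; ring

/-- The half-integral `H` is the integral in the odd case, by `cosh s = cosh r + 2τ²`. -/
lemma integral_eq_H (t : ℝ) (m a : ℕ) {r : ℝ} (hr : 0 < r) :
    ∫ s in Set.Ioi r, sinh s / √(cosh s - cosh r) * V t (a + 1) 0 m (s / 2) =
      2 * √2 * H t m a (cosh r) := by
  set f : ℝ → ℝ := fun s => √((cosh s - cosh r) / 2) with hf
  have hpos : ∀ s ∈ Set.Ioi r, 0 < cosh s - cosh r := fun s hs => by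
    have hs : r < s := hs
    have := (Real.cosh_strictMonoOn (Set.mem_Ici.2 hr.le) (Set.mem_Ici.2 (hr.trans hs).le) hs)
    linarith
  have himg : f '' Set.Ioi r = Set.Ioi 0 := by
    apply Set.Subset.antisymm
    · rintro _ ⟨s, hs, rfl⟩
      have := hpos s hs
      exact Real.sqrt_pos.2 (by positivity)
    · intro τ hτ
      have hτ : 0 < τ := hτ
      have h1 : 1 < cosh r := Real.one_lt_cosh.2 hr.ne'
      have h2 : cosh r < cosh r + 2 * τ ^ 2 := by have := pow_pos hτ 2; linarith
      refine ⟨arcosh (cosh r + 2 * τ ^ 2), ?_, ?_⟩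
      · have := (arcosh_lt_arcosh (by linarith) (by linarith)).2 h2
        rwa [arcosh_cosh hr.le] at this
      · simp only [hf]
        rw [cosh_arcosh (by linarith), show (cosh r + 2 * τ ^ 2 - cosh r) / 2 = τ ^ 2 by ring,
          Real.sqrt_sq hτ.le]
  have hderiv : ∀ s ∈ Set.Ioi r, HasDerivWithinAt f
      (sinh s / 2 / (2 * √((cosh s - cosh r) / 2))) (Set.Ioi r) s := fun s hs => by
    have := hpos s hs
    exact ((((Real.hasDerivAt_cosh s).sub_const _).div_const 2).sqrt
      (by positivity)).hasDerivWithinAt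
  have hinj : Set.InjOn f (Set.Ioi r) := by
    intro s hs s' hs' he
    have p := hpos s hs
    have p' := hpos s' hs'
    have hs : r < s := hs
    have hs' : r < s' := hs'
    have := (Real.sqrt_inj (by positivity) (by positivity)).1 he
    have hc : cosh s = cosh s' := by linarith
    exact Real.cosh_strictMonoOn.injOn (Set.mem_Ici.2 (by linarith)) (Set.mem_Ici.2 (by linarith)) hc
  rw [H, ← himg, integral_image_eq_integral_abs_deriv_smul measurableSet_Ioi hderiv hinj,
    ← integral_const_mul]
  refine setIntegral_congr_fun measurableSet_Ioi fun s hs => ?_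
  have p := hpos s hs
  have hs : r < s := hs
  have hss : 0 < sinh s := Real.sinh_pos_iff.2 (by linarith)
  have e1 : cosh r + 2 * f s ^ 2 = cosh s := by
    simp only [hf]
    rw [Real.sq_sqrt (by positivity)]
    ring
  have e2 : √((cosh s - cosh r) / 2) = √(cosh s - cosh r) / √2 := Real.sqrt_div p.le 2
  have p2 : 0 < √(cosh s - cosh r) := Real.sqrt_pos.2 p
  rw [e1, Y_cosh t m a (by linarith), e2, abs_of_pos (by positivity), smul_eq_mul]
  have h2 : √2 * √2 = (2 : ℝ) := Real.mul_self_sqrt (by norm_num)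
  field_simp
  rw [show (√2 : ℝ) ^ 2 = 2 from Real.sq_sqrt (by norm_num)]
  ring

/-- Passage from a family of functions linked by `-𝓡` to the two-sided bound. -/
lemma conclude {h : ℝ → ℝ → ℝ} {q : ℝ → ℕ → ℝ → ℝ} (k : ℕ)
    (hh : ∀ r t, 0 < r → 0 < t → h t r = q t 0 r)
    (hq : ∀ t, 0 < t → ∀ n r, 0 < r → HasDerivAt (q t n) (-(sinh r * q t (n + 1) r)) r)
    (hpos : ∀ r t, 0 < r → 0 < t → 0 ≤ q t 0 r)
    (hb : ∃ c C : ℝ, 0 < c ∧ 0 < C ∧ ∀ r t : ℝ, 0 < r → 0 < t →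
      c * (Ew r t ^ k * q t 0 r) ≤ q t k r ∧ q t k r ≤ C * (Ew r t ^ k * q t 0 r)) :
    ∃ C : ℝ, 1 ≤ C ∧ ∀ r t : ℝ, 0 < r → 0 < t →
      C⁻¹ * (exp (-(k : ℝ) * r) * (1 + (1 + r) / t) ^ k * h t r) ≤
          (-1 : ℝ) ^ k * Rop^[k] (h t) r ∧
        (-1 : ℝ) ^ k * Rop^[k] (h t) r ≤
          C * (exp (-(k : ℝ) * r) * (1 + (1 + r) / t) ^ k * h t r) := by
  obtain ⟨c, C, hc, hC, hb⟩ := hb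
  refine ⟨max 1 (max c⁻¹ C), le_max_left _ _, fun r t hr ht => ?_⟩
  have e : exp (-(k : ℝ) * r) * (1 + (1 + r) / t) ^ k = Ew r t ^ k := by
    rw [Ew, mul_pow, ← exp_nat_mul]; congr 2; ring
  rw [Rop_iterate (hq t ht) (fun r hr => hh r t hr ht) k hr, e, hh r t hr ht]
  obtain ⟨l, u⟩ := hb r t hr ht
  have := hpos r t hr ht
  have := Ew_pos hr ht
  constructor
  · refine le_trans ?_ l
    gcongr
    exact inv_le_of_inv_le₀ hc ((le_max_left _ _).trans (le_max_right _ _))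
  · refine u.trans ?_
    gcongr
    exact (le_max_right _ _).trans (le_max_right _ _)

/-! ### The two-sided bound -/

theorem iterated_R_two_sided_bound (μ ν : ℕ) (hμ : Even μ) (hν : 1 ≤ ν) (k : ℕ) :
    ∃ C : ℝ, 1 ≤ C ∧ ∀ r t : ℝ, 0 < r → 0 < t →
      C⁻¹ * (Real.exp (-(k : ℝ) * r) * (1 + (1 + r) / t) ^ k * heat μ ν t r) ≤
          (-1 : ℝ) ^ k * Rop^[k] (heat μ ν t) r ∧
        (-1 : ℝ) ^ k * Rop^[k] (heat μ ν t) r ≤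
          C * (Real.exp (-(k : ℝ) * r) * (1 + (1 + r) / t) ^ k * heat μ ν t r) := by
  set m := μ / 2 with hm
  have hcc : 0 < cc μ ν 0 := by have := Real.pi_pos; unfold cc; positivity
  by_cases hev : Even ν
  · obtain ⟨a, ha⟩ : ∃ a, ν / 2 = a + 1 := ⟨ν / 2 - 1, by obtain ⟨b, rfl⟩ := hev; omega⟩
    set K : ℝ → ℝ := fun t =>
      cc μ ν 0 * t ^ (-(1 : ℝ) / 2) * Real.exp (-(Qc μ ν) ^ 2 * t / 4) * 2⁻¹ ^ m with hKdef
    have hK : ∀ t, 0 < t → 0 < K t := fun t ht => by simp only [hKdef]; positivity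
    refine conclude (q := fun t n r => K t * V t (a + n + 1) 0 m (r / 2)) k ?_ ?_ ?_ ?_
    · intro r t hr ht
      simp only [heat, hev, if_true, ha, ← hm, D1_iterate t m (a + 1) hr, hKdef, add_zero]
      ring
    · intro t ht n r hr
      have h1 : 1 < cosh r := Real.one_lt_cosh.2 hr.ne'
      have h := ((hasDerivAt_Y t m (a + n) h1).comp r (Real.hasDerivAt_cosh r)).const_mul (K t)
      have h2 : (fun r => K t * V t (a + n + 1) 0 m (r / 2)) =ᶠ[𝓝 r]
          fun r => K t * (Y t m (a + n) ∘ cosh) r := by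
        filter_upwards [Ioi_mem_nhds hr] with s hs
        rw [Function.comp_apply, Y_cosh t m (a + n) (le_of_lt hs)]
      refine (h.congr_of_eventuallyEq h2).congr_deriv ?_
      rw [Y_cosh t m _ hr.le]
      ring_nf
    · intro r t hr ht
      exact (mul_pos (hK t ht) (X_pos m a hr ht)).le
    · obtain ⟨c, C, hc, hC, h⟩ := X_ratio m a k
      refine ⟨c, C * 4 ^ k, hc, by positivity, fun r t hr ht => ?_⟩
      obtain ⟨l, u⟩ := h r t hr ht
      have hKt := hK t ht
      have hX := X_pos m a hr ht
      obtain ⟨b1, b2⟩ := inv_cosh_sq_bounds r hr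
      have hE := Ew_pos hr ht
      have w1 : Ew r t ≤ (cosh (r / 2))⁻¹ ^ 2 * (1 + (1 + r) / t) := by
        unfold Ew; gcongr
      have w2 : (cosh (r / 2))⁻¹ ^ 2 * (1 + (1 + r) / t) ≤ 4 * Ew r t := by
        unfold Ew; rw [← mul_assoc]; gcongr
      simp only [add_zero]
      constructor
      · calc _ = K t * (c * (Ew r t ^ k * V t (a + 1) 0 m (r / 2))) := by ring
          _ ≤ K t * (c * (((cosh (r / 2))⁻¹ ^ 2 * (1 + (1 + r) / t)) ^ k *
              V t (a + 1) 0 m (r / 2))) := by gcongr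
          _ ≤ _ := by gcongr
      · calc _ ≤ K t * (C * (((cosh (r / 2))⁻¹ ^ 2 * (1 + (1 + r) / t)) ^ k *
              V t (a + 1) 0 m (r / 2))) := by gcongr
          _ ≤ K t * (C * ((4 * Ew r t) ^ k * V t (a + 1) 0 m (r / 2))) := by gcongr
          _ = _ := by rw [mul_pow]; ring
  · obtain ⟨a, ha⟩ : ∃ a, (ν + 1) / 2 = a + 1 := ⟨(ν + 1) / 2 - 1, by omega⟩
    set K : ℝ → ℝ := fun t =>
      cc μ ν 0 * Real.pi ^ (-(1 : ℝ) / 2) * t ^ (-(1 : ℝ) / 2) *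
        Real.exp (-(Qc μ ν) ^ 2 * t / 4) * (2⁻¹ ^ m * (2 * √2)) with hKdef
    have hK : ∀ t, 0 < t → 0 < K t := fun t ht => by
      have := Real.pi_pos
      simp only [hKdef]; positivity
    refine conclude (q := fun t n r => K t * H t m (a + n) (cosh r)) k ?_ ?_ ?_ ?_
    · intro r t hr ht
      have e : ∫ s in Set.Ioi r, (sinh s / √(cosh s - cosh r)) *
          (D1^[(ν + 1) / 2] (D2^[μ / 2] (gauss t))) s =
          2⁻¹ ^ m * (2 * √2 * H t m a (cosh r)) := by
        rw [← integral_eq_H t m a hr, ← integral_const_mul]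
        refine setIntegral_congr_fun measurableSet_Ioi fun s hs => ?_
        have hs : r < s := hs
        rw [ha, ← hm, D1_iterate t m (a + 1) (hr.trans hs)]
        ring
      simp only [heat, hev, if_false, e, hKdef, add_zero]
      ring
    · intro t ht n r hr
      have h1 : 1 < cosh r := Real.one_lt_cosh.2 hr.ne'
      have h := ((hasDerivAt_H m (a + n) ht h1).comp r (Real.hasDerivAt_cosh r)).const_mul (K t)
      refine h.congr_deriv ?_
      rw [add_assoc]
      ring
    · intro r t hr ht
      exact mul_nonneg (hK t ht).le (H_pos m _ ht (Real.one_lt_cosh.2 hr.ne'))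
    · obtain ⟨c, C, hc, hC, h⟩ := H_ratio m a k
      refine ⟨c, C, hc, hC, fun r t hr ht => ?_⟩
      obtain ⟨l, u⟩ := h r t hr ht
      have hKt := hK t ht
      simp only [add_zero]
      constructor
      · calc _ = K t * (c * (Ew r t ^ k * H t m a (cosh r))) := by ring
          _ ≤ _ := by gcongr
      · calc _ ≤ K t * (C * (Ew r t ^ k * H t m a (cosh r))) := by gcongr
          _ = _ := by ring

end DR
end
end

section
/- Let k ≥ 1 be an integer. There exist non-negative real numbers b_{ℓ,j} and d_{ℓ,j} (for j = 1,…,k and ℓ = 0,1,…,[k/2]+1) such that for every smooth function g : (0,∞) → ℝ and every r > 0: (i) if k is odd, then g^{(k)}(r) = Σ_{j=1}^{(k+1)/2} (Σ_{1 ≤ 2ℓ+1 ≤ j} d_{ℓ,j} p_{2ℓ+1, j-2ℓ-1}(r)) (𝓡^j g)(r) + Σ_{j=(k+3)/2}^{k} (Σ_{0 ≤ 2ℓ ≤ k-j} b_{ℓ,j} p_{2j-k+2ℓ, k-j-2ℓ}(r)) (𝓡^j g)(r); (ii) if k is even, then g^{(k)}(r) = Σ_{j=1}^{k/2} (Σ_{0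 ≤ 2ℓ ≤ j} d_{ℓ,j} p_{2ℓ, j-2ℓ}(r)) (𝓡^j g)(r) + Σ_{j=k/2+1}^{k} (Σ_{0 ≤ 2ℓ ≤ k-j} b_{ℓ,j} p_{2j-k+2ℓ, k-j-2ℓ}(r)) (𝓡^j g)(r). (Empty sums are zero.) -/
/-!
Since `g' = sinh · 𝓡 g`, differentiating `k` times gives `g^{(k)} = Σ_j P_{k,j} 𝓡^j g` with
`P_{k+1,j} = P_{k,j}' + sinh · P_{k,j-1}`. From `p_{a,b}' = a p_{a-1,b+1} + b p_{a+1,b-1}` it follows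
that `P_{k,j}` is a combination of the `p_{m,j-m}` whose coefficients `coef k j m` are natural numbers
obeying an explicit recursion (`hasDerivAt_iterate`, `sum_step`). The recursion forces
(`coef_support`)

* `m ≤ j`, because `P_{k,j}` is homogeneous of degree `j` in `(sinh, cosh)`;
* `m ≡ k mod 2`, because each step flips the parity in `sinh`;
* `2 j - k ≤ m`, because differentiation lowers the `sinh`-exponent by at most one, while
  multiplication by `sinh` raises both `j` and the exponent by one;
* `1 ≤ j` as soon as `1 ≤ k`.

When `2 j ≤ k + 1` the lower bound is implied by the parity, so `m` runs over all numbers `≤ j` of the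
parity of `k`, which gives the `d`-sums. Otherwise `m = 2 j - k + 2 ℓ` with `2 ℓ ≤ k - j`, which gives
the `b`-sums.
-/

open Real MeasureTheory Filter Topology

noncomputable section

namespace DR

/-! ### The coefficients and their support -/

/-- The coefficient of `p_{m,j-m} · 𝓡^j g` in the expansion of `g^{(k)}`. The summands of the
recursion come from differentiating the powers of `sinh`, the powers of `cosh`, and the iterates of `𝓡`
applied to `g`. -/
def coef : ℕ → ℕ → ℕ → ℕ
  | 0, 0, 0 => 1
  | 0, _, _ => 0
  | k + 1, j, 0 => coef k j 1
  | k + 1, 0, m + 1 => (m + 2) * coef k 0 (m + 2) + (0 - m) * coef k 0 m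
  | k + 1, j + 1, m + 1 =>
    (m + 2) * coef k (j + 1) (m + 2) + (j + 1 - m) * coef k (j + 1) m + coef k j m

theorem coef_support (k : ℕ) : ∀ j m : ℕ, coef k j m ≠ 0 →
    m ≤ j ∧ 2 * j ≤ k + m ∧ m % 2 = k % 2 ∧ (k = 0 ∨ 1 ≤ j) := by
  induction k with
  | zero =>
    intro j m h
    rcases j with _ | j <;> rcases m with _ | m <;> simp_all [coef]
  | succ k ih =>
    intro j m h
    rcases m with _ | m
    · rw [coef] at h
      have := ih _ _ h
      omega
    · rcases j with _ | j
      · exfalso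
        apply h
        rw [coef]
        have h1 : coef k 0 (m + 2) = 0 := by
          by_contra h'
          have := ih _ _ h'
          omega
        rw [h1]
        simp
      · rw [coef] at h
        by_cases h1 : coef k (j + 1) (m + 2) = 0
        · by_cases h2 : coef k j m = 0
          · have h3 : coef k (j + 1) m ≠ 0 := by
              intro h3
              simp [h1, h2, h3] at h
            have h4 : j + 1 - m ≠ 0 := by
              intro h4
              simp [h1, h2, h4] at h
            have := ih _ _ h3
            omega
          · have := ih _ _ h2
            omega
        · have := ih _ _ h1
          omega

theorem coef_eq_zero {k j m : ℕ}
    (h : ¬ (m ≤ j ∧ 2 * j ≤ k + m ∧ m % 2 = k % 2 ∧ (k = 0 ∨ 1 ≤ j))) : coef k j m = 0 := by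
  by_contra h'
  exact h (coef_support k j m h')

/-- The part of `coef (k + 1) j m` produced by differentiating `sinh`. -/
def coefSinh (k j m : ℕ) : ℕ := (m + 1) * coef k j (m + 1)

/-- The part of `coef (k + 1) j m` produced by differentiating `cosh`. -/
def coefCosh (k j : ℕ) : ℕ → ℕ
  | 0 => 0
  | m + 1 => (j - m) * coef k j m

/-- The part of `coef (k + 1) j m` produced by differentiating `𝓡^{j-1} g`. -/
def coefShift (k : ℕ) : ℕ → ℕ → ℕ
  | j + 1, m + 1 => coef k j m
  | _, _ => 0

theorem coef_succ (k j m : ℕ) :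
    coef (k + 1) j m = coefSinh k j m + coefCosh k j m + coefShift k j m := by
  rcases m with _ | m <;> rcases j with _ | j <;> simp [coef, coefSinh, coefCosh, coefShift]

/-- Regrouping, by powers of `s = sinh r` and `c = cosh r`, of the derivative of the level `k`
expansion into the level `k + 1` expansion; `G j` stands for `𝓡^j g r`. Any index box larger than
the support of the coefficients may be used. -/
theorem sum_step (k M : ℕ) (hM : k + 1 ≤ M) (s c : ℝ) (G : ℕ → ℝ) :
    ∑ j ∈ Finset.range (M + 1), ∑ m ∈ Finset.range (M + 1), (coef k j m : ℝ) *
      (((m * s ^ (m - 1) * c) * c ^ (j - m) +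
        s ^ m * (((j - m : ℕ) : ℝ) * c ^ (j - m - 1) * s)) * G j +
        s ^ m * c ^ (j - m) * (s * G (j + 1))) =
    ∑ j ∈ Finset.range (M + 1), ∑ m ∈ Finset.range (M + 1),
      (coef (k + 1) j m : ℝ) * (s ^ m * c ^ (j - m) * G j) := by
  have hsinh : ∀ j, ∑ m ∈ Finset.range (M + 1), (coef k j m : ℝ) *
        ((m * s ^ (m - 1) * c) * c ^ (j - m) * G j) =
      ∑ m ∈ Finset.range (M + 1),
        (coefSinh k j m : ℝ) * (s ^ m * c ^ (j - m) * G j) := by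
    intro j
    rw [Finset.sum_range_succ', Finset.sum_range_succ _ M]
    have h0 : coef k j (M + 1) = 0 := coef_eq_zero (by omega)
    simp only [h0, coefSinh, Nat.cast_zero, mul_zero, zero_mul, add_zero]
    refine Finset.sum_congr rfl fun m _ => ?_
    by_cases hm : m + 1 ≤ j
    · rw [show j - m = (j - (m + 1)) + 1 by omega]
      push_cast
      ring
    · have h1 : coef k j (m + 1) = 0 := coef_eq_zero (by omega)
      simp [h1]
  have hcosh : ∀ j, ∑ m ∈ Finset.range (M + 1), (coef k j m : ℝ) *
        (s ^ m * (((j - m : ℕ) : ℝ) * c ^ (j - m - 1) * s) * G j) =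
      ∑ m ∈ Finset.range (M + 1), (coefCosh k j m : ℝ) * (s ^ m * c ^ (j - m) * G j) := by
    intro j
    rw [Finset.sum_range_succ, Finset.sum_range_succ' _ M]
    have h0 : coef k j M = 0 := coef_eq_zero (by omega)
    simp only [h0, coefCosh, Nat.cast_zero, zero_mul, add_zero]
    refine Finset.sum_congr rfl fun m _ => ?_
    rw [Nat.sub_sub]
    push_cast
    ring
  have hshift : ∑ j ∈ Finset.range (M + 1), ∑ m ∈ Finset.range (M + 1), (coef k j m : ℝ) *
        (s ^ m * c ^ (j - m) * (s * G (j + 1))) =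
      ∑ j ∈ Finset.range (M + 1), ∑ m ∈ Finset.range (M + 1),
        (coefShift k j m : ℝ) * (s ^ m * c ^ (j - m) * G j) := by
    have h0 : ∀ m, coef k M m = 0 := fun m => coef_eq_zero (by omega)
    rw [Finset.sum_range_succ]
    simp only [h0, Nat.cast_zero, zero_mul, Finset.sum_const_zero, add_zero]
    rw [Finset.sum_range_succ' _ M]
    simp only [coefShift, Nat.cast_zero, zero_mul, Finset.sum_const_zero, add_zero]
    refine Finset.sum_congr rfl fun j _ => ?_
    rw [Finset.sum_range_succ, Finset.sum_range_succ' _ M]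
    have h1 : coef k j M = 0 := coef_eq_zero (by omega)
    simp only [h1, Nat.cast_zero, zero_mul, add_zero]
    refine Finset.sum_congr rfl fun m _ => ?_
    rw [Nat.add_sub_add_right]
    ring
  simp only [coef_succ k, Nat.cast_add, add_mul, mul_add, Finset.sum_add_distrib]
  simp only [hsinh, hcosh, hshift]

/-! ### Expansion of the iterated derivative -/

theorem contDiffOn_Rop_iterate {g : ℝ → ℝ} (hg : ContDiffOn ℝ (⊤ : ℕ∞) g (Set.Ioi 0)) (j : ℕ) :
    ContDiffOn ℝ (⊤ : ℕ∞) (Rop^[j] g) (Set.Ioi 0) := by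
  induction j with
  | zero => exact hg
  | succ j ih =>
    rw [Function.iterate_succ_apply']
    refine ContDiffOn.mul (contDiffOn_const.div Real.contDiff_sinh.contDiffOn fun x hx => ?_) ?_
    · exact (Real.sinh_pos_iff.2 hx).ne'
    · exact ih.deriv_of_isOpen isOpen_Ioi (by simp)

theorem hasDerivAt_Rop_iterate {g : ℝ → ℝ} (hg : ContDiffOn ℝ (⊤ : ℕ∞) g (Set.Ioi 0)) (j : ℕ)
    {r : ℝ} (hr : 0 < r) :
    HasDerivAt (Rop^[j] g) (Real.sinh r * Rop^[j + 1] g r) r := by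
  have h : DifferentiableAt ℝ (Rop^[j] g) r :=
    ((contDiffOn_Rop_iterate hg j).differentiableOn (by simp)).differentiableAt
      (isOpen_Ioi.mem_nhds hr)
  have hs : Real.sinh r ≠ 0 := (Real.sinh_pos_iff.2 hr).ne'
  have he : Real.sinh r * Rop^[j + 1] g r = deriv (Rop^[j] g) r := by
    rw [Function.iterate_succ_apply', Rop]
    field_simp
  rw [he]
  exact h.hasDerivAt

theorem hasDerivAt_iterate {g : ℝ → ℝ} (hg : ContDiffOn ℝ (⊤ : ℕ∞) g (Set.Ioi 0)) (k j m : ℕ)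
    {r : ℝ} (hr : 0 < r) :
    HasDerivAt (fun x => (coef k j m : ℝ) * (pab m (j - m) x * Rop^[j] g x))
      ((coef k j m : ℝ) *
      (((m * Real.sinh r ^ (m - 1) * Real.cosh r) * Real.cosh r ^ (j - m) +
        Real.sinh r ^ m * (((j - m : ℕ) : ℝ) * Real.cosh r ^ (j - m - 1) * Real.sinh r)) *
          Rop^[j] g r +
        Real.sinh r ^ m * Real.cosh r ^ (j - m) * (Real.sinh r * Rop^[j + 1] g r))) r :=
  ((((Real.hasDerivAt_sinh r).pow m).mul ((Real.hasDerivAt_cosh r).pow (j - m))).mul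
    (hasDerivAt_Rop_iterate hg j hr)).const_mul _

theorem deriv_iterate_eq {g : ℝ → ℝ} (hg : ContDiffOn ℝ (⊤ : ℕ∞) g (Set.Ioi 0)) (k : ℕ) :
    ∀ M, k ≤ M → ∀ r : ℝ, 0 < r → deriv^[k] g r =
      ∑ j ∈ Finset.range (M + 1), ∑ m ∈ Finset.range (M + 1),
        (coef k j m : ℝ) * (pab m (j - m) r * Rop^[j] g r) := by
  induction k with
  | zero =>
    intro M _ r _
    rw [Finset.sum_eq_single 0, Finset.sum_eq_single 0]
    · simp [coef, pab]
    · intro m _ hm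
      rw [coef_eq_zero (by omega)]
      simp
    · simp
    · intro j _ hj
      refine Finset.sum_eq_zero fun m _ => ?_
      rw [coef_eq_zero (by omega)]
      simp
    · simp
  | succ k ih =>
    intro M hM r hr
    rw [Function.iterate_succ_apply']
    have he : deriv^[k] g =ᶠ[𝓝 r] fun x => ∑ j ∈ Finset.range (M + 1),
        ∑ m ∈ Finset.range (M + 1), (coef k j m : ℝ) * (pab m (j - m) x * Rop^[j] g x) := by
      filter_upwards [isOpen_Ioi.mem_nhds hr] with x hx
      exact ih M (by omega) x hx
    rw [he.deriv_eq, (HasDerivAt.fun_sum fun j _ => HasDerivAt.fun_sum fun m _ =>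
      hasDerivAt_iterate hg k j m hr).deriv]
    exact sum_step k M hM _ _ fun j => Rop^[j] g r

/-! ### Reindexing the sums -/

/-- Reindexing of an inner sum: if `e` parametrizes by `ℓ ∈ S` all exponents that can carry a
nonzero coefficient, then the sum over all exponents is the sum over `S`. -/
theorem inner_sum (k j : ℕ) (r x : ℝ) (S : Finset ℕ) (e : ℕ → ℕ) (he : Function.Injective e)
    (h1 : ∀ ℓ ∈ S, e ℓ < k + 1)
    (h2 : ∀ m, m ≤ j → 2 * j ≤ k + m → m % 2 = k % 2 → ∃ ℓ ∈ S, e ℓ = m) :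
    ∑ m ∈ Finset.range (k + 1), (coef k j m : ℝ) * (pab m (j - m) r * x) =
      (∑ ℓ ∈ S, (coef k j (e ℓ) : ℝ) * pab (e ℓ) (j - e ℓ) r) * x := by
  rw [Finset.sum_mul]
  symm
  refine Finset.sum_of_injOn e he.injOn ?_ ?_ ?_
  · intro ℓ hℓ
    simpa using h1 ℓ hℓ
  · intro m _ hm
    rw [coef_eq_zero]
    · simp
    · rintro ⟨ha, hb, hc, -⟩
      obtain ⟨ℓ, hℓ, rfl⟩ := h2 m ha hb hc
      exact hm ⟨ℓ, hℓ, rfl⟩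
  · intro ℓ _
    ring

/-- Splitting of the outer sum at `A`; the `j = 0` term vanishes. -/
theorem outer_sum (k A : ℕ) (hA : A ≤ k) (F : ℕ → ℝ) (h0 : F 0 = 0) :
    ∑ j ∈ Finset.range (k + 1), F j =
      ∑ j ∈ Finset.Icc 1 A, F j + ∑ j ∈ Finset.Icc (A + 1) k, F j := by
  rw [← Finset.sum_union]
  · symm
    refine Finset.sum_subset ?_ ?_
    · intro j hj
      simp only [Finset.mem_union, Finset.mem_Icc, Finset.mem_range] at *
      omega
    · intro j hj hj'
      simp only [Finset.mem_union, Finset.mem_Icc, Finset.mem_range] at *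
      obtain rfl : j = 0 := by omega
      exact h0
  · rw [Finset.disjoint_left]
    intro j hj hj'
    simp only [Finset.mem_Icc] at *
    omega

theorem radial_derivative_expansion (k : ℕ) (hk : 1 ≤ k) :
    ∃ b d : ℕ → ℕ → ℝ,
      (∀ ℓ j, 0 ≤ b ℓ j) ∧ (∀ ℓ j, 0 ≤ d ℓ j) ∧
      ∀ g : ℝ → ℝ, ContDiffOn ℝ (⊤ : ℕ∞) g (Set.Ioi 0) → ∀ r : ℝ, 0 < r →
        (Odd k →
          deriv^[k] g r =
            (∑ j ∈ Finset.Icc 1 ((k + 1) / 2),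
              (∑ ℓ ∈ (Finset.range (k + 2)).filter (fun ℓ => 2 * ℓ + 1 ≤ j),
                d ℓ j * pab (2 * ℓ + 1) (j - 2 * ℓ - 1) r) * Rop^[j] g r) +
            ∑ j ∈ Finset.Icc ((k + 3) / 2) k,
              (∑ ℓ ∈ (Finset.range (k + 2)).filter (fun ℓ => 2 * ℓ ≤ k - j),
                b ℓ j * pab (2 * j - k + 2 * ℓ) (k - j - 2 * ℓ) r) * Rop^[j] g r) ∧
        (Even k →
          deriv^[k] g r =
            (∑ j ∈ Finset.Icc 1 (k / 2),
              (∑ ℓ ∈ (Finset.range (k + 2)).filter (fun ℓ => 2 * ℓ ≤ j),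
                d ℓ j * pab (2 * ℓ) (j - 2 * ℓ) r) * Rop^[j] g r) +
            ∑ j ∈ Finset.Icc (k / 2 + 1) k,
              (∑ ℓ ∈ (Finset.range (k + 2)).filter (fun ℓ => 2 * ℓ ≤ k - j),
                b ℓ j * pab (2 * j - k + 2 * ℓ) (k - j - 2 * ℓ) r) * Rop^[j] g r) := by
  refine ⟨fun ℓ j => coef k j (2 * j - k + 2 * ℓ),
    fun ℓ j => if Odd k then coef k j (2 * ℓ + 1) else coef k j (2 * ℓ),
    fun ℓ j => Nat.cast_nonneg _, fun ℓ j => ?_, fun g hg r hr => ?_⟩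
  · dsimp only
    split_ifs <;> exact Nat.cast_nonneg _
  have hzero : ∑ m ∈ Finset.range (k + 1), (coef k 0 m : ℝ) * (pab m (0 - m) r * Rop^[0] g r) = 0 :=
    Finset.sum_eq_zero fun m _ => by rw [coef_eq_zero (by omega)]; simp
  -- The `b`-part is the same for both parities.
  have hb : ∀ j, k < 2 * j → j ≤ k →
      ∑ m ∈ Finset.range (k + 1), (coef k j m : ℝ) * (pab m (j - m) r * Rop^[j] g r) =
        (∑ ℓ ∈ (Finset.range (k + 2)).filter (fun ℓ => 2 * ℓ ≤ k - j),
          (coef k j (2 * j - k + 2 * ℓ) : ℝ) * pab (2 * j - k + 2 * ℓ) (k - j - 2 * ℓ) r) *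
            Rop^[j] g r := by
    intro j hj hjk
    rw [inner_sum k j r _ ((Finset.range (k + 2)).filter (fun ℓ => 2 * ℓ ≤ k - j))
      (fun ℓ => 2 * j - k + 2 * ℓ) (fun a b h => by dsimp only at h; omega)]
    · congr 1
      refine Finset.sum_congr rfl fun ℓ hℓ => ?_
      rw [show j - (2 * j - k + 2 * ℓ) = k - j - 2 * ℓ by omega]
    · intro ℓ hℓ
      simp only [Finset.mem_filter, Finset.mem_range] at hℓ
      omega
    · intro m h1 h2 h3
      refine ⟨(m - (2 * j - k)) / 2, ?_, by omega⟩
      simp only [Finset.mem_filter, Finset.mem_range]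
      omega
  rw [deriv_iterate_eq hg k k le_rfl r hr]
  constructor
  · intro hodd
    have hodd' : k % 2 = 1 := Nat.odd_iff.1 hodd
    rw [outer_sum k ((k + 1) / 2) (by omega) _ hzero,
      show (k + 1) / 2 + 1 = (k + 3) / 2 by omega]
    congr 1
    · refine Finset.sum_congr rfl fun j hj => ?_
      rw [Finset.mem_Icc] at hj
      rw [inner_sum k j r _ ((Finset.range (k + 2)).filter (fun ℓ => 2 * ℓ + 1 ≤ j))
        (fun ℓ => 2 * ℓ + 1) (fun a b h => by dsimp only at h; omega)]
      · simp only [if_pos hodd, Nat.sub_sub]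
      · intro ℓ hℓ
        simp only [Finset.mem_filter, Finset.mem_range] at hℓ
        omega
      · intro m h1 h2 h3
        refine ⟨m / 2, ?_, by omega⟩
        simp only [Finset.mem_filter, Finset.mem_range]
        omega
    · refine Finset.sum_congr rfl fun j hj => ?_
      rw [Finset.mem_Icc] at hj
      exact hb j (by omega) hj.2
  · intro heven
    have heven' : k % 2 = 0 := Nat.even_iff.1 heven
    rw [outer_sum k (k / 2) (by omega) _ hzero]
    congr 1
    · refine Finset.sum_congr rfl fun j hj => ?_
      rw [Finset.mem_Icc] at hj
      rw [inner_sum k j r _ ((Finset.range (k + 2)).filter (fun ℓ => 2 * ℓ ≤ j))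
        (fun ℓ => 2 * ℓ) (fun a b h => by dsimp only at h; omega)]
      · simp only [if_neg (Nat.not_odd_iff_even.2 heven)]
      · intro ℓ hℓ
        simp only [Finset.mem_filter, Finset.mem_range] at hℓ
        omega
      · intro m h1 h2 h3
        refine ⟨m / 2, ?_, by omega⟩
        simp only [Finset.mem_filter, Finset.mem_range]
        omega
    · refine Finset.sum_congr rfl fun j hj => ?_
      rw [Finset.mem_Icc] at hj
      exact hb j (by omega) hj.2
end DR
end
end

section
/- Fix an even natural number μ, an odd natural number ν, and t > 0. For k ∈ ℕ define g_k(s) = (-(1/sinh s) d/ds)^{(ν+1)/2 + k} (-(1/sinh(s/2)) d/ds)^{μ/2} e^{-s²/(4t)} and f_k(r) = ∫_r^∞ (sinh s / √(cosh s − cosh r)) g_k(s) ds for r > 0. Then for every k ∈ ℕ and every r > 0, −(1/sinh r) f_k'(r) = f_{k+1}(r). -/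
/-!
Substituting `u = cosh s - cosh ρ` removes the dependence on `ρ` from both the domain and the
singular factor: with `G = g ∘ arcosh`,
`∫_ρ^∞ sinh s / √(cosh s - cosh ρ) g(s) ds = ∫_0^∞ u^{-1/2} G(cosh ρ + u) du`.
Since `G'(x) = g'(s) / sinh s` at `x = cosh s`, that is `G' = -(D1 g) ∘ arcosh`, differentiating
under the integral sign and applying the chain rule to `ρ ↦ cosh ρ` gives
`-sinh ρ ∫_0^∞ u^{-1/2} (D1 g)(arcosh (cosh ρ + u)) du`; undoing the substitution yields the claim.

Differentiation under the integral needs `G` and `G'` to be `O(1/x)` on every `[b, ∞)` with `b > 1`,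
since `u^{-1/2} (1 + u)^{-1}` is integrable on `(0, ∞)`. This follows from a structural description
of `g`: on `(0, ∞)` each function obtained from the Gaussian by applying `D1` and `D2` is the
Gaussian times an element of the algebra `Coef` generated by constants, `s`, `sinh (c s)`,
`cosh (c s)` and `1 / sinh (c s)` with `c > 0`. That algebra is closed under differentiation, and its
elements grow at most exponentially on each `[a, ∞)` with `a > 0`.
-/

open Real MeasureTheory Filter Topology

noncomputable section

namespace DR

/-! ### Coefficients of the Gaussian -/

/-- The algebra of functions generated by the constants, the identity, and `sinh (c s)`,
`cosh (c s)`, `(sinh (c s))⁻¹` for `c > 0`. Its elements are only ever considered on `(0, ∞)`. -/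
inductive Coef : (ℝ → ℝ) → Prop
  | const (c : ℝ) : Coef (fun _ => c)
  | var : Coef (fun s => s)
  | sinh (c : ℝ) (hc : 0 < c) : Coef (fun s => Real.sinh (c * s))
  | cosh (c : ℝ) (hc : 0 < c) : Coef (fun s => Real.cosh (c * s))
  | invSinh (c : ℝ) (hc : 0 < c) : Coef (fun s => (Real.sinh (c * s))⁻¹)
  | add {f g : ℝ → ℝ} (hf : Coef f) (hg : Coef g) : Coef (fun s => f s + g s)
  | mul {f g : ℝ → ℝ} (hf : Coef f) (hg : Coef g) : Coef (fun s => f s * g s)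

lemma Coef.exists_deriv {h : ℝ → ℝ} (hh : Coef h) :
    ∃ h', Coef h' ∧ ∀ s, 0 < s → HasDerivAt h (h' s) s := by
  induction hh with
  | const c => exact ⟨_, .const 0, fun s _ => hasDerivAt_const s c⟩
  | var => exact ⟨_, .const 1, fun s _ => hasDerivAt_id s⟩
  | sinh c hc =>
    refine ⟨_, .mul (.const c) (.cosh c hc), fun s _ => ?_⟩
    have := ((hasDerivAt_id s).const_mul c).sinh
    simpa [mul_comm] using this
  | cosh c hc =>
    refine ⟨_, .mul (.const c) (.sinh c hc), fun s _ => ?_⟩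
    have := ((hasDerivAt_id s).const_mul c).cosh
    simpa [mul_comm] using this
  | invSinh c hc =>
    refine ⟨_, .mul (.mul (.const (-c)) (.cosh c hc)) (.mul (.invSinh c hc) (.invSinh c hc)),
      fun s hs => ?_⟩
    have h0 : Real.sinh (c * s) ≠ 0 := (Real.sinh_pos_iff.2 (mul_pos hc hs)).ne'
    have h1 : HasDerivAt (fun x => c * x) c s := by simpa using (hasDerivAt_id s).const_mul c
    refine (h1.sinh.inv h0).congr_deriv ?_
    field_simp
  | add _ _ ihf ihg =>
    obtain ⟨f', hf', hf⟩ := ihf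
    obtain ⟨g', hg', hg⟩ := ihg
    exact ⟨_, .add hf' hg', fun s hs => (hf s hs).add (hg s hs)⟩
  | mul hf0 hg0 ihf ihg =>
    obtain ⟨f', hf', hf⟩ := ihf
    obtain ⟨g', hg', hg⟩ := ihg
    exact ⟨_, .add (.mul hf' hg0) (.mul hf0 hg'), fun s hs => (hf s hs).mul (hg s hs)⟩

lemma cosh_le_exp {x : ℝ} (hx : 0 ≤ x) : Real.cosh x ≤ Real.exp x := by
  have := Real.exp_le_exp.2 (show -x ≤ x by linarith)
  rw [Real.cosh_eq]
  linarith

lemma Coef.bound {h : ℝ → ℝ} (hh : Coef h) {a : ℝ} (ha : 0 < a) :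
    ∃ C N : ℝ, 0 ≤ C ∧ 0 ≤ N ∧ ∀ s, a ≤ s → |h s| ≤ C * Real.exp (N * s) := by
  induction hh with
  | const c => exact ⟨|c|, 0, abs_nonneg _, le_rfl, fun s _ => by simp⟩
  | var =>
    refine ⟨1, 1, zero_le_one, zero_le_one, fun s hs => ?_⟩
    rw [abs_of_pos (ha.trans_le hs)]
    have := Real.add_one_le_exp s
    simp only [one_mul]
    linarith
  | sinh c hc =>
    refine ⟨1, c, zero_le_one, hc.le, fun s hs => ?_⟩
    have hp : 0 < c * s := mul_pos hc (ha.trans_le hs)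
    rw [abs_of_pos (Real.sinh_pos_iff.2 hp), one_mul]
    exact (Real.sinh_lt_cosh _).le.trans (cosh_le_exp hp.le)
  | cosh c hc =>
    refine ⟨1, c, zero_le_one, hc.le, fun s hs => ?_⟩
    have hp : 0 < c * s := mul_pos hc (ha.trans_le hs)
    rw [abs_of_pos (Real.cosh_pos _), one_mul]
    exact cosh_le_exp hp.le
  | invSinh c hc =>
    have h0 : 0 < Real.sinh (c * a) := Real.sinh_pos_iff.2 (mul_pos hc ha)
    refine ⟨(Real.sinh (c * a))⁻¹, 0, (inv_pos.2 h0).le, le_rfl, fun s hs => ?_⟩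
    have h1 : Real.sinh (c * a) ≤ Real.sinh (c * s) :=
      Real.sinh_le_sinh.2 (mul_le_mul_of_nonneg_left hs hc.le)
    rw [abs_of_pos (inv_pos.2 (h0.trans_le h1))]
    simpa using inv_anti₀ h0 h1
  | @add f g _ _ ihf ihg =>
    obtain ⟨C, N, hC, hN, hf⟩ := ihf
    obtain ⟨D, M, hD, hM, hg⟩ := ihg
    refine ⟨C + D, N + M, add_nonneg hC hD, add_nonneg hN hM, fun s hs => ?_⟩
    have hs0 : 0 ≤ s := ha.le.trans hs
    calc |f s + g s| ≤ |f s| + |g s| := abs_add_le _ _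
      _ ≤ C * Real.exp (N * s) + D * Real.exp (M * s) := add_le_add (hf s hs) (hg s hs)
      _ ≤ C * Real.exp ((N + M) * s) + D * Real.exp ((N + M) * s) := by
        gcongr <;> linarith
      _ = _ := by ring
  | @mul f g _ _ ihf ihg =>
    obtain ⟨C, N, hC, hN, hf⟩ := ihf
    obtain ⟨D, M, hD, hM, hg⟩ := ihg
    refine ⟨C * D, N + M, mul_nonneg hC hD, add_nonneg hN hM, fun s hs => ?_⟩
    rw [abs_mul, add_mul, Real.exp_add]
    calc |f s| * |g s| ≤ (C * Real.exp (N * s)) * (D * Real.exp (M * s)) :=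
          mul_le_mul (hf s hs) (hg s hs) (abs_nonneg _) (by positivity)
      _ = _ := by ring

/-! ### Functions of Gaussian type -/

/-- Functions which on `(0, ∞)` are the Gaussian times an element of `Coef`. -/
def GaussClass (t : ℝ) (f : ℝ → ℝ) : Prop :=
  ∃ h, Coef h ∧ ∀ s, 0 < s → f s = h s * gauss t s

namespace GaussClass

variable {t : ℝ} {f : ℝ → ℝ}

lemma exists_deriv (hf : GaussClass t f) :
    ∃ f', GaussClass t f' ∧ ∀ s, 0 < s → HasDerivAt f (f' s) s := by
  obtain ⟨h, hh, hfh⟩ := hf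
  obtain ⟨h', hh', hd⟩ := hh.exists_deriv
  refine ⟨_, ⟨_, .add hh' (.mul (.mul (.const (-2 / (4 * t))) .var) hh), fun _ _ => rfl⟩,
    fun s hs => ?_⟩
  have hg : HasDerivAt (gauss t) (gauss t s * (-(2 * s) / (4 * t))) s := by
    have h1 : HasDerivAt (fun x : ℝ => -x ^ 2 / (4 * t)) (-(2 * s) / (4 * t)) s := by
      simpa using ((hasDerivAt_pow 2 s).neg).div_const (4 * t)
    exact h1.exp
  have hfe : f =ᶠ[𝓝 s] fun x => h x * gauss t x := by
    filter_upwards [Ioi_mem_nhds hs] with x hx using hfh x hx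
  refine (((hd s hs).mul hg).congr_of_eventuallyEq hfe).congr_deriv ?_
  ring

lemma continuousOn (hf : GaussClass t f) : ContinuousOn f (Set.Ioi 0) := by
  obtain ⟨f', -, h⟩ := hf.exists_deriv
  exact fun s hs => (h s hs).continuousAt.continuousWithinAt

lemma mul_coef (hf : GaussClass t f) {p : ℝ → ℝ} (hp : Coef p) :
    GaussClass t (fun s => p s * f s) := by
  obtain ⟨h, hh, hfh⟩ := hf
  refine ⟨_, hp.mul hh, fun s hs => ?_⟩
  simp only [hfh s hs]
  ring

lemma congr {g : ℝ → ℝ} (hf : GaussClass t f) (h : ∀ s, 0 < s → g s = f s) :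
    GaussClass t g := by
  obtain ⟨p, hp, hfp⟩ := hf
  exact ⟨p, hp, fun s hs => (h s hs).trans (hfp s hs)⟩

lemma D1 (hf : GaussClass t f) : GaussClass t (D1 f) := by
  obtain ⟨f', hf', hd⟩ := hf.exists_deriv
  refine (hf'.mul_coef (.mul (.const (-1)) (.invSinh 1 one_pos))).congr fun s hs => ?_
  simp [DR.D1, (hd s hs).deriv]

lemma D2 (hf : GaussClass t f) : GaussClass t (D2 f) := by
  obtain ⟨f', hf', hd⟩ := hf.exists_deriv
  refine (hf'.mul_coef (.mul (.const (-1)) (.invSinh (1 / 2) one_half_pos))).congr fun s hs => ?_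
  have : 1 / 2 * s = s / 2 := by ring
  simp only [DR.D2, (hd s hs).deriv, this]
  ring

lemma iterate (m n : ℕ) : GaussClass t (DR.D1^[n] (DR.D2^[m] (gauss t))) := by
  induction n with
  | zero =>
    induction m with
    | zero => exact ⟨_, .const 1, fun s _ => by simp⟩
    | succ m ih => rw [Function.iterate_zero_apply, Function.iterate_succ_apply'] at *; exact ih.D2
  | succ n ih => rw [Function.iterate_succ_apply']; exact ih.D1

lemma bound (ht : 0 < t) (hf : GaussClass t f) {a : ℝ} (ha : 0 < a) :
    ∃ C : ℝ, 0 ≤ C ∧ ∀ s, a ≤ s → |f s| ≤ C * Real.exp (-s) := by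
  obtain ⟨h, hh, hfh⟩ := hf
  obtain ⟨C, N, hC, -, hb⟩ := hh.bound ha
  refine ⟨C * Real.exp (t * (N + 1) ^ 2), by positivity, fun s hs => ?_⟩
  -- completing the square: `N s - s² / (4t) ≤ t (N + 1)² - s`
  have key : N * s + -s ^ 2 / (4 * t) ≤ t * (N + 1) ^ 2 + -s := by
    have : t * (N + 1) ^ 2 + -s - (N * s + -s ^ 2 / (4 * t)) =
        (s - 2 * t * (N + 1)) ^ 2 / (4 * t) := by
      field_simp
      ring
    have h2 : 0 ≤ (s - 2 * t * (N + 1)) ^ 2 / (4 * t) := by positivity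
    linarith
  rw [hfh s (ha.trans_le hs), abs_mul, gauss, abs_of_pos (Real.exp_pos _)]
  calc |h s| * Real.exp (-s ^ 2 / (4 * t))
      ≤ C * Real.exp (N * s) * Real.exp (-s ^ 2 / (4 * t)) := by gcongr; exact hb s hs
    _ = C * Real.exp (N * s + -s ^ 2 / (4 * t)) := by rw [Real.exp_add, mul_assoc]
    _ ≤ C * Real.exp (t * (N + 1) ^ 2 + -s) := by gcongr
    _ = _ := by rw [Real.exp_add, mul_assoc]

lemma bound_arcosh (ht : 0 < t) (hf : GaussClass t f) {b : ℝ} (hb : 1 < b) :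
    ∃ C : ℝ, 0 ≤ C ∧ ∀ x, b ≤ x → |f (Real.arcosh x)| ≤ C * x⁻¹ := by
  obtain ⟨C, hC, h⟩ := hf.bound ht (Real.arcosh_pos hb)
  refine ⟨C, hC, fun x hx => (h _ ?_).trans ?_⟩
  · exact (Real.arcosh_le_arcosh (by linarith) (by linarith)).2 hx
  · have h1 : x ≤ Real.exp (Real.arcosh x) := by
      have := cosh_le_exp (Real.arcosh_nonneg (hb.le.trans hx))
      rwa [Real.cosh_arcosh (hb.le.trans hx)] at this
    rw [Real.exp_neg]
    gcongr
    linarith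

lemma continuousOn_arcosh (hf : GaussClass t f) :
    ContinuousOn (fun x => f (Real.arcosh x)) (Set.Ioi 1) :=
  hf.continuousOn.comp (Real.continuousOn_arcosh.mono Set.Ioi_subset_Ici_self)
    fun _ hx => Real.arcosh_pos hx

lemma hasDerivAt_arcosh (hf : GaussClass t f) {x : ℝ} (hx : 1 < x) :
    HasDerivAt (fun x => f (Real.arcosh x)) (-DR.D1 f (Real.arcosh x)) x := by
  obtain ⟨f', -, hd⟩ := hf.exists_deriv
  have h0 := hd _ (Real.arcosh_pos hx)
  refine (h0.comp x (Real.hasDerivAt_arcosh hx)).congr_deriv ?_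
  rw [DR.D1, h0.deriv, Real.sinh_arcosh hx.le]
  ring

end GaussClass

/-! ### The integral transform -/

lemma integrableOn_inv_sqrt_mul : IntegrableOn (fun u : ℝ => (√u)⁻¹ * (1 + u)⁻¹) (Set.Ioi 0) := by
  have hm : Measurable (fun u : ℝ => (√u)⁻¹ * (1 + u)⁻¹) := by fun_prop
  rw [← Set.Ioc_union_Ioi_eq_Ioi (zero_le_one' ℝ)]
  refine IntegrableOn.union ?_ ?_
  · have h := (intervalIntegrable_iff_integrableOn_Ioc_of_le zero_le_one).1
      (intervalIntegral.intervalIntegrable_rpow' (a := 0) (b := 1) (r := -(1 / 2)) (by norm_num))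
    refine h.mono' hm.aestronglyMeasurable (ae_restrict_of_forall_mem measurableSet_Ioc ?_)
    intro u hu
    have hu0 : 0 < u := hu.1
    rw [Real.norm_of_nonneg (by positivity), Real.rpow_neg hu0.le, ← Real.sqrt_eq_rpow]
    exact mul_le_of_le_one_right (by positivity) (inv_le_one_of_one_le₀ (by linarith))
  · have h := integrableOn_Ioi_rpow_of_lt (a := -(1 / 2) + -1) (c := 1) (by norm_num) one_pos
    refine h.mono' hm.aestronglyMeasurable (ae_restrict_of_forall_mem measurableSet_Ioi ?_)
    intro u hu
    have hu0 : 0 < u := zero_lt_one.trans hu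
    rw [Real.norm_of_nonneg (by positivity), Real.rpow_add hu0, Real.rpow_neg hu0.le,
      ← Real.sqrt_eq_rpow, Real.rpow_neg_one]
    gcongr
    linarith

/-- Differentiation under the integral sign after the substitution `x = cosh ρ`. -/
lemma hasDerivAt_integral_shift {G G' : ℝ → ℝ} (hG : ∀ x, 1 < x → HasDerivAt G (G' x) x)
    (hG'c : ContinuousOn G' (Set.Ioi 1))
    (hGb : ∀ b, 1 < b → ∃ C : ℝ, 0 ≤ C ∧ ∀ x, b ≤ x → |G x| ≤ C * x⁻¹)
    (hG'b : ∀ b, 1 < b → ∃ C : ℝ, 0 ≤ C ∧ ∀ x, b ≤ x → |G' x| ≤ C * x⁻¹)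
    {x : ℝ} (hx : 1 < x) :
    HasDerivAt (fun y => ∫ u in Set.Ioi 0, (√u)⁻¹ * G (y + u))
      (∫ u in Set.Ioi 0, (√u)⁻¹ * G' (x + u)) x := by
  have hGc : ContinuousOn G (Set.Ioi 1) := fun y hy => (hG y hy).continuousAt.continuousWithinAt
  have hmeas : ∀ {H : ℝ → ℝ}, ContinuousOn H (Set.Ioi 1) → ∀ y, 1 < y →
      AEStronglyMeasurable (fun u => (√u)⁻¹ * H (y + u)) (volume.restrict (Set.Ioi 0)) := by
    intro H hH y hy
    refine AEStronglyMeasurable.mul (by fun_prop) ?_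
    refine ContinuousOn.aestronglyMeasurable (hH.comp (by fun_prop) fun u hu => ?_)
      measurableSet_Ioi
    exact hy.trans (lt_add_of_pos_right y hu)
  obtain ⟨b, hb1, hbx⟩ := exists_between hx
  obtain ⟨C, hC, hCb⟩ := hGb b hb1
  obtain ⟨C', hC', hCb'⟩ := hG'b b hb1
  have hbd : ∀ {H : ℝ → ℝ} {K : ℝ}, 0 ≤ K → (∀ x, b ≤ x → |H x| ≤ K * x⁻¹) →
      ∀ u ∈ Set.Ioi (0 : ℝ), ∀ y ∈ Set.Ioi b,
        ‖(√u)⁻¹ * H (y + u)‖ ≤ K * ((√u)⁻¹ * (1 + u)⁻¹) := by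
    intro H K hK hH u hu y hy
    have hu0 : 0 < u := hu
    have hy0 : b < y := hy
    rw [norm_mul, Real.norm_of_nonneg (by positivity), Real.norm_eq_abs, mul_left_comm]
    gcongr
    refine (hH _ (by linarith)).trans ?_
    gcongr
    linarith
  refine (hasDerivAt_integral_of_dominated_loc_of_deriv_le
    (F := fun y u => (√u)⁻¹ * G (y + u)) (F' := fun y u => (√u)⁻¹ * G' (y + u))
    (bound := fun u => C' * ((√u)⁻¹ * (1 + u)⁻¹))
    (Ioi_mem_nhds hbx) ?_ ?_ (hmeas hG'c x hx) ?_ (integrableOn_inv_sqrt_mul.const_mul C') ?_).2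
  · filter_upwards [Ioi_mem_nhds hx] with y hy using hmeas hGc y hy
  · exact (integrableOn_inv_sqrt_mul.const_mul C).mono' (hmeas hGc x hx)
      (ae_restrict_of_forall_mem measurableSet_Ioi fun u hu => hbd hC hCb u hu x hbx)
  · exact ae_restrict_of_forall_mem measurableSet_Ioi fun u hu y hy => hbd hC' hCb' u hu y hy
  · refine ae_restrict_of_forall_mem measurableSet_Ioi fun u hu y hy => ?_
    have hu0 : 0 < u := hu
    have hy0 : b < y := hy
    exact ((hG (y + u) (by linarith)).comp_add_const y u).const_mul _

/-- The substitution `u = cosh s - cosh ρ`, valid without any integrability assumption. -/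
lemma integral_subst (g : ℝ → ℝ) {ρ : ℝ} (hρ : 0 < ρ) :
    ∫ s in Set.Ioi ρ, (Real.sinh s / √(Real.cosh s - Real.cosh ρ)) * g s =
      ∫ u in Set.Ioi 0, (√u)⁻¹ * g (Real.arcosh (Real.cosh ρ + u)) := by
  have himg : (fun s => Real.cosh s - Real.cosh ρ) '' Set.Ioi ρ = Set.Ioi 0 := by
    ext u
    constructor
    · rintro ⟨s, hs, rfl⟩
      have hs' : ρ < s := hs
      exact sub_pos.2 (Real.cosh_lt_cosh.2 (by rwa [abs_of_pos hρ, abs_of_pos (hρ.trans hs')]))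
    · intro hu
      have hu0 : 0 < u := hu
      have h1 : 1 < Real.cosh ρ + u := by linarith [Real.one_le_cosh ρ]
      refine ⟨Real.arcosh (Real.cosh ρ + u), ?_, ?_⟩
      · have := (Real.arcosh_lt_arcosh (Real.cosh_pos ρ) (by linarith)).2
          (show Real.cosh ρ < Real.cosh ρ + u by linarith)
        rwa [Real.arcosh_cosh hρ.le] at this
      · simp [Real.cosh_arcosh h1.le]
  have hinj : Set.InjOn (fun s => Real.cosh s - Real.cosh ρ) (Set.Ioi ρ) := by
    intro s hs s' hs' h
    exact Real.cosh_injOn (hρ.trans hs).le (hρ.trans hs').le (sub_left_injective h)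
  rw [← himg, integral_image_eq_integral_abs_deriv_smul measurableSet_Ioi
    (fun s _ => ((Real.hasDerivAt_cosh s).sub_const _).hasDerivWithinAt) hinj]
  refine setIntegral_congr_fun measurableSet_Ioi fun s hs => ?_
  have hs0 : 0 < s := hρ.trans hs
  simp only [add_sub_cancel, Real.arcosh_cosh hs0.le, smul_eq_mul,
    abs_of_pos (Real.sinh_pos_iff.2 hs0)]
  ring

theorem R_of_f_eq_f_succ (μ ν : ℕ) (hμ : Even μ) (hν : Odd ν) (t : ℝ) (ht : 0 < t)
    (k : ℕ) (r : ℝ) (hr : 0 < r) :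
    -(1 / Real.sinh r) *
        deriv (fun ρ => ∫ s in Set.Ioi ρ,
          (Real.sinh s / Real.sqrt (Real.cosh s - Real.cosh ρ)) *
            (D1^[(ν + 1) / 2 + k] (D2^[μ / 2] (gauss t))) s) r =
      ∫ s in Set.Ioi r,
        (Real.sinh s / Real.sqrt (Real.cosh s - Real.cosh r)) *
          (D1^[(ν + 1) / 2 + (k + 1)] (D2^[μ / 2] (gauss t))) s := by
  rw [← add_assoc, Function.iterate_succ_apply']
  have hg : GaussClass t (D1^[(ν + 1) / 2 + k] (D2^[μ / 2] (gauss t))) := .iterate _ _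
  set g := D1^[(ν + 1) / 2 + k] (D2^[μ / 2] (gauss t))
  have hcosh : 1 < Real.cosh r := Real.one_lt_cosh.2 hr.ne'
  have hd := hasDerivAt_integral_shift (fun x hx => hg.hasDerivAt_arcosh hx)
    hg.D1.continuousOn_arcosh.neg (fun b hb => hg.bound_arcosh ht hb)
    (fun b hb => by simpa only [abs_neg] using hg.D1.bound_arcosh ht hb) hcosh
  have hd' := hd.comp r (Real.hasDerivAt_cosh r)
  have he : (fun ρ => ∫ s in Set.Ioi ρ,
      (Real.sinh s / √(Real.cosh s - Real.cosh ρ)) * g s) =ᶠ[𝓝 r]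
      (fun y => ∫ u in Set.Ioi 0, (√u)⁻¹ * g (Real.arcosh (y + u))) ∘ Real.cosh := by
    filter_upwards [Ioi_mem_nhds hr] with ρ hρ using integral_subst g hρ
  have hs : Real.sinh r ≠ 0 := (Real.sinh_pos_iff.2 hr).ne'
  rw [(hd'.congr_of_eventuallyEq he).deriv, integral_subst _ hr]
  simp only [mul_neg, integral_neg]
  field_simp

end DR
end
end
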